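/- For the exponential random graph model with parameter β in the subcritical region, there exists a constant C > 0, depending only on β₁,…,β_k and H₁,…,H_k, such that for all n ≥ 2 the normalized number of edges W_n satisfies d_Wass(W_n, Z) ≤ C n^{−1/4}, where Z is a standard normal random variable. -/

import Mathlib

open MeasureTheory ProbabilityTheory Real Finset

noncomputable section

/-- The index set `I = {(i,j) : 1 ≤ i < j ≤ n}` of potential edges on `n` labeled vertices. -/
def EdgeIdx (n : ℕ) : Type := {p : Fin n × Fin n // p.1 < p.2}

instance (n : ℕ) : Fintype (EdgeIdx n) := by unfold EdgeIdx; infer_instance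
instance (n : ℕ) : DecidableEq (EdgeIdx n) := by unfold EdgeIdx; infer_instance

/-- Adjacency of the graph `G_y` encoded by the edge-indicator vector `y`. -/
def yAdj {n : ℕ} (y : EdgeIdx n → Bool) (a b : Fin n) : Bool :=
  if h : a < b then y ⟨(a, b), h⟩ else if h' : b < a then y ⟨(b, a), h'⟩ else false

/-- The number of edges of a graph `H`. -/
def eCount {V : Type} [Fintype V] (H : SimpleGraph V) : ℕ :=
  Nat.card H.edgeSet

/-- `|Hom(H, G_y)|`: the number of injective maps from the vertex set of `H` to `Fin n`
mapping every edge of `H` to an edge of `G_y`. -/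
def homCount {V : Type} [Fintype V] {n : ℕ} (H : SimpleGraph V) (y : EdgeIdx n → Bool) : ℕ :=
  Nat.card {φ : V → Fin n //
    Function.Injective φ ∧ ∀ a b, H.Adj a b → yAdj y (φ a) (φ b) = true}

/-- `|Hom(H, G_y, s)|`: the number of pairs `(φ, (u, v))` where `φ` is injective, `(u, v)` is
an ordered pair of adjacent vertices of `H` with `{φ u, φ v} = s`, and every edge of `H` other
than `{u, v}` is mapped by `φ` to an edge of `G_y` (regardless of whether the edge `s` is
present in `G_y`). -/
def homCountAt {V : Type} [Fintype V] {n : ℕ} (H : SimpleGraph V) (y : EdgeIdx n → Bool)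
    (s : EdgeIdx n) : ℕ :=
  Nat.card {t : (V → Fin n) × V × V //
    Function.Injective t.1 ∧ H.Adj t.2.1 t.2.2 ∧
    Sym2.mk (t.1 t.2.1, t.1 t.2.2) = Sym2.mk (s.1.1, s.1.2) ∧
    ∀ a b, H.Adj a b → Sym2.mk (a, b) ≠ Sym2.mk (t.2.1, t.2.2) →
      yAdj y (t.1 a) (t.1 b) = true}

section ERGM

variable {k : ℕ} (β : Fin (k + 1) → ℝ) (v : Fin (k + 1) → ℕ)
  (H : ∀ j : Fin (k + 1), SimpleGraph (Fin (v j)))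

/-- The (unnormalized) ERGM weight `exp (Σ_j β_j n^{2−v_j} |Hom(H_j, G_y)|)`. -/
def ergmWeight (n : ℕ) (y : EdgeIdx n → Bool) : ℝ :=
  Real.exp (∑ j, β j * (n : ℝ) ^ ((2 : ℤ) - (v j : ℤ)) * (homCount (H j) y : ℝ))

/-- The ERGM normalizing constant. -/
def ergmZ (n : ℕ) : ℝ := ∑ y : EdgeIdx n → Bool, ergmWeight β v H n y

/-- The ERGM probability of the configuration `y`. -/
def ergmProb (n : ℕ) (y : EdgeIdx n → Bool) : ℝ := ergmWeight β v H n y / ergmZ β v H n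

/-- Expectation of `G(Y)` under the ERGM. -/
def ergmExp (n : ℕ) (G : (EdgeIdx n → Bool) → ℝ) : ℝ :=
  ∑ y : EdgeIdx n → Bool, ergmProb β v H n y * G y

/-- Variance of `G(Y)` under the ERGM. -/
def ergmVar (n : ℕ) (G : (EdgeIdx n → Bool) → ℝ) : ℝ :=
  ergmExp β v H n (fun y => (G y - ergmExp β v H n G) ^ 2)

/-- The total number of edges of `G_y`. -/
def edgeSum {n : ℕ} (y : EdgeIdx n → Bool) : ℝ :=
  ∑ s : EdgeIdx n, (if y s then (1 : ℝ) else 0)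

/-- `Φ_β(a) = Σ_j β_j e_j a^{e_j − 1}`. -/
def PhiFn : ℝ → ℝ := fun a =>
  ∑ j, β j * (eCount (H j) : ℝ) * a ^ (eCount (H j) - 1)

/-- `φ_β(a) = e^{2Φ_β(a)} / (e^{2Φ_β(a)} + 1)`. -/
def phiFn : ℝ → ℝ := fun a =>
  Real.exp (2 * PhiFn β v H a) / (Real.exp (2 * PhiFn β v H a) + 1)

/-- `σ_n² = N p (1−p) / (1 − 2 p (1−p) Φ_β'(p))` with `N = n(n−1)/2`. -/
def sigmaSq (p : ℝ) (n : ℕ) : ℝ :=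
  ((n : ℝ) * ((n : ℝ) - 1) / 2) * p * (1 - p) /
    (1 - 2 * p * (1 - p) * deriv (PhiFn β v H) p)

/-- `μ_n = E Σ_{s ∈ I} Y_s`. -/
def muN (n : ℕ) : ℝ := ergmExp β v H n (edgeSum)

/-- The standardized number of edges `W_n`. -/
def Wn (p : ℝ) (n : ℕ) (y : EdgeIdx n → Bool) : ℝ :=
  (edgeSum y - muN β v H n) / Real.sqrt (sigmaSq β v H p n)

end ERGM

set_option linter.unusedSectionVars false

namespace ErgmCLT

section Cube

variable {I : Type} [DecidableEq I]

/-- The indicator of the coordinate `s`. -/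
def coord (s : I) (y : I → Bool) : ℝ := if y s then 1 else 0

/-- The discrete derivative of `f` in the direction `s`. -/
def cubeDiff (s : I) (f : (I → Bool) → ℝ) (y : I → Bool) : ℝ :=
  f (Function.update y s true) - f (Function.update y s false)

/-- `f` does not depend on the coordinate `s`. -/
def IndepOf (s : I) (f : (I → Bool) → ℝ) : Prop :=
  ∀ y b, f (Function.update y s b) = f y

lemma coord_nonneg (s : I) (y : I → Bool) : 0 ≤ coord s y := by
  unfold coord; split_ifs <;> norm_num

lemma coord_le_one (s : I) (y : I → Bool) : coord s y ≤ 1 := by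
  unfold coord; split_ifs <;> norm_num

lemma coord_eq_zero_or_one (s : I) (y : I → Bool) : coord s y = 0 ∨ coord s y = 1 := by
  unfold coord; split_ifs <;> simp

lemma coord_update_self (s : I) (y : I → Bool) (b : Bool) :
    coord s (Function.update y s b) = if b then 1 else 0 := by
  simp [coord]

lemma coord_update_of_ne {s t : I} (h : t ≠ s) (y : I → Bool) (b : Bool) :
    coord t (Function.update y s b) = coord t y := by
  simp [coord, Function.update_of_ne h]

lemma eq_add_coord_mul_cubeDiff (s : I) (f : (I → Bool) → ℝ) (y : I → Bool) :
    f y = f (Function.update y s false) + coord s y * cubeDiff s f y := by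
  cases h : y s
  · have : Function.update y s false = y := by rw [← h]; simp
    simp [coord, h, this]
  · have : Function.update y s true = y := by rw [← h]; simp
    simp [coord, h, this, cubeDiff]

lemma indepOf_cubeDiff (s : I) (f : (I → Bool) → ℝ) : IndepOf s (cubeDiff s f) := by
  intro y b; simp [cubeDiff]

lemma update_true_of_coord_eq_one {s : I} {y : I → Bool} (h : coord s y = 1) :
    Function.update y s true = y := by
  have : y s = true := by
    by_contra h'
    simp [coord, h'] at h
  rw [← this]; simp

lemma cubeDiff_coord_self (s : I) (y : I → Bool) : cubeDiff s (coord s) y = 1 := by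
  simp [cubeDiff, coord]

lemma cubeDiff_coord_of_ne {s t : I} (h : t ≠ s) (y : I → Bool) :
    cubeDiff s (coord t) y = 0 := by
  simp [cubeDiff, coord_update_of_ne h]

lemma abs_sub_update_le_cubeDiff (s : I) (f : (I → Bool) → ℝ) (y : I → Bool) (b : Bool) :
    |f y - f (Function.update y s b)| ≤ |cubeDiff s f y| := by
  have h1 := eq_add_coord_mul_cubeDiff s f y
  have h2 := eq_add_coord_mul_cubeDiff s f (Function.update y s b)
  rw [indepOf_cubeDiff s f y b] at h2
  simp only [Function.update_idem] at h2
  have : f y - f (Function.update y s b)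
      = (coord s y - coord s (Function.update y s b)) * cubeDiff s f y := by linarith
  rw [this, abs_mul]
  refine mul_le_of_le_one_left (abs_nonneg _) ?_
  rcases coord_eq_zero_or_one s y with h | h <;>
  rcases coord_eq_zero_or_one s (Function.update y s b) with h' | h' <;> simp [h, h']

variable [Fintype I]

/-- The expectation under the Gibbs measure with density proportional to `exp h`. -/
def gibbsExp (h f : (I → Bool) → ℝ) : ℝ :=
  (∑ y, Real.exp (h y) * f y) / ∑ y, Real.exp (h y)

/-- The conditional probability that the coordinate `s` is present, given the others. -/
def condProb (h : (I → Bool) → ℝ) (s : I) (y : I → Bool) : ℝ := Real.sigmoid (cubeDiff s h y)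

variable (h : (I → Bool) → ℝ)

lemma condProb_nonneg (s : I) (y : I → Bool) : 0 ≤ condProb h s y := Real.sigmoid_nonneg _

lemma condProb_le_one (s : I) (y : I → Bool) : condProb h s y ≤ 1 := Real.sigmoid_le_one _

lemma indepOf_condProb (s : I) : IndepOf s (condProb h s) := fun y b => by
  rw [condProb, indepOf_cubeDiff s h y b, condProb]

lemma abs_coord_sub_condProb_le (s t : I) (y z : I → Bool) :
    |coord s y - condProb h t z| ≤ 1 := by
  have h1 := coord_nonneg s y
  have h2 := coord_le_one s y
  have h3 := condProb_nonneg h t z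
  have h4 := condProb_le_one h t z
  rw [abs_le]; constructor <;> linarith

lemma gibbs_partition_pos : 0 < ∑ y, Real.exp (h y) :=
  Finset.sum_pos (fun _ _ => Real.exp_pos _) Finset.univ_nonempty

lemma gibbsExp_add (f g : (I → Bool) → ℝ) :
    gibbsExp h (fun y => f y + g y) = gibbsExp h f + gibbsExp h g := by
  simp only [gibbsExp, mul_add, Finset.sum_add_distrib, add_div]

lemma gibbsExp_sub (f g : (I → Bool) → ℝ) :
    gibbsExp h (fun y => f y - g y) = gibbsExp h f - gibbsExp h g := by
  simp only [gibbsExp, mul_sub, Finset.sum_sub_distrib, sub_div]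

lemma gibbsExp_const_mul (a : ℝ) (f : (I → Bool) → ℝ) :
    gibbsExp h (fun y => a * f y) = a * gibbsExp h f := by
  simp only [gibbsExp, mul_left_comm _ a, ← Finset.mul_sum, mul_div_assoc]

lemma gibbsExp_const (a : ℝ) : gibbsExp h (fun _ => a) = a := by
  simp only [gibbsExp, ← Finset.sum_mul]
  field_simp [(gibbs_partition_pos h).ne']

lemma gibbsExp_sum {ι : Type*} (A : Finset ι) (f : ι → (I → Bool) → ℝ) :
    gibbsExp h (fun y => ∑ i ∈ A, f i y) = ∑ i ∈ A, gibbsExp h (f i) := by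
  simp only [gibbsExp, Finset.mul_sum, ← Finset.sum_div]
  rw [Finset.sum_comm]

variable {h}

lemma gibbsExp_mono {f g : (I → Bool) → ℝ} (hfg : ∀ y, f y ≤ g y) :
    gibbsExp h f ≤ gibbsExp h g := by
  unfold gibbsExp
  refine div_le_div_of_nonneg_right (Finset.sum_le_sum fun y _ => ?_) (gibbs_partition_pos h).le
  exact mul_le_mul_of_nonneg_left (hfg y) (Real.exp_pos _).le

lemma gibbsExp_nonneg {f : (I → Bool) → ℝ} (hf : ∀ y, 0 ≤ f y) : 0 ≤ gibbsExp h f := by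
  simpa only [gibbsExp_const] using gibbsExp_mono (h := h) (f := fun _ => 0) hf

lemma gibbsExp_le_of_le {f : (I → Bool) → ℝ} {a : ℝ} (hf : ∀ y, f y ≤ a) :
    gibbsExp h f ≤ a := by
  simpa only [gibbsExp_const] using gibbsExp_mono (h := h) (g := fun _ => a) hf

lemma abs_gibbsExp_le (f : (I → Bool) → ℝ) : |gibbsExp h f| ≤ gibbsExp h (fun y => |f y|) := by
  rw [abs_le]
  constructor
  · have := gibbsExp_const_mul h (-1) (fun y => |f y|)
    rw [neg_one_mul] at this
    rw [← this]
    exact gibbsExp_mono fun y => by linarith [neg_abs_le (f y)]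
  · exact gibbsExp_mono fun y => le_abs_self _

variable (h)

lemma sq_gibbsExp_le (f : (I → Bool) → ℝ) :
    gibbsExp h f ^ 2 ≤ gibbsExp h (fun y => f y ^ 2) := by
  have h0 : 0 ≤ gibbsExp h (fun y => (f y - gibbsExp h f) ^ 2) :=
    gibbsExp_nonneg fun y => sq_nonneg _
  have h1 : gibbsExp h (fun y => (f y - gibbsExp h f) ^ 2)
      = gibbsExp h (fun y => f y ^ 2) - gibbsExp h f ^ 2 := by
    have : (fun y => (f y - gibbsExp h f) ^ 2)
        = fun y => (f y ^ 2 - (2 * gibbsExp h f) * f y) + gibbsExp h f ^ 2 := by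
      funext y; ring
    rw [this, gibbsExp_add, gibbsExp_sub, gibbsExp_const_mul, gibbsExp_const]
    ring
  linarith

/-- Covariance with respect to the Gibbs measure, in product form. -/
lemma gibbsExp_centered_mul (f g : (I → Bool) → ℝ) :
    gibbsExp h (fun y => (f y - gibbsExp h f) * (g y - gibbsExp h g))
      = gibbsExp h (fun y => f y * g y) - gibbsExp h f * gibbsExp h g := by
  have : (fun y => (f y - gibbsExp h f) * (g y - gibbsExp h g))
      = fun y => (f y * g y - gibbsExp h f * g y) - (gibbsExp h g * f y
        - gibbsExp h f * gibbsExp h g) := by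
    funext y; ring
  rw [this, gibbsExp_sub, gibbsExp_sub, gibbsExp_sub, gibbsExp_const_mul, gibbsExp_const_mul,
    gibbsExp_const]
  ring

lemma gibbsExp_centered_sq_le (f : (I → Bool) → ℝ) (a : ℝ) :
    gibbsExp h (fun y => (f y - gibbsExp h f) ^ 2) ≤ gibbsExp h (fun y => (f y - a) ^ 2) := by
  have h1 : gibbsExp h (fun y => (f y - a) ^ 2)
      = gibbsExp h (fun y => (f y - gibbsExp h f) ^ 2) + (gibbsExp h f - a) ^ 2 := by
    have : (fun y => (f y - a) ^ 2) = fun y => ((f y - gibbsExp h f) ^ 2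
        + (2 * (gibbsExp h f - a)) * (f y - gibbsExp h f)) + (gibbsExp h f - a) ^ 2 := by
      funext y; ring
    rw [this, gibbsExp_add, gibbsExp_add, gibbsExp_const_mul, gibbsExp_const, gibbsExp_sub,
      gibbsExp_const]
    ring
  nlinarith [sq_nonneg (gibbsExp h f - a)]

lemma sum_eq_half_sum_update (s : I) (f : (I → Bool) → ℝ) :
    ∑ y, f y = (∑ y, (f (Function.update y s true) + f (Function.update y s false))) / 2 := by
  have hinv : Function.Involutive (fun y : I → Bool => Function.update y s (!(y s))) := by
    intro y; simp
  have h1 : ∑ y, f (Function.update y s (!(y s))) = ∑ y, f y :=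
    (Equiv.sum_comp hinv.toPerm f)
  have h2 : ∑ y, (f (Function.update y s true) + f (Function.update y s false))
      = ∑ y, (f y + f (Function.update y s (!(y s)))) := by
    refine Finset.sum_congr rfl fun y _ => ?_
    cases hy : y s
    · have : Function.update y s false = y := by rw [← hy]; simp
      rw [this]; simp [add_comm]
    · have : Function.update y s true = y := by rw [← hy]; simp
      rw [this]; simp
  rw [h2, Finset.sum_add_distrib, h1]; ring

lemma gibbsExp_coord_sub_condProb_mul (s : I) {w : (I → Bool) → ℝ} (hw : IndepOf s w) :
    gibbsExp h (fun y => (coord s y - condProb h s y) * w y) = 0 := by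
  unfold gibbsExp
  rw [sum_eq_half_sum_update s, Finset.sum_eq_zero, zero_div, zero_div]
  intro y _
  simp only [hw y, indepOf_condProb h s y, coord_update_self, if_true, Bool.false_eq_true, if_false]
  have e : Real.exp (h (Function.update y s true))
      = Real.exp (h (Function.update y s false)) * Real.exp (cubeDiff s h y) := by
    rw [← Real.exp_add]; congr 1; simp [cubeDiff]
  rw [e, condProb, Real.sigmoid_def, Real.exp_neg]
  have := Real.exp_pos (cubeDiff s h y)
  field_simp
  ring

/-- Integration by parts for the Gibbs measure. -/
lemma gibbsExp_integration_by_parts (s : I) {w : (I → Bool) → ℝ} (hw : IndepOf s w)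
    (f : (I → Bool) → ℝ) :
    gibbsExp h (fun y => w y * (coord s y - condProb h s y) * f y)
      = gibbsExp h (fun y => w y * (1 - condProb h s y) * (coord s y * cubeDiff s f y)) := by
  have h0 : gibbsExp h (fun y => (coord s y - condProb h s y)
      * (w y * f (Function.update y s false))) = 0 :=
    gibbsExp_coord_sub_condProb_mul h s fun y b => by simp [hw y]
  rw [← sub_zero (gibbsExp h fun y => w y * (coord s y - condProb h s y) * f y), ← h0,
    ← gibbsExp_sub]
  congr 1
  funext y
  have := eq_add_coord_mul_cubeDiff s f y
  rcases coord_eq_zero_or_one s y with hc | hc <;> rw [hc] at this ⊢ <;> rw [this] <;> ring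

/-- The FKG inequality for a supermodular Hamiltonian. -/
lemma gibbsExp_fkg (hsup : ∀ a b, h a + h b ≤ h (a ⊓ b) + h (a ⊔ b))
    {f g : (I → Bool) → ℝ} (hf : Monotone f) (hg : Monotone g) :
    gibbsExp h f * gibbsExp h g ≤ gibbsExp h (fun y => f y * g y) := by
  have key : ∀ {f g : (I → Bool) → ℝ}, Monotone f → Monotone g → 0 ≤ f → 0 ≤ g →
      gibbsExp h f * gibbsExp h g ≤ gibbsExp h (fun y => f y * g y) := by
    intro f g hf hg hf0 hg0
    have hZ := gibbs_partition_pos h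
    have := fkg (μ := fun y => Real.exp (h y)) (f := f) (g := g) (fun y => (Real.exp_pos _).le)
      hf0 hg0 hf hg
      (fun a b => by
        simp only [← Real.exp_add]
        exact Real.exp_le_exp.mpr (hsup a b))
    unfold gibbsExp
    rw [div_mul_div_comm, div_le_div_iff₀ (mul_pos hZ hZ) hZ]
    calc _ ≤ _ := mul_le_mul_of_nonneg_right this hZ.le
      _ = _ := by ring
  have h1 := key (f := fun y => f y - f ⊥) (g := fun y => g y - g ⊥)
    (fun a b hab => sub_le_sub_right (hf hab) _) (fun a b hab => sub_le_sub_right (hg hab) _)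
    (fun y => sub_nonneg.mpr (hf bot_le)) (fun y => sub_nonneg.mpr (hg bot_le))
  have h2 : (fun y => (f y - f ⊥) * (g y - g ⊥))
      = fun y => (f y * g y - f ⊥ * g y) - (g ⊥ * f y - f ⊥ * g ⊥) := by
    funext y; ring
  rw [h2, gibbsExp_sub, gibbsExp_sub, gibbsExp_sub, gibbsExp_sub, gibbsExp_sub,
    gibbsExp_const_mul, gibbsExp_const_mul, gibbsExp_const, gibbsExp_const, gibbsExp_const] at h1
  linarith

lemma monotone_of_cubeDiff_nonneg {f : (I → Bool) → ℝ} (hf : ∀ s y, 0 ≤ cubeDiff s f y) :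
    Monotone f := by
  have step : ∀ (y : I → Bool) (s : I), f y ≤ f (Function.update y s true) := by
    intro y s
    have h1 := eq_add_coord_mul_cubeDiff s f y
    have h2 := hf s y
    have h3 := mul_le_of_le_one_left h2 (coord_le_one s y)
    have h4 : cubeDiff s f y = f (Function.update y s true) - f (Function.update y s false) := rfl
    linarith
  have key : ∀ (A : Finset I) (a : I → Bool), f a ≤ f (fun i => if i ∈ A then true else a i) := by
    intro A
    induction A using Finset.induction_on with
    | empty => intro a; simp
    | insert s A hs ih =>
      intro a
      refine (ih a).trans ((step _ s).trans (le_of_eq ?_))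
      congr 1
      funext i
      by_cases hi : i = s
      · subst hi; simp
      · simp [hi]
  intro a b hab
  refine (key (Finset.univ.filter fun i => b i = true) a).trans (le_of_eq ?_)
  congr 1
  funext i
  have := hab i
  cases hb : b i <;> cases ha : a i <;> simp_all [Bool.le_iff_imp]

/-- The number of present coordinates. -/
def coordSum (y : I → Bool) : ℝ := ∑ s, coord s y

lemma cubeDiff_sum {ι : Type*} (s : I) (A : Finset ι) (f : ι → (I → Bool) → ℝ) (y : I → Bool) :
    cubeDiff s (fun y => ∑ i ∈ A, f i y) y = ∑ i ∈ A, cubeDiff s (f i) y := by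
  simp [cubeDiff]

lemma cubeDiff_coordSum (s : I) (y : I → Bool) : cubeDiff s coordSum y = 1 := by
  have : (coordSum : (I → Bool) → ℝ) = fun y => ∑ t, coord t y := rfl
  rw [this, cubeDiff_sum, Finset.sum_eq_single s, cubeDiff_coord_self]
  · intro t _ ht; exact cubeDiff_coord_of_ne ht y
  · simp

/-- Newman's inequality: under a positively associated Gibbs measure, the variance of a function
which is Lipschitz in each coordinate is controlled by the variance of the number of present
coordinates. -/
lemma gibbsExp_variance_le (hsup : ∀ a b, h a + h b ≤ h (a ⊓ b) + h (a ⊔ b))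
    {f : (I → Bool) → ℝ} {L : ℝ} (hf : ∀ s y, |cubeDiff s f y| ≤ L) :
    gibbsExp h (fun y => (f y - gibbsExp h f) ^ 2)
      ≤ L ^ 2 * gibbsExp h (fun y => (coordSum y - gibbsExp h coordSum) ^ 2) := by
  have hmono1 : Monotone fun y => L * coordSum y + f y := by
    refine monotone_of_cubeDiff_nonneg fun s y => ?_
    have h1 := (abs_le.mp (hf s y)).1
    have h2 := cubeDiff_coordSum s y
    simp only [cubeDiff] at h1 h2 ⊢
    linear_combination h1 - L * h2
  have hmono2 : Monotone fun y => L * coordSum y - f y := by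
    refine monotone_of_cubeDiff_nonneg fun s y => ?_
    have h1 := (abs_le.mp (hf s y)).2
    have h2 := cubeDiff_coordSum s y
    simp only [cubeDiff] at h1 h2 ⊢
    linear_combination h1 - L * h2
  have h1 := gibbsExp_fkg h hsup hmono1 hmono2
  have h2 := gibbsExp_centered_mul h f f
  have h3 := gibbsExp_centered_mul h coordSum coordSum
  simp only [← pow_two] at h2 h3
  have h4 : (fun y => (L * coordSum y + f y) * (L * coordSum y - f y))
      = fun y => L ^ 2 * coordSum y ^ 2 - f y ^ 2 := by
    funext y; ring
  rw [h4, gibbsExp_sub, gibbsExp_sub, gibbsExp_add, gibbsExp_const_mul, gibbsExp_const_mul] at h1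
  rw [h2, h3]
  nlinarith

end Cube
end ErgmCLT

namespace ErgmCLT

/-- Finite families of placements of abstract graphs `j` with edge sets `E j` into a set `I` of
potential edges. The scale `u ^ 12` plays the role of the number of vertices; placements are
homogeneous at the level of single edges and spread out at the level of pairs of edges. -/
structure PlacementSystem {J : Type} (E : J → Type) (I : Type) [Fintype I] [DecidableEq I]
    (K : ℝ) where
  P : J → Type
  fintypeP : ∀ j, Fintype (P j)
  place : ∀ j, P j → E j → I
  c : J → ℝ
  κ : J → ℝ
  u : ℝ
  one_le_u : 1 ≤ u
  inj : ∀ j φ, Function.Injective (place j φ)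
  c_nonneg : ∀ j, 0 ≤ c j
  deg : ∀ j r t, c j * ∑ φ, (if place j φ r = t then (1 : ℝ) else 0) = κ j
  abs_kappa_sub_two_le : ∀ j, |κ j - 2| ≤ K / u ^ 12
  codeg : ∀ j r e t s, r ≠ e →
    c j * ∑ φ, (if place j φ r = t then (if place j φ e = s then (1 : ℝ) else 0) else 0)
      ≤ K / u ^ 12
  card_le : (Fintype.card I : ℝ) ≤ u ^ 24

namespace PlacementSystem

attribute [instance] PlacementSystem.fintypeP

variable {J : Type} {E : J → Type} [∀ j, DecidableEq (E j)]
  {I : Type} [Fintype I] [DecidableEq I] {K : ℝ} (S : PlacementSystem E I K)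

/-- The weighted sum of `g` over placements sending `r` to `t`. -/
def rooted (j : J) (r : E j) (t : I) (g : S.P j → ℝ) : ℝ :=
  S.c j * ∑ φ, if S.place j φ r = t then g φ else 0

/-- The indicator that all edges in `A` are present under the placement `φ`. -/
def mon (j : J) (A : Finset (E j)) (φ : S.P j) (y : I → Bool) : ℝ :=
  ∏ e ∈ A, coord (S.place j φ e) y

/-- The rooted count of placements sending `r` to `t` for which all edges of `A` are present. -/
def count (j : J) (r : E j) (A : Finset (E j)) (t : I) (y : I → Bool) : ℝ :=
  S.rooted j r t fun φ => S.mon j A φ y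

lemma u_pos : 0 < S.u := lt_of_lt_of_le one_pos S.one_le_u

lemma kappa_le (hK : 0 ≤ K) (j : J) : S.κ j ≤ K + 2 := by
  have h1 := (abs_le.mp (S.abs_kappa_sub_two_le j)).2
  have h2 : K / S.u ^ 12 ≤ K := div_le_self hK (one_le_pow₀ S.one_le_u)
  linarith

lemma rooted_add (j : J) (r : E j) (t : I) (f g : S.P j → ℝ) :
    S.rooted j r t (fun φ => f φ + g φ) = S.rooted j r t f + S.rooted j r t g := by
  unfold rooted
  rw [← mul_add, ← Finset.sum_add_distrib]
  congr 1
  exact Finset.sum_congr rfl fun φ _ => by split_ifs <;> simp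

lemma rooted_sub (j : J) (r : E j) (t : I) (f g : S.P j → ℝ) :
    S.rooted j r t (fun φ => f φ - g φ) = S.rooted j r t f - S.rooted j r t g := by
  unfold rooted
  rw [← mul_sub, ← Finset.sum_sub_distrib]
  congr 1
  exact Finset.sum_congr rfl fun φ _ => by split_ifs <;> simp

lemma rooted_const_mul (j : J) (r : E j) (t : I) (a : ℝ) (g : S.P j → ℝ) :
    S.rooted j r t (fun φ => a * g φ) = a * S.rooted j r t g := by
  unfold rooted
  simp only [Finset.mul_sum]
  exact Finset.sum_congr rfl fun φ _ => by split_ifs <;> ring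

lemma rooted_sum {ι : Type*} (j : J) (r : E j) (t : I) (A : Finset ι) (g : ι → S.P j → ℝ) :
    S.rooted j r t (fun φ => ∑ i ∈ A, g i φ) = ∑ i ∈ A, S.rooted j r t (g i) := by
  unfold rooted
  rw [← Finset.mul_sum, Finset.sum_comm]
  congr 1
  exact Finset.sum_congr rfl fun φ _ => by split_ifs <;> simp

lemma rooted_const (j : J) (r : E j) (t : I) (a : ℝ) :
    S.rooted j r t (fun _ => a) = S.κ j * a := by
  have := S.rooted_const_mul j r t a fun _ => 1
  simp only [mul_one] at this
  rw [this, mul_comm]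
  congr 1
  exact S.deg j r t

lemma rooted_mono {j : J} {r : E j} {t : I} {f g : S.P j → ℝ}
    (h : ∀ φ, S.place j φ r = t → f φ ≤ g φ) : S.rooted j r t f ≤ S.rooted j r t g := by
  unfold rooted
  refine mul_le_mul_of_nonneg_left (Finset.sum_le_sum fun φ _ => ?_) (S.c_nonneg j)
  split_ifs with hφ
  · exact h φ hφ
  · exact le_rfl

lemma rooted_congr {j : J} {r : E j} {t : I} {f g : S.P j → ℝ}
    (h : ∀ φ, S.place j φ r = t → f φ = g φ) : S.rooted j r t f = S.rooted j r t g :=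
  le_antisymm (S.rooted_mono fun φ hφ => (h φ hφ).le) (S.rooted_mono fun φ hφ => (h φ hφ).ge)

lemma abs_rooted_le_rooted {j : J} {r : E j} {t : I} {f g : S.P j → ℝ}
    (h : ∀ φ, |f φ| ≤ g φ) : |S.rooted j r t f| ≤ S.rooted j r t g := by
  rw [abs_le]
  constructor
  · have := S.rooted_const_mul j r t (-1) g
    rw [neg_one_mul] at this
    rw [← this]
    exact S.rooted_mono fun φ _ => by linarith [(abs_le.mp (h φ)).1]
  · exact S.rooted_mono fun φ _ => (abs_le.mp (h φ)).2

lemma abs_rooted_le {j : J} {r : E j} {t : I} {f : S.P j → ℝ} {a : ℝ} (h : ∀ φ, |f φ| ≤ a) :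
    |S.rooted j r t f| ≤ S.κ j * a := by
  rw [← S.rooted_const j r t a]
  exact S.abs_rooted_le_rooted h

lemma sum_mul_rooted (j : J) (r : E j) (a : I → ℝ) (g : S.P j → ℝ) :
    ∑ t, a t * S.rooted j r t g = S.c j * ∑ φ, a (S.place j φ r) * g φ := by
  unfold rooted
  simp only [mul_left_comm _ (S.c j), ← Finset.mul_sum]
  congr 1
  simp only [Finset.mul_sum]
  rw [Finset.sum_comm]
  refine Finset.sum_congr rfl fun φ _ => ?_
  rw [Finset.sum_eq_single (S.place j φ r)]
  · simp
  · intro t _ ht; simp [ht.symm]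
  · simp

lemma sum_rooted (j : J) (r : E j) (g : S.P j → ℝ) :
    ∑ t, S.rooted j r t g = S.c j * ∑ φ, g φ := by
  simpa using S.sum_mul_rooted j r (fun _ => 1) g

lemma sum_mul_rooted_indicator (j : J) (r e : E j) (t : I) (a : I → ℝ) (g : S.P j → ℝ) :
    ∑ s, a s * S.rooted j r t (fun φ => if S.place j φ e = s then g φ else 0)
      = S.rooted j r t fun φ => a (S.place j φ e) * g φ := by
  simp only [← rooted_const_mul]
  rw [← S.rooted_sum]
  refine S.rooted_congr fun φ _ => ?_
  rw [Finset.sum_eq_single (S.place j φ e)]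
  · simp
  · intro s _ hs; simp [hs.symm]
  · simp

lemma rooted_indicator_le {j : J} {r e : E j} (h : r ≠ e) (t s : I) :
    S.rooted j r t (fun φ => if S.place j φ e = s then 1 else 0) ≤ K / S.u ^ 12 :=
  S.codeg j r e t s h

lemma sum_rooted_indicator (j : J) (r e : E j) (s : I) :
    ∑ t, S.rooted j r t (fun φ => if S.place j φ e = s then 1 else 0) = S.κ j := by
  rw [S.sum_rooted]
  exact S.deg j e s

lemma mon_nonneg (j : J) (A : Finset (E j)) (φ : S.P j) (y : I → Bool) : 0 ≤ S.mon j A φ y :=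
  Finset.prod_nonneg fun _ _ => coord_nonneg _ _

lemma mon_le_one (j : J) (A : Finset (E j)) (φ : S.P j) (y : I → Bool) : S.mon j A φ y ≤ 1 :=
  Finset.prod_le_one (fun _ _ => coord_nonneg _ _) fun _ _ => coord_le_one _ _

lemma abs_mon_le_one (j : J) (A : Finset (E j)) (φ : S.P j) (y : I → Bool) :
    |S.mon j A φ y| ≤ 1 := by
  rw [abs_of_nonneg (S.mon_nonneg j A φ y)]; exact S.mon_le_one j A φ y

lemma mon_insert {j : J} {A : Finset (E j)} {e : E j} (h : e ∉ A) (φ : S.P j) (y : I → Bool) :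
    S.mon j (insert e A) φ y = coord (S.place j φ e) y * S.mon j A φ y := by
  simp [mon, Finset.prod_insert h]

lemma mon_update_of_forall_ne {j : J} {A : Finset (E j)} {φ : S.P j} {s : I}
    (h : ∀ e ∈ A, S.place j φ e ≠ s) (y : I → Bool) (b : Bool) :
    S.mon j A φ (Function.update y s b) = S.mon j A φ y :=
  Finset.prod_congr rfl fun e he => coord_update_of_ne (h e he) y b

lemma cubeDiff_mon (j : J) (A : Finset (E j)) (φ : S.P j) (s : I) (y : I → Bool) :
    cubeDiff s (S.mon j A φ) y
      = ∑ e ∈ A, if S.place j φ e = s then S.mon j (A.erase e) φ y else 0 := by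
  by_cases h : ∃ e ∈ A, S.place j φ e = s
  · obtain ⟨e, he, hes⟩ := h
    have hne : ∀ a ∈ A.erase e, S.place j φ a ≠ s := fun a ha has =>
      (Finset.ne_of_mem_erase ha) (S.inj j φ (has.trans hes.symm))
    rw [Finset.sum_eq_single e]
    · have h1 : ∀ b, S.mon j A φ (Function.update y s b)
          = (if b then 1 else 0) * S.mon j (A.erase e) φ y := by
        intro b
        conv_lhs => rw [← Finset.insert_erase he]
        rw [S.mon_insert (Finset.notMem_erase e A), hes, coord_update_self,
          S.mon_update_of_forall_ne hne]
      simp [cubeDiff, h1, hes]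
    · intro a ha hae
      rw [if_neg]
      exact hne a (Finset.mem_erase.mpr ⟨hae, ha⟩)
    · exact fun h => absurd he h
  · push Not at h
    rw [cubeDiff, S.mon_update_of_forall_ne h, S.mon_update_of_forall_ne h, sub_self,
      Finset.sum_eq_zero]
    exact fun e he => if_neg (h e he)

lemma abs_cubeDiff_mon_le (j : J) (A : Finset (E j)) (φ : S.P j) (s : I) (y : I → Bool) :
    |cubeDiff s (S.mon j A φ) y| ≤ ∑ e ∈ A, if S.place j φ e = s then 1 else 0 := by
  rw [cubeDiff_mon]
  refine (Finset.abs_sum_le_sum_abs _ _).trans (Finset.sum_le_sum fun e _ => ?_)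
  split_ifs
  · exact S.abs_mon_le_one j _ φ y
  · simp

lemma cubeDiff_rooted (j : J) (r : E j) (t s : I) (g : S.P j → (I → Bool) → ℝ) (y : I → Bool) :
    cubeDiff s (fun y => S.rooted j r t fun φ => g φ y) y
      = S.rooted j r t fun φ => cubeDiff s (g φ) y := by
  simp only [cubeDiff, rooted_sub]

lemma cubeDiff_count (j : J) (r : E j) (A : Finset (E j)) (t s : I) (y : I → Bool) :
    cubeDiff s (S.count j r A t) y = ∑ e ∈ A, S.rooted j r t fun φ =>
      if S.place j φ e = s then S.mon j (A.erase e) φ y else 0 := by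
  rw [← S.rooted_sum]
  have : S.count j r A t = fun y => S.rooted j r t fun φ => S.mon j A φ y := rfl
  rw [this, cubeDiff_rooted]
  simp only [cubeDiff_mon]

lemma indepOf_count {j : J} {r : E j} {A : Finset (E j)} (hr : r ∉ A) (t : I) :
    IndepOf t (S.count j r A t) := fun y b =>
  S.rooted_congr fun φ hφ => S.mon_update_of_forall_ne
    (fun _ he hes => hr (S.inj j φ (hφ.trans hes.symm) ▸ he)) y b

lemma abs_cubeDiff_count_le_sum (j : J) (r : E j) (A : Finset (E j)) (t s : I) (y : I → Bool) :
    |cubeDiff s (S.count j r A t) y|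
      ≤ ∑ e ∈ A, S.rooted j r t fun φ => if S.place j φ e = s then 1 else 0 := by
  have : S.count j r A t = fun y => S.rooted j r t fun φ => S.mon j A φ y := rfl
  rw [this, cubeDiff_rooted, ← S.rooted_sum]
  exact S.abs_rooted_le_rooted fun φ => S.abs_cubeDiff_mon_le j A φ s y

variable [∀ j, Fintype (E j)]

lemma sum_indicator_le {j : J} {r : E j} {A : Finset (E j)} (hr : r ∉ A) (hK : 0 ≤ K) (t s : I) :
    ∑ e ∈ A, S.rooted j r t (fun φ => if S.place j φ e = s then 1 else 0)
      ≤ Fintype.card (E j) * K / S.u ^ 12 := by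
  calc _ ≤ ∑ e ∈ A, K / S.u ^ 12 := Finset.sum_le_sum fun e he =>
        S.rooted_indicator_le (fun h => hr (by rw [h]; exact he)) t s
    _ = A.card * (K / S.u ^ 12) := by simp
    _ ≤ Fintype.card (E j) * (K / S.u ^ 12) := by
        have := S.u_pos
        gcongr
        exact Finset.card_le_univ A
    _ = _ := by ring

lemma abs_cubeDiff_count_le {j : J} {r : E j} {A : Finset (E j)} (hr : r ∉ A) (hK : 0 ≤ K)
    (t s : I) (y : I → Bool) :
    |cubeDiff s (S.count j r A t) y| ≤ Fintype.card (E j) * K / S.u ^ 12 :=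
  (S.abs_cubeDiff_count_le_sum j r A t s y).trans (S.sum_indicator_le hr hK t s)

lemma sum_abs_cubeDiff_count_le (j : J) (r : E j) (A : Finset (E j)) (hK : 0 ≤ K)
    (s : I) (y : I → Bool) :
    ∑ t, |cubeDiff s (S.count j r A t) y| ≤ Fintype.card (E j) * (K + 2) := by
  calc _ ≤ ∑ t, ∑ e ∈ A, S.rooted j r t (fun φ => if S.place j φ e = s then 1 else 0) :=
        Finset.sum_le_sum fun t _ => S.abs_cubeDiff_count_le_sum j r A t s y
    _ = ∑ e ∈ A, S.κ j := by
        rw [Finset.sum_comm]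
        exact Finset.sum_congr rfl fun e _ => S.sum_rooted_indicator j r e s
    _ ≤ ∑ e ∈ A, (K + 2) := Finset.sum_le_sum fun e _ => S.kappa_le hK j
    _ = A.card * (K + 2) := by rw [Finset.sum_const, nsmul_eq_mul]
    _ ≤ Fintype.card (E j) * (K + 2) := by
        gcongr
        exact Finset.card_le_univ A

variable [Fintype J] (β : J → ℝ)

/-- The Hamiltonian of a system of placements. -/
def ham (y : I → Bool) : ℝ := ∑ j, β j * (S.c j * ∑ φ, S.mon j Finset.univ φ y)

/-- The local field at `s`. -/
def field (s : I) (y : I → Bool) : ℝ := cubeDiff s (S.ham β) y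

lemma field_eq (s : I) (y : I → Bool) :
    S.field β s y = ∑ j, β j * ∑ r, S.count j r (Finset.univ.erase r) s y := by
  have h1 : S.field β s y
      = ∑ j, β j * (S.c j * ∑ φ, cubeDiff s (S.mon j Finset.univ φ) y) := by
    simp only [field, ham, cubeDiff, ← Finset.sum_sub_distrib, ← mul_sub]
  rw [h1]
  refine Finset.sum_congr rfl fun j _ => ?_
  congr 1
  simp only [cubeDiff_mon, count, rooted]
  rw [← Finset.mul_sum, Finset.sum_comm]

/-- A bound for the influences of single edges on local fields. -/
def influenceBound (E : J → Type) [∀ j, Fintype (E j)] (β : J → ℝ) (K : ℝ) : ℝ :=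
  ∑ j, |β j| * ((Fintype.card (E j)) ^ 2 * (K + 2))

lemma influenceBound_nonneg (hK : 0 ≤ K) : 0 ≤ influenceBound E β K :=
  Finset.sum_nonneg fun j _ => by positivity

lemma abs_cubeDiff_field_le_sum (t s : I) (y : I → Bool) :
    |cubeDiff s (S.field β t) y|
      ≤ ∑ j, |β j| * ∑ r, |cubeDiff s (S.count j r (Finset.univ.erase r) t) y| := by
  have h1 : cubeDiff s (S.field β t) y
      = ∑ j, β j * ∑ r, cubeDiff s (S.count j r (Finset.univ.erase r) t) y := by
    simp only [cubeDiff, field_eq, ← Finset.sum_sub_distrib, ← mul_sub]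
  rw [h1]
  refine (Finset.abs_sum_le_sum_abs _ _).trans (Finset.sum_le_sum fun j _ => ?_)
  rw [abs_mul]
  exact mul_le_mul_of_nonneg_left (Finset.abs_sum_le_sum_abs _ _) (abs_nonneg _)

lemma abs_cubeDiff_field_le (hK : 0 ≤ K) (t s : I) (y : I → Bool) :
    |cubeDiff s (S.field β t) y| ≤ influenceBound E β K / S.u ^ 12 := by
  refine (S.abs_cubeDiff_field_le_sum β t s y).trans ?_
  rw [influenceBound, Finset.sum_div]
  refine Finset.sum_le_sum fun j _ => ?_
  rw [mul_div_assoc]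
  refine mul_le_mul_of_nonneg_left ?_ (abs_nonneg _)
  calc _ ≤ ∑ _r : E j, Fintype.card (E j) * K / S.u ^ 12 := Finset.sum_le_sum fun r _ =>
        S.abs_cubeDiff_count_le (Finset.notMem_erase r _) hK t s y
    _ = (Fintype.card (E j)) ^ 2 * K / S.u ^ 12 := by
        rw [Finset.sum_const, Finset.card_univ, nsmul_eq_mul]; ring
    _ ≤ _ := by
        have := S.u_pos
        gcongr
        linarith

lemma sum_abs_cubeDiff_field_le (hK : 0 ≤ K) (s : I) (y : I → Bool) :
    ∑ t, |cubeDiff s (S.field β t) y| ≤ influenceBound E β K := by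
  calc _ ≤ ∑ t, ∑ j, |β j| * ∑ r, |cubeDiff s (S.count j r (Finset.univ.erase r) t) y| :=
        Finset.sum_le_sum fun t _ => S.abs_cubeDiff_field_le_sum β t s y
    _ = ∑ j, |β j| * ∑ r, ∑ t, |cubeDiff s (S.count j r (Finset.univ.erase r) t) y| := by
        rw [Finset.sum_comm]
        refine Finset.sum_congr rfl fun j _ => ?_
        rw [← Finset.mul_sum, Finset.sum_comm]
    _ ≤ ∑ j, |β j| * ∑ _r : E j, Fintype.card (E j) * (K + 2) := by
        gcongr with j _ r _
        exact S.sum_abs_cubeDiff_count_le j r _ hK s y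
    _ = _ := by
        refine Finset.sum_congr rfl fun j _ => ?_
        rw [Finset.sum_const, Finset.card_univ, nsmul_eq_mul]; ring

/-- The conditional probability of the edge `s` given the other edges. -/
def prob (s : I) (y : I → Bool) : ℝ := condProb (S.ham β) s y

lemma prob_eq (s : I) (y : I → Bool) : S.prob β s y = Real.sigmoid (S.field β s y) := rfl

lemma prob_nonneg (s : I) (y : I → Bool) : 0 ≤ S.prob β s y := condProb_nonneg _ _ _

lemma prob_le_one (s : I) (y : I → Bool) : S.prob β s y ≤ 1 := condProb_le_one _ _ _

end PlacementSystem

lemma abs_sigmoid_sub_le (x y : ℝ) : |Real.sigmoid x - Real.sigmoid y| ≤ |x - y| := by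
  have := Convex.norm_image_sub_le_of_norm_hasDerivWithin_le (f := Real.sigmoid)
    (f' := fun x => Real.sigmoid x * (1 - Real.sigmoid x)) (C := 1) (s := Set.univ) (x := y)
    (y := x) (fun z _ => (Real.hasDerivAt_sigmoid z).hasDerivWithinAt) (fun z _ => by
      have h1 := Real.sigmoid_nonneg z
      have h2 := Real.sigmoid_le_one z
      rw [Real.norm_eq_abs, abs_le]
      constructor <;> nlinarith) convex_univ trivial trivial
  simpa using this

namespace PlacementSystem

variable {J : Type} {E : J → Type} [∀ j, DecidableEq (E j)]
  {I : Type} [Fintype I] [DecidableEq I] {K : ℝ} (S : PlacementSystem E I K)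
  [∀ j, Fintype (E j)] [Fintype J] (β : J → ℝ)

lemma abs_cubeDiff_prob_le_field (t s : I) (y : I → Bool) :
    |cubeDiff s (S.prob β t) y| ≤ |cubeDiff s (S.field β t) y| :=
  abs_sigmoid_sub_le _ _

lemma abs_cubeDiff_prob_le (hK : 0 ≤ K) (t s : I) (y : I → Bool) :
    |cubeDiff s (S.prob β t) y| ≤ influenceBound E β K / S.u ^ 12 :=
  (S.abs_cubeDiff_prob_le_field β t s y).trans (S.abs_cubeDiff_field_le β hK t s y)

lemma sum_abs_cubeDiff_prob_le (hK : 0 ≤ K) (s : I) (y : I → Bool) :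
    ∑ t, |cubeDiff s (S.prob β t) y| ≤ influenceBound E β K :=
  (Finset.sum_le_sum fun t _ => S.abs_cubeDiff_prob_le_field β t s y).trans
    (S.sum_abs_cubeDiff_field_le β hK s y)

lemma mon_eq_zero_or_one (j : J) (A : Finset (E j)) (φ : S.P j) (y : I → Bool) :
    S.mon j A φ y = 0 ∨ S.mon j A φ y = 1 := by
  unfold mon
  induction A using Finset.induction_on with
  | empty => simp
  | insert e A he ih =>
    rw [Finset.prod_insert he]
    rcases coord_eq_zero_or_one (S.place j φ e) y with h | h <;> simp [h, ih]

lemma mon_supermodular (j : J) (A : Finset (E j)) (φ : S.P j) (a b : I → Bool) :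
    S.mon j A φ a + S.mon j A φ b ≤ S.mon j A φ (a ⊓ b) + S.mon j A φ (a ⊔ b) := by
  have hinf : S.mon j A φ (a ⊓ b) = S.mon j A φ a * S.mon j A φ b := by
    unfold mon
    rw [← Finset.prod_mul_distrib]
    refine Finset.prod_congr rfl fun e _ => ?_
    unfold coord
    cases ha : a (S.place j φ e) <;> cases hb : b (S.place j φ e) <;> simp [ha, hb]
  have hl : S.mon j A φ a ≤ S.mon j A φ (a ⊔ b) := by
    unfold mon
    refine Finset.prod_le_prod (fun _ _ => coord_nonneg _ _) fun e _ => ?_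
    unfold coord
    cases ha : a (S.place j φ e) <;> cases hb : b (S.place j φ e) <;> simp [ha, hb]
  have hr : S.mon j A φ b ≤ S.mon j A φ (a ⊔ b) := by
    unfold mon
    refine Finset.prod_le_prod (fun _ _ => coord_nonneg _ _) fun e _ => ?_
    unfold coord
    cases ha : a (S.place j φ e) <;> cases hb : b (S.place j φ e) <;> simp [ha, hb]
  have hs := S.mon_nonneg j A φ (a ⊔ b)
  rw [hinf]
  rcases S.mon_eq_zero_or_one j A φ a with h | h <;>
  rcases S.mon_eq_zero_or_one j A φ b with h' | h' <;>
  simp only [h, h'] at hl hr ⊢ <;> linarith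

lemma mon_modular_of_card_eq_one {j : J} (hj : Fintype.card (E j) = 1) (φ : S.P j)
    (a b : I → Bool) :
    S.mon j univ φ a + S.mon j univ φ b = S.mon j univ φ (a ⊓ b) + S.mon j univ φ (a ⊔ b) := by
  obtain ⟨e, he⟩ := Finset.card_eq_one.mp hj
  simp only [mon, he, Finset.prod_singleton]
  unfold coord
  cases ha : a (S.place j φ e) <;> cases hb : b (S.place j φ e) <;> simp [ha, hb]

lemma ham_supermodular (hβ : ∀ j, 0 ≤ β j ∨ Fintype.card (E j) = 1) (a b : I → Bool) :
    S.ham β a + S.ham β b ≤ S.ham β (a ⊓ b) + S.ham β (a ⊔ b) := by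
  unfold ham
  rw [← Finset.sum_add_distrib, ← Finset.sum_add_distrib]
  refine Finset.sum_le_sum fun j _ => ?_
  simp only [← mul_add, ← Finset.sum_add_distrib]
  rcases hβ j with h | h
  · refine mul_le_mul_of_nonneg_left (mul_le_mul_of_nonneg_left
      (Finset.sum_le_sum fun φ _ => S.mon_supermodular j _ φ a b) (S.c_nonneg j)) h
  · rw [Finset.sum_congr rfl fun φ _ => S.mon_modular_of_card_eq_one h φ a b]

end PlacementSystem
end ErgmCLT

namespace ErgmCLT

lemma abs_pow_sub_pow_le_of_abs_sub_le {x z b : ℝ} (m : ℕ) (h : |x - z| ≤ b) :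
    |x ^ (2 * m + 1) - z ^ (2 * m + 1)|
      ≤ b * ((2 * m + 1) * 4 ^ m) * (x ^ (2 * m) + b ^ (2 * m)) := by
  have hb : 0 ≤ b := (abs_nonneg _).trans h
  have hx : |x| ≤ |x| + b := by linarith
  have hz : |z| ≤ |x| + b := by
    have : |z| ≤ |z - x| + |x| := by simpa using abs_add_le (z - x) x
    rw [abs_sub_comm] at this
    linarith
  have h0 : (0 : ℝ) ≤ |x| + b := by positivity
  rw [← geom_sum₂_mul (n := 2 * m + 1), abs_mul]
  have h1 : |∑ i ∈ Finset.range (2 * m + 1), x ^ i * z ^ (2 * m + 1 - 1 - i)|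
      ≤ (2 * m + 1) * (|x| + b) ^ (2 * m) := by
    calc _ ≤ ∑ i ∈ Finset.range (2 * m + 1), |x ^ i * z ^ (2 * m + 1 - 1 - i)| :=
          Finset.abs_sum_le_sum_abs _ _
      _ ≤ ∑ i ∈ Finset.range (2 * m + 1), (|x| + b) ^ (2 * m) := by
          refine Finset.sum_le_sum fun i hi => ?_
          rw [abs_mul, abs_pow, abs_pow]
          calc |x| ^ i * |z| ^ (2 * m + 1 - 1 - i)
              ≤ (|x| + b) ^ i * (|x| + b) ^ (2 * m + 1 - 1 - i) := by gcongr
            _ = (|x| + b) ^ (2 * m) := by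
                rw [← pow_add]
                congr 1
                have := Finset.mem_range.mp hi
                omega
      _ = _ := by rw [Finset.sum_const, Finset.card_range, nsmul_eq_mul]; push_cast; ring
  have h2 : (|x| + b) ^ (2 * m) ≤ 4 ^ m * (x ^ (2 * m) + b ^ (2 * m)) := by
    calc (|x| + b) ^ (2 * m) ≤ 2 ^ (2 * m - 1) * (|x| ^ (2 * m) + b ^ (2 * m)) :=
          add_pow_le (abs_nonneg _) hb _
      _ ≤ 2 ^ (2 * m) * (|x| ^ (2 * m) + b ^ (2 * m)) := by
          gcongr
          · norm_num
          · omega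
      _ = _ := by rw [pow_mul, (even_two_mul m).pow_abs]; norm_num
  have h3 : 0 ≤ (|x| + b) ^ (2 * m) := by positivity
  calc _ ≤ ((2 * m + 1) * (4 ^ m * (x ^ (2 * m) + b ^ (2 * m)))) * b := by
        refine mul_le_mul (h1.trans (by gcongr)) h (abs_nonneg _) ?_
        exact mul_nonneg (by positivity) (h3.trans h2)
    _ = _ := by ring

section Moments

variable {I : Type} [DecidableEq I] [Fintype I]

lemma gibbsExp_pow_succ_le (h : (I → Bool) → ℝ) {w : I → (I → Bool) → ℝ}
    (hw : ∀ s, IndepOf s (w s)) {F : (I → Bool) → ℝ}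
    (hF : ∀ y, F y = ∑ s, w s y * (coord s y - condProb h s y)) {a b : ℝ} (hb : 0 ≤ b)
    (ha : ∀ y, ∑ s, |w s y| ≤ a) (hFb : ∀ s y, |cubeDiff s F y| ≤ b) (m : ℕ) :
    gibbsExp h (fun y => F y ^ (2 * (m + 1))) ≤
      a * (b * ((2 * m + 1) * 4 ^ m)) *
        (gibbsExp h (fun y => F y ^ (2 * m)) + b ^ (2 * m)) := by
  have h1 : (fun y => F y ^ (2 * (m + 1)))
      = fun y => ∑ s, w s y * (coord s y - condProb h s y) * F y ^ (2 * m + 1) := by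
    funext y
    rw [← Finset.sum_mul, ← hF]
    ring
  rw [h1, gibbsExp_sum]
  simp only [gibbsExp_integration_by_parts h _ (hw _) fun y => F y ^ (2 * m + 1)]
  rw [← gibbsExp_sum, ← gibbsExp_const h (b ^ (2 * m)), ← gibbsExp_add,
    ← gibbsExp_const_mul]
  refine gibbsExp_mono fun y => ?_
  set B := b * ((2 * m + 1) * 4 ^ m) * (F y ^ (2 * m) + b ^ (2 * m)) with hB
  have hB0 : 0 ≤ B := by
    have : 0 ≤ F y ^ (2 * m) := (even_two_mul m).pow_nonneg _
    positivity
  have h2 : ∀ s, |coord s y * cubeDiff s (fun y => F y ^ (2 * m + 1)) y| ≤ B := by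
    intro s
    rcases coord_eq_zero_or_one s y with hs | hs
    · simpa [hs] using hB0
    · rw [hs, one_mul]
      simp only [cubeDiff]
      rw [update_true_of_coord_eq_one hs]
      exact abs_pow_sub_pow_le_of_abs_sub_le m
        ((abs_sub_update_le_cubeDiff s F y false).trans (hFb s y))
  calc _ ≤ ∑ s, |w s y| * B := by
        refine Finset.sum_le_sum fun s _ => (le_abs_self _).trans ?_
        rw [abs_mul, abs_mul]
        refine mul_le_mul ?_ (h2 s) (abs_nonneg _) (abs_nonneg _)
        refine mul_le_of_le_one_right (abs_nonneg _) ?_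
        rw [abs_le]
        constructor <;> linarith [condProb_nonneg h s y, condProb_le_one h s y]
    _ = (∑ s, |w s y|) * B := by rw [Finset.sum_mul]
    _ ≤ a * B := by gcongr; exact ha y
    _ = _ := by rw [hB]; ring

end Moments

lemma exists_gibbsExp_pow_le (a : ℝ) (m : ℕ) : ∃ C : ℝ, 0 ≤ C ∧
    ∀ (I : Type) [DecidableEq I] [Fintype I] (h : (I → Bool) → ℝ) (w : I → (I → Bool) → ℝ)
      (F : (I → Bool) → ℝ) (n : ℝ), 1 ≤ n → (∀ s, IndepOf s (w s)) →
      (∀ y, F y = ∑ s, w s y * (coord s y - condProb h s y)) → (∀ y, ∑ s, |w s y| ≤ a) →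
      (∀ s y, |cubeDiff s F y| ≤ a / n) → gibbsExp h (fun y => F y ^ (2 * m)) ≤ C / n ^ m := by
  induction m with
  | zero => exact ⟨1, zero_le_one, fun I _ _ h w F n _ _ _ _ _ => by simp [gibbsExp_const]⟩
  | succ m ih =>
    obtain ⟨C, hC, ih⟩ := ih
    have hev : 0 ≤ a ^ (2 * m) := (even_two_mul m).pow_nonneg _
    refine ⟨a * a * ((2 * m + 1) * 4 ^ m) * (C + a ^ (2 * m)),
      mul_nonneg (mul_nonneg (mul_self_nonneg a) (by positivity)) (by positivity), ?_⟩
    intro I _ _ h w F n hn hw hF ha hFb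
    have hn0 : 0 < n := one_pos.trans_le hn
    have ha0 : 0 ≤ a := (Finset.sum_nonneg fun _ _ => abs_nonneg _).trans (ha fun _ => false)
    refine (gibbsExp_pow_succ_le h hw hF (b := a / n) (by positivity) ha hFb m).trans ?_
    calc _ ≤ a * (a / n * ((2 * m + 1) * 4 ^ m)) * (C / n ^ m + a ^ (2 * m) / n ^ m) := by
          gcongr
          · exact ih I h w F n hn hw hF ha hFb
          · rw [div_pow]
            exact div_le_div_of_nonneg_left hev (by positivity)
              (pow_le_pow_right₀ hn (by omega))
      _ = _ := by field_simp; ring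

namespace PlacementSystem

variable {J : Type} {E : J → Type} [∀ j, DecidableEq (E j)]
  {I : Type} [Fintype I] [DecidableEq I] {K : ℝ} (S : PlacementSystem E I K)
  [∀ j, Fintype (E j)] [Fintype J] (β : J → ℝ)

/-- The rooted count of placements for which the edges of `A` are present, weighted by the
fluctuation of the edge `e`. -/
def fluct (j : J) (r : E j) (A : Finset (E j)) (e : E j) (t : I) (y : I → Bool) : ℝ :=
  S.rooted j r t fun φ => S.mon j A φ y * (coord (S.place j φ e) y - S.prob β (S.place j φ e) y)

lemma fluct_eq_sum (j : J) (r : E j) (A : Finset (E j)) (e : E j) (t : I) (y : I → Bool) :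
    S.fluct β j r A e t y = ∑ s, S.rooted j r t
      (fun φ => if S.place j φ e = s then S.mon j A φ y else 0)
        * (coord s y - condProb (S.ham β) s y) := by
  simp only [fluct, mul_comm (S.mon j A _ y), mul_comm (S.rooted j r t _)]
  exact (S.sum_mul_rooted_indicator j r e t (fun s => coord s y - S.prob β s y) _).symm

lemma indepOf_rooted_ite {j : J} (r : E j) {A : Finset (E j)} {e : E j} (he : e ∉ A) (t s : I) :
    IndepOf s fun y => S.rooted j r t
      fun φ => if S.place j φ e = s then S.mon j A φ y else 0 := by
  intro y b
  refine S.rooted_congr fun φ _ => ?_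
  split_ifs with h
  · exact S.mon_update_of_forall_ne
      (fun a ha has => he (S.inj j φ (h.trans has.symm) ▸ ha)) y b
  · rfl

lemma abs_rooted_ite_mon_le (j : J) (r : E j) (A : Finset (E j)) (e : E j) (t s : I)
    (y : I → Bool) :
    |S.rooted j r t fun φ => if S.place j φ e = s then S.mon j A φ y else 0|
      ≤ S.rooted j r t fun φ => if S.place j φ e = s then 1 else 0 :=
  S.abs_rooted_le_rooted fun φ => by
    split_ifs
    · exact S.abs_mon_le_one j A φ y
    · simp

lemma sum_abs_rooted_ite_mon_le (hK : 0 ≤ K) (j : J) (r : E j) (A : Finset (E j)) (e : E j)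
    (t : I) (y : I → Bool) :
    ∑ s, |S.rooted j r t fun φ => if S.place j φ e = s then S.mon j A φ y else 0| ≤ K + 2 := by
  refine (Finset.sum_le_sum fun s _ => S.abs_rooted_ite_mon_le j r A e t s y).trans ?_
  have := S.sum_mul_rooted_indicator j r e t (fun _ => 1) (fun _ => 1)
  simp only [one_mul] at this
  rw [this, S.rooted_const, mul_one]
  exact S.kappa_le hK j

/-- A bound for the total weight and `u ^ 12` times the influences of `fluct`. -/
def fluctBound (E : J → Type) [∀ j, Fintype (E j)] (β : J → ℝ) (K : ℝ) : ℝ :=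
  (∑ j, (Fintype.card (E j) : ℝ)) * K + (K + 2) * (influenceBound E β K + 1)

lemma abs_cubeDiff_fluct_le (hK : 0 ≤ K) {j : J} {r : E j} {A : Finset (E j)} {e : E j}
    (hre : e ≠ r) (hrA : r ∉ A) (heA : e ∉ A) (t s : I) (y : I → Bool) :
    |cubeDiff s (S.fluct β j r A e t) y| ≤ fluctBound E β K / S.u ^ 12 := by
  have hu := S.u_pos
  have hdef : S.fluct β j r A e t = fun y => S.rooted j r t fun φ =>
    S.mon j A φ y * (coord (S.place j φ e) y - S.prob β (S.place j φ e) y) := rfl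
  have h1 : ∀ φ : S.P j, |cubeDiff s (fun y => S.mon j A φ y *
      (coord (S.place j φ e) y - S.prob β (S.place j φ e) y)) y|
      ≤ (∑ a ∈ insert e A, if S.place j φ a = s then 1 else 0)
        + influenceBound E β K / S.u ^ 12 := by
    intro φ
    have hp : cubeDiff s (fun y => S.mon j A φ y *
        (coord (S.place j φ e) y - S.prob β (S.place j φ e) y)) y
        = cubeDiff s (S.mon j A φ) y * (coord (S.place j φ e) (Function.update y s true)
            - S.prob β (S.place j φ e) (Function.update y s true))
          + S.mon j A φ (Function.update y s false) * (cubeDiff s (coord (S.place j φ e)) y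
            - cubeDiff s (S.prob β (S.place j φ e)) y) := by
      simp only [cubeDiff]; ring
    have h2 : |cubeDiff s (coord (S.place j φ e)) y| ≤ if S.place j φ e = s then 1 else 0 := by
      split_ifs with h
      · rw [h, cubeDiff_coord_self, abs_one]
      · rw [cubeDiff_coord_of_ne h, abs_zero]
    rw [hp, Finset.sum_insert heA]
    refine (abs_add_le _ _).trans ?_
    rw [abs_mul, abs_mul]
    have h3 := mul_le_of_le_one_right (abs_nonneg (cubeDiff s (S.mon j A φ) y))
      (abs_coord_sub_condProb_le (S.ham β) (S.place j φ e) (S.place j φ e)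
        (Function.update y s true) (Function.update y s true))
    have h4 := mul_le_of_le_one_left (abs_nonneg (cubeDiff s (coord (S.place j φ e)) y
            - cubeDiff s (S.prob β (S.place j φ e)) y))
      (S.abs_mon_le_one j A φ (Function.update y s false))
    have h5 := abs_sub (cubeDiff s (coord (S.place j φ e)) y)
      (cubeDiff s (S.prob β (S.place j φ e)) y)
    have h6 := S.abs_cubeDiff_prob_le β hK (S.place j φ e) s y
    have h7 := S.abs_cubeDiff_mon_le j A φ s y
    simp only [prob] at *
    linarith
  rw [hdef, cubeDiff_rooted]
  refine (S.abs_rooted_le_rooted h1).trans ?_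
  rw [S.rooted_add, S.rooted_const, S.rooted_sum]
  have h2 := S.sum_indicator_le (r := r) (A := insert e A)
    (by simp [hre.symm, hrA]) hK t s
  have h3 : S.κ j * (influenceBound E β K / S.u ^ 12)
      ≤ (K + 2) * (influenceBound E β K / S.u ^ 12) := by
    have := influenceBound_nonneg (E := E) β hK
    gcongr
    exact S.kappa_le hK j
  have h4 : (Fintype.card (E j) : ℝ) ≤ ∑ j, (Fintype.card (E j) : ℝ) :=
    Finset.single_le_sum (f := fun j => (Fintype.card (E j) : ℝ)) (fun _ _ => by positivity)
      (Finset.mem_univ j)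
  have h5 : Fintype.card (E j) * K / S.u ^ 12
      ≤ (∑ j, (Fintype.card (E j) : ℝ)) * K / S.u ^ 12 := by gcongr
  have h6 : fluctBound E β K / S.u ^ 12 = (∑ j, (Fintype.card (E j) : ℝ)) * K / S.u ^ 12
      + (K + 2) * (influenceBound E β K / S.u ^ 12) + (K + 2) / S.u ^ 12 := by
    unfold fluctBound; ring
  have h7 : 0 ≤ (K + 2) / S.u ^ 12 := by positivity
  linarith

/-- The threshold for the fluctuations of rooted counts. -/
def θ : ℝ := (S.u ^ 5)⁻¹

lemma theta_pos : 0 < S.θ := inv_pos.mpr (pow_pos S.u_pos 5)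

lemma theta_le_one : S.θ ≤ 1 := inv_le_one_of_one_le₀ (one_le_pow₀ S.one_le_u)

/-- The configurations for which all rooted fluctuations are small. -/
def IsTypical (y : I → Bool) : Prop :=
  ∀ j r A e t, e ≠ r → r ∉ A → e ∉ A → |S.fluct β j r A e t y| ≤ S.θ

open Classical in
/-- The indicator of the atypical configurations. -/
def atypical (y : I → Bool) : ℝ := if S.IsTypical β y then 0 else 1

end PlacementSystem

variable {J : Type} (E : J → Type) [∀ j, DecidableEq (E j)] [∀ j, Fintype (E j)] [Fintype J]
  (β : J → ℝ) (K : ℝ)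

lemma exists_gibbsExp_atypical_le (hK : 0 ≤ K) : ∃ C : ℝ, 0 ≤ C ∧
    ∀ (I : Type) [Fintype I] [DecidableEq I] (S : PlacementSystem E I K),
      gibbsExp (S.ham β) (S.atypical β) ≤ C / S.u ^ 48 := by
  obtain ⟨C, hC, hmom⟩ := exists_gibbsExp_pow_le (PlacementSystem.fluctBound E β K) 36
  refine ⟨(∑ j, ∑ _r : E j, ∑ _A : Finset (E j), ∑ _e : E j, (1 : ℝ)) * C,
    mul_nonneg (by positivity) hC, ?_⟩
  intro I _ _ S
  have hu := S.u_pos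
  classical
  have hbound : ∀ j (r : E j) A e (t : I), e ≠ r → r ∉ A → e ∉ A →
      gibbsExp (S.ham β) (fun y => S.fluct β j r A e t y ^ 72) ≤ C / S.u ^ 432 := by
    intro j r A e t h1 h2 h3
    have := hmom I (S.ham β) (fun s y => S.rooted j r t
      (fun φ => if S.place j φ e = s then S.mon j A φ y else 0)) (S.fluct β j r A e t)
      (S.u ^ 12) (one_le_pow₀ S.one_le_u) (fun s => S.indepOf_rooted_ite r h3 t s)
      (fun y => S.fluct_eq_sum β j r A e t y)
      (fun y => (S.sum_abs_rooted_ite_mon_le hK j r A e t y).trans ?_)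
      (fun s y => S.abs_cubeDiff_fluct_le β hK h1 h2 h3 t s y)
    · rw [← pow_mul] at this
      exact this
    · have h4 := PlacementSystem.influenceBound_nonneg (E := E) β hK
      have h5 : 0 ≤ (∑ j, (Fintype.card (E j) : ℝ)) * K := by positivity
      have h6 : 0 ≤ (K + 2) * PlacementSystem.influenceBound E β K := by positivity
      unfold PlacementSystem.fluctBound
      linarith
  have hpt : ∀ y, S.atypical β y ≤ S.u ^ 360 * ∑ j, ∑ r : E j, ∑ A : Finset (E j), ∑ e : E j,
      ∑ t, if e ≠ r ∧ r ∉ A ∧ e ∉ A then S.fluct β j r A e t y ^ 72 else 0 := by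
    intro y
    have hnn : ∀ j (r : E j) A e (t : I),
        0 ≤ if e ≠ r ∧ r ∉ A ∧ e ∉ A then S.fluct β j r A e t y ^ 72 else 0 := by
      intro j r A e t
      split_ifs
      · positivity
      · exact le_rfl
    unfold PlacementSystem.atypical
    split_ifs with h
    · exact mul_nonneg (by positivity) (Finset.sum_nonneg fun j _ => Finset.sum_nonneg fun r _ =>
        Finset.sum_nonneg fun A _ => Finset.sum_nonneg fun e _ => Finset.sum_nonneg fun t _ =>
        hnn j r A e t)
    · simp only [PlacementSystem.IsTypical, not_forall, not_le] at h
      obtain ⟨j, r, A, e, t, h1, h2, h3, h4⟩ := h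
      have h5 : 1 ≤ S.u ^ 360 * S.fluct β j r A e t y ^ 72 := by
        have h6 : 1 ≤ S.u ^ 5 * |S.fluct β j r A e t y| := by
          have : S.u ^ 5 * S.θ = 1 := mul_inv_cancel₀ (by positivity)
          rw [← this]
          gcongr
        calc (1 : ℝ) ≤ (S.u ^ 5 * |S.fluct β j r A e t y|) ^ 72 := one_le_pow₀ h6
          _ = _ := by
            rw [mul_pow, ← pow_mul, Even.pow_abs (by decide)]
      refine h5.trans (mul_le_mul_of_nonneg_left ?_ (by positivity))
      calc _ = (if e ≠ r ∧ r ∉ A ∧ e ∉ A then S.fluct β j r A e t y ^ 72 else 0) := by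
            rw [if_pos ⟨h1, h2, h3⟩]
        _ ≤ _ := by
            refine le_trans ?_ (Finset.single_le_sum (fun j _ => Finset.sum_nonneg fun r _ =>
              Finset.sum_nonneg fun A _ => Finset.sum_nonneg fun e _ =>
              Finset.sum_nonneg fun t _ => hnn j r A e t) (Finset.mem_univ j))
            refine le_trans ?_ (Finset.single_le_sum (fun r _ =>
              Finset.sum_nonneg fun A _ => Finset.sum_nonneg fun e _ =>
              Finset.sum_nonneg fun t _ => hnn j r A e t) (Finset.mem_univ r))
            refine le_trans ?_ (Finset.single_le_sum (fun A _ => Finset.sum_nonneg fun e _ =>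
              Finset.sum_nonneg fun t _ => hnn j r A e t) (Finset.mem_univ A))
            refine le_trans ?_ (Finset.single_le_sum (fun e _ =>
              Finset.sum_nonneg fun t _ => hnn j r A e t) (Finset.mem_univ e))
            exact Finset.single_le_sum (fun t _ => hnn j r A e t) (Finset.mem_univ t)
  refine (gibbsExp_mono hpt).trans ?_
  rw [gibbsExp_const_mul]
  simp only [gibbsExp_sum]
  have hone : ∀ j (r : E j) A e (t : I), gibbsExp (S.ham β)
      (fun y => if e ≠ r ∧ r ∉ A ∧ e ∉ A then S.fluct β j r A e t y ^ 72 else 0)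
        ≤ C / S.u ^ 432 := by
    intro j r A e t
    by_cases h : e ≠ r ∧ r ∉ A ∧ e ∉ A
    · simp only [if_pos h]
      exact hbound j r A e t h.1 h.2.1 h.2.2
    · simp only [if_neg h, gibbsExp_const]
      positivity
  calc _ ≤ S.u ^ 360 * ∑ j, ∑ r : E j, ∑ A : Finset (E j), ∑ e : E j, S.u ^ 24 *
        (C / S.u ^ 432) := by
        gcongr with j _ r _ A _ e _
        refine (Finset.sum_le_sum fun t _ => hone j r A e t).trans ?_
        rw [Finset.sum_const, Finset.card_univ, nsmul_eq_mul]
        gcongr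
        exact S.card_le
    _ = S.u ^ 360 * ((∑ j, ∑ _r : E j, ∑ _A : Finset (E j), ∑ _e : E j, (1 : ℝ)) * (S.u ^ 24 *
        (C / S.u ^ 432))) := by
        simp only [Finset.sum_mul, one_mul]
    _ = _ := by field_simp

namespace PlacementSystem

variable {E β K} {I : Type} [Fintype I] [DecidableEq I] (S : PlacementSystem E I K)

lemma gibbsExp_le_of_typical {f : (I → Bool) → ℝ} {a b c : ℝ}
    (hc : gibbsExp (S.ham β) (S.atypical β) ≤ c) (ha : 0 ≤ a) (hb : 0 ≤ b)
    (hgood : ∀ y, S.IsTypical β y → f y ≤ a) (hall : ∀ y, f y ≤ b) :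
    gibbsExp (S.ham β) f ≤ a + b * c := by
  have h1 : ∀ y, f y ≤ a + b * S.atypical β y := by
    intro y
    by_cases h : S.IsTypical β y
    · simpa [atypical, h] using hgood y h
    · simp only [atypical, h, if_false, mul_one]
      linarith [hall y]
  refine (gibbsExp_mono h1).trans ?_
  rw [gibbsExp_add, gibbsExp_const, gibbsExp_const_mul]
  gcongr

end PlacementSystem

end ErgmCLT

namespace ErgmCLT

lemma exists_mul_sq_le_of_unique_fixedPoint {f : ℝ → ℝ} (hf : Differentiable ℝ f) {p : ℝ}
    (hp : p ∈ Set.Ioo (0 : ℝ) 1) (hfix : f p = p)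
    (huniq : ∀ q ∈ Set.Ioo (0 : ℝ) 1, f q = q → q = p) (h0 : 0 < f 0) (h1 : f 1 < 1)
    (hsub : deriv f p < 1) :
    ∃ c : ℝ, 0 < c ∧ ∀ a ∈ Set.Icc (0 : ℝ) 1, c * (a - p) ^ 2 ≤ (a - p) * (a - f a) := by
  set g : ℝ → ℝ := fun a => a - f a with hg
  have hgd : Differentiable ℝ g := differentiable_id.sub hf
  have hgp : g p = 0 := by simp [hg, hfix]
  have hcont : ContinuousOn (dslope g p) (Set.Icc 0 1) := by
    have : ContinuousOn (dslope g p) Set.univ :=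
      (continuousOn_dslope Filter.univ_mem).mpr ⟨hgd.continuous.continuousOn, hgd p⟩
    exact this.mono (Set.subset_univ _)
  have hmul : ∀ a, (a - p) * dslope g p a = g a := fun a => by
    have := sub_smul_dslope g p a
    rwa [hgp, sub_zero, smul_eq_mul] at this
  have hdp : 0 < dslope g p p := by
    rw [dslope_same]
    have : HasDerivAt g (1 - deriv f p) p := (hasDerivAt_id p).sub (hf p).hasDerivAt
    rw [this.deriv]
    linarith
  have hne : ∀ a ∈ Set.Icc (0 : ℝ) 1, dslope g p a ≠ 0 := by
    intro a ha h
    have hga : g a = 0 := by rw [← hmul a, h, mul_zero]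
    have hfa : f a = a := by simp only [hg] at hga; linarith
    rcases eq_or_lt_of_le ha.1 with h' | h'
    · rw [← h'] at hfa; linarith
    rcases eq_or_lt_of_le ha.2 with h'' | h''
    · rw [h''] at hfa; linarith
    rw [huniq a ⟨h', h''⟩ hfa] at h
    exact hdp.ne' h
  have hpos : ∀ a ∈ Set.Icc (0 : ℝ) 1, 0 < dslope g p a := by
    intro a ha
    by_contra hneg
    have hpI : p ∈ Set.Icc (0 : ℝ) 1 := ⟨hp.1.le, hp.2.le⟩
    have := isPreconnected_Icc.intermediate_value ha hpI hcont
    obtain ⟨x, hx, hx0⟩ := this ⟨not_lt.mp hneg, hdp.le⟩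
    exact hne x hx hx0
  obtain ⟨m, hm, hmin⟩ := isCompact_Icc.exists_isMinOn (Set.nonempty_Icc.mpr zero_le_one) hcont
  refine ⟨dslope g p m, hpos m hm, fun a ha => ?_⟩
  have h2 : dslope g p m ≤ dslope g p a := hmin ha
  have h3 : (a - p) * (a - f a) = dslope g p a * (a - p) ^ 2 := by
    have := hmul a
    simp only [hg] at this ⊢
    rw [← this]; ring
  rw [h3]
  gcongr

variable {J : Type} (E : J → Type) [∀ j, DecidableEq (E j)] [∀ j, Fintype (E j)] [Fintype J]
  (β : J → ℝ)

/-- The mean-field function `Φ`. -/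
def meanField (a : ℝ) : ℝ := ∑ j, β j * Fintype.card (E j) * a ^ (Fintype.card (E j) - 1)

/-- The derivative of the mean-field function. -/
def meanFieldDeriv (a : ℝ) : ℝ :=
  ∑ j, β j * Fintype.card (E j) * ((Fintype.card (E j) - 1 : ℕ) * a ^ (Fintype.card (E j) - 2))

/-- The subcriticality assumptions, with a quantitative form of the uniqueness of the
fixed point `p`. -/
structure IsSubcritical (p c : ℝ) : Prop where
  ferromagnetic : ∀ j, 0 ≤ β j ∨ Fintype.card (E j) = 1
  mem : p ∈ Set.Ioo (0 : ℝ) 1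
  fixed : Real.sigmoid (2 * meanField E β p) = p
  pos : 0 < c
  repel : ∀ a ∈ Set.Icc (0 : ℝ) 1,
    c * (a - p) ^ 2 ≤ (a - p) * (a - Real.sigmoid (2 * meanField E β a))
  slope : 2 * p * (1 - p) * meanFieldDeriv E β p < 1

namespace PlacementSystem

variable {E β} {I : Type} [Fintype I] [DecidableEq I] {K : ℝ} (S : PlacementSystem E I K)

lemma count_insert (j : J) (r : E j) {A : Finset (E j)} {e : E j} (he : e ∉ A) (t : I)
    (y : I → Bool) :
    S.count j r (insert e A) t y = S.fluct β j r A e t y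
      + S.rooted j r t fun φ => S.prob β (S.place j φ e) y * S.mon j A φ y := by
  unfold count fluct
  rw [← S.rooted_add]
  refine S.rooted_congr fun φ _ => ?_
  rw [S.mon_insert he]; ring

lemma count_empty (j : J) (r : E j) (t : I) (y : I → Bool) : S.count j r ∅ t y = S.κ j := by
  simp [count, mon, rooted_const]

lemma kappa_nonneg (j : J) (r : E j) (t : I) : 0 ≤ S.κ j := by
  rw [← S.deg j r t]
  exact mul_nonneg (S.c_nonneg j) (Finset.sum_nonneg fun _ _ => by split_ifs <;> norm_num)

lemma IsTypical.count_le {y : I → Bool} (hy : S.IsTypical β y) {a : ℝ} (ha1 : a ≤ 1)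
    (ha0 : 0 ≤ a) (ha : ∀ s, S.prob β s y ≤ a) (j : J) (r : E j) (A : Finset (E j)) (hr : r ∉ A)
    (t : I) : S.count j r A t y ≤ S.κ j * a ^ A.card + A.card * S.θ := by
  induction A using Finset.induction_on with
  | empty => simp [count_empty]
  | insert e A he ih =>
    rw [Finset.mem_insert, not_or] at hr
    rw [S.count_insert (β := β) j r he, Finset.card_insert_of_notMem he]
    have h1 := (abs_le.mp (hy j r A e t (Ne.symm hr.1) hr.2 he)).2
    have h2 : (S.rooted j r t fun φ => S.prob β (S.place j φ e) y * S.mon j A φ y)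
        ≤ a * S.count j r A t y := by
      rw [count, ← S.rooted_const_mul]
      exact S.rooted_mono fun φ _ => mul_le_mul_of_nonneg_right (ha _) (S.mon_nonneg j A φ y)
    have h3 := mul_le_mul_of_nonneg_left (ih hr.2) ha0
    have h4 : a * (A.card * S.θ) ≤ A.card * S.θ :=
      mul_le_of_le_one_left (mul_nonneg (by positivity) S.theta_pos.le) ha1
    push_cast
    rw [pow_succ]
    linarith

lemma IsTypical.le_count {y : I → Bool} (hy : S.IsTypical β y) {a : ℝ} (ha1 : a ≤ 1)
    (ha0 : 0 ≤ a) (ha : ∀ s, a ≤ S.prob β s y) (j : J) (r : E j) (A : Finset (E j)) (hr : r ∉ A)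
    (t : I) : S.κ j * a ^ A.card - A.card * S.θ ≤ S.count j r A t y := by
  induction A using Finset.induction_on with
  | empty => simp [count_empty]
  | insert e A he ih =>
    rw [Finset.mem_insert, not_or] at hr
    rw [S.count_insert (β := β) j r he, Finset.card_insert_of_notMem he]
    have h1 := (abs_le.mp (hy j r A e t (Ne.symm hr.1) hr.2 he)).1
    have h2 : a * S.count j r A t y
        ≤ (S.rooted j r t fun φ => S.prob β (S.place j φ e) y * S.mon j A φ y) := by
      rw [count, ← S.rooted_const_mul]
      exact S.rooted_mono fun φ _ => mul_le_mul_of_nonneg_right (ha _) (S.mon_nonneg j A φ y)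
    have h3 := mul_le_mul_of_nonneg_left (ih hr.2) ha0
    have h4 : a * (A.card * S.θ) ≤ A.card * S.θ :=
      mul_le_of_le_one_left (mul_nonneg (by positivity) S.theta_pos.le) ha1
    push_cast
    rw [pow_succ]
    linarith

lemma inv_le_theta : 1 / S.u ^ 12 ≤ S.θ := by
  rw [θ, one_div]
  exact inv_anti₀ (pow_pos S.u_pos 5) (pow_le_pow_right₀ S.one_le_u (by norm_num))

lemma abs_kappa_sub_two_le_theta (hK : 0 ≤ K) (j : J) : |S.κ j - 2| ≤ K * S.θ := by
  refine (S.abs_kappa_sub_two_le j).trans ?_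
  rw [← mul_one_div]
  exact mul_le_mul_of_nonneg_left S.inv_le_theta hK

/-- If every rooted count is close to its mean-field value at `a` up to `m θ`, from above for
ferromagnetic terms, then the local field is at most the mean field up to order `θ`. -/
lemma field_sub_le (hβ : ∀ j, 0 ≤ β j ∨ Fintype.card (E j) = 1) (hK : 0 ≤ K) {a M : ℝ}
    (hM : 0 ≤ M) (ha : a ∈ Set.Icc (0 : ℝ) 1) {s : I} {y : I → Bool} (ε : ℝ) (hε : |ε| = 1)
    (hc : ∀ j r, ε * (S.count j r (univ.erase r) s y - S.κ j * a ^ (Fintype.card (E j) - 1))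
      ≤ M * S.θ) :
    ε * (S.field β s y - 2 * meanField E β a)
      ≤ (∑ j, |β j| * Fintype.card (E j) * (M + K)) * S.θ := by
  have hθ := S.theta_pos
  rw [field_eq, meanField, Finset.mul_sum, ← Finset.sum_sub_distrib, Finset.mul_sum,
    Finset.sum_mul]
  refine Finset.sum_le_sum fun j _ => ?_
  have hpow : 0 ≤ a ^ (Fintype.card (E j) - 1) := pow_nonneg ha.1 _
  have hpow1 : a ^ (Fintype.card (E j) - 1) ≤ 1 := pow_le_one₀ ha.1 ha.2
  have hk : ε * ((S.κ j - 2) * a ^ (Fintype.card (E j) - 1)) ≤ K * S.θ := by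
    refine (le_abs_self _).trans ?_
    rw [abs_mul, hε, one_mul, abs_mul, abs_of_nonneg hpow]
    exact (mul_le_of_le_one_right (abs_nonneg _) hpow1).trans (S.abs_kappa_sub_two_le_theta hK j)
  rcases hβ j with h | h
  · have h1 : ε * (β j * ∑ r, S.count j r (univ.erase r) s y
        - 2 * (β j * Fintype.card (E j) * a ^ (Fintype.card (E j) - 1)))
        = β j * ∑ r, (ε * (S.count j r (univ.erase r) s y
          - S.κ j * a ^ (Fintype.card (E j) - 1))
          + ε * ((S.κ j - 2) * a ^ (Fintype.card (E j) - 1))) := by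
      rw [Finset.sum_add_distrib, ← Finset.mul_sum, Finset.sum_sub_distrib, Finset.sum_const,
        Finset.sum_const, Finset.card_univ, nsmul_eq_mul, nsmul_eq_mul]
      ring
    rw [h1, abs_of_nonneg h]
    calc _ ≤ β j * ∑ _r : E j, (M * S.θ + K * S.θ) := by
          exact mul_le_mul_of_nonneg_left
            (Finset.sum_le_sum fun r _ => add_le_add (hc j r) hk) h
      _ = _ := by
          rw [Finset.sum_const, Finset.card_univ, nsmul_eq_mul]; ring
  · obtain ⟨e, he⟩ := Fintype.card_eq_one_iff.mp h
    have hun : (univ : Finset (E j)) = {e} := by ext x; simp [he x]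
    have h2 : ∑ r, S.count j r (univ.erase r) s y = S.κ j := by
      rw [hun, Finset.sum_singleton]
      have : ({e} : Finset (E j)).erase e = ∅ := by simp
      rw [this, count_empty]
    rw [h2, h]
    simp only [Nat.cast_one, mul_one, Nat.sub_self, pow_zero]
    calc _ ≤ |ε * (β j * S.κ j - 2 * β j)| := le_abs_self _
      _ = |β j| * |S.κ j - 2| := by
          rw [abs_mul, hε, one_mul, ← abs_mul]; congr 1; ring
      _ ≤ |β j| * ((M + K) * S.θ) := by
          gcongr
          refine (S.abs_kappa_sub_two_le_theta hK j).trans ?_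
          gcongr
          linarith
      _ = _ := by ring

/-- The constant in the mean-field approximation of local fields. -/
def fieldConst (E : J → Type) [∀ j, Fintype (E j)] (β : J → ℝ) (K : ℝ) : ℝ :=
  ∑ j, |β j| * Fintype.card (E j) * ((∑ j, (Fintype.card (E j) : ℝ)) + K)

lemma fieldConst_nonneg (hK : 0 ≤ K) : 0 ≤ fieldConst E β K :=
  Finset.sum_nonneg fun j _ => by positivity

lemma card_erase_le_sum (j : J) (r : E j) :
    ((univ.erase r).card : ℝ) ≤ ∑ j, (Fintype.card (E j) : ℝ) := by
  have h1 : ((univ.erase r).card : ℝ) ≤ Fintype.card (E j) := by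
    exact_mod_cast Finset.card_le_univ _
  exact h1.trans (Finset.single_le_sum (f := fun j => (Fintype.card (E j) : ℝ))
    (fun _ _ => by positivity) (Finset.mem_univ j))

lemma IsTypical.prob_le {p c : ℝ} (hs : IsSubcritical E β p c) (hK : 0 ≤ K) {y : I → Bool}
    (hy : S.IsTypical β y) (s : I) : S.prob β s y ≤ p + fieldConst E β K / c * S.θ := by
  obtain ⟨m, _, hm⟩ := Finset.exists_max_image univ (fun s => S.prob β s y) ⟨s, Finset.mem_univ s⟩
  refine (hm s (Finset.mem_univ s)).trans ?_
  set a := S.prob β m y with ha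
  have ha0 : 0 ≤ a := S.prob_nonneg β m y
  have ha1 : a ≤ 1 := S.prob_le_one β m y
  have hθ := S.theta_pos
  have hC := fieldConst_nonneg (E := E) (β := β) hK
  have h1 := S.field_sub_le hs.ferromagnetic hK (M := ∑ j, (Fintype.card (E j) : ℝ))
    (by positivity) ⟨ha0, ha1⟩ (s := m) (y := y) 1 (by simp) fun j r => by
      have := hy.count_le S ha1 ha0 (fun s => hm s (Finset.mem_univ s)) j r (univ.erase r)
        (Finset.notMem_erase r _) m
      have hle := mul_le_mul_of_nonneg_right (card_erase_le_sum (E := E) j r) hθ.le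
      rw [Finset.card_erase_of_mem (Finset.mem_univ r), Finset.card_univ] at this hle
      linarith
  rw [one_mul] at h1
  change _ ≤ fieldConst E β K * S.θ at h1
  have h2 : a - Real.sigmoid (2 * meanField E β a) ≤ fieldConst E β K * S.θ := by
    have h3 : a ≤ Real.sigmoid (2 * meanField E β a + fieldConst E β K * S.θ) :=
      Real.sigmoid_strictMono.monotone (by simp only [field] at h1 ⊢; linarith)
    have h4 := (le_abs_self _).trans (abs_sigmoid_sub_le
      (2 * meanField E β a + fieldConst E β K * S.θ) (2 * meanField E β a))
    rw [add_sub_cancel_left, abs_of_nonneg (by positivity)] at h4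
    linarith
  by_contra hlt
  push Not at hlt
  have hpa : 0 < a - p := by
    have : 0 ≤ fieldConst E β K / c * S.θ := by have := hs.pos; positivity
    linarith
  have h5 := hs.repel a ⟨ha0, ha1⟩
  have h6 : c * (a - p) ≤ fieldConst E β K * S.θ := by
    have : (a - p) * (c * (a - p)) ≤ (a - p) * (fieldConst E β K * S.θ) := by
      have := mul_le_mul_of_nonneg_left h2 hpa.le
      linarith
    exact le_of_mul_le_mul_left this hpa
  have h7 : c * (fieldConst E β K / c * S.θ) = fieldConst E β K * S.θ := by
    have := hs.pos.ne'
    field_simp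
  have h8 := mul_lt_mul_of_pos_left (show fieldConst E β K / c * S.θ < a - p by linarith) hs.pos
  linarith

lemma IsTypical.le_prob {p c : ℝ} (hs : IsSubcritical E β p c) (hK : 0 ≤ K) {y : I → Bool}
    (hy : S.IsTypical β y) (s : I) : p - fieldConst E β K / c * S.θ ≤ S.prob β s y := by
  obtain ⟨m, _, hm⟩ := Finset.exists_min_image univ (fun s => S.prob β s y) ⟨s, Finset.mem_univ s⟩
  refine le_trans ?_ (hm s (Finset.mem_univ s))
  set a := S.prob β m y with ha
  have ha0 : 0 ≤ a := S.prob_nonneg β m y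
  have ha1 : a ≤ 1 := S.prob_le_one β m y
  have hθ := S.theta_pos
  have hC := fieldConst_nonneg (E := E) (β := β) hK
  have h1 := S.field_sub_le hs.ferromagnetic hK (M := ∑ j, (Fintype.card (E j) : ℝ))
    (by positivity) ⟨ha0, ha1⟩ (s := m) (y := y) (-1) (by simp) fun j r => by
      have := hy.le_count S ha1 ha0 (fun s => hm s (Finset.mem_univ s)) j r (univ.erase r)
        (Finset.notMem_erase r _) m
      have hle := mul_le_mul_of_nonneg_right (card_erase_le_sum (E := E) j r) hθ.le
      rw [Finset.card_erase_of_mem (Finset.mem_univ r), Finset.card_univ] at this hle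
      linarith
  rw [neg_one_mul] at h1
  change _ ≤ fieldConst E β K * S.θ at h1
  have h2 : Real.sigmoid (2 * meanField E β a) - a ≤ fieldConst E β K * S.θ := by
    have h3 : Real.sigmoid (2 * meanField E β a - fieldConst E β K * S.θ) ≤ a :=
      Real.sigmoid_strictMono.monotone (by simp only [field] at h1 ⊢; linarith)
    have h4 := (le_abs_self _).trans (abs_sigmoid_sub_le (2 * meanField E β a)
      (2 * meanField E β a - fieldConst E β K * S.θ))
    rw [sub_sub_cancel, abs_of_nonneg (by positivity)] at h4
    linarith
  by_contra hlt
  push Not at hlt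
  have hpa : 0 < p - a := by
    have : 0 ≤ fieldConst E β K / c * S.θ := by have := hs.pos; positivity
    linarith
  have h5 := hs.repel a ⟨ha0, ha1⟩
  have h6 : c * (p - a) ≤ fieldConst E β K * S.θ := by
    have : (p - a) * (c * (p - a)) ≤ (p - a) * (fieldConst E β K * S.θ) := by
      have := mul_le_mul_of_nonneg_left h2 hpa.le
      linarith
    exact le_of_mul_le_mul_left this hpa
  have h7 : c * (fieldConst E β K / c * S.θ) = fieldConst E β K * S.θ := by
    have := hs.pos.ne'
    field_simp
  have h8 := mul_lt_mul_of_pos_left (show fieldConst E β K / c * S.θ < p - a by linarith) hs.pos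
  linarith

lemma IsTypical.abs_prob_sub_le {p c : ℝ} (hs : IsSubcritical E β p c) (hK : 0 ≤ K)
    {y : I → Bool} (hy : S.IsTypical β y) (s : I) :
    |S.prob β s y - p| ≤ fieldConst E β K / c * S.θ := by
  rw [abs_le]
  constructor
  · linarith [hy.le_prob S hs hK s]
  · linarith [hy.prob_le S hs hK s]

/-- A count constant: `|count − κ p ^ |A|| ≤ |A| * countConst * θ`. -/
def countConst (E : J → Type) [∀ j, Fintype (E j)] (β : J → ℝ) (K c : ℝ) : ℝ :=
  1 + (K + 2) * (fieldConst E β K / c)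

lemma IsTypical.abs_count_sub_le {p c : ℝ} (hs : IsSubcritical E β p c) (hK : 0 ≤ K)
    {y : I → Bool} (hy : S.IsTypical β y) (j : J) (r : E j) (A : Finset (E j)) (hr : r ∉ A)
    (t : I) :
    |S.count j r A t y - S.κ j * p ^ A.card| ≤ A.card * (countConst E β K c * S.θ) := by
  induction A using Finset.induction_on with
  | empty => simp [count_empty]
  | insert e A he ih =>
    rw [Finset.mem_insert, not_or] at hr
    have h1 := hy j r A e t (Ne.symm hr.1) hr.2 he
    have h2 : |S.rooted j r t fun φ => (S.prob β (S.place j φ e) y - p) * S.mon j A φ y|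
        ≤ (K + 2) * (fieldConst E β K / c * S.θ) := by
      refine (S.abs_rooted_le (a := fieldConst E β K / c * S.θ) fun φ => ?_).trans ?_
      · rw [abs_mul]
        exact (mul_le_of_le_one_right (abs_nonneg _) (S.abs_mon_le_one j A φ y)).trans
          (hy.abs_prob_sub_le S hs hK _)
      · have := fieldConst_nonneg (E := E) (β := β) hK
        have := hs.pos
        have := S.theta_pos
        gcongr
        exact S.kappa_le hK j
    have h3 : (S.rooted j r t fun φ => S.prob β (S.place j φ e) y * S.mon j A φ y)
        = (S.rooted j r t fun φ => (S.prob β (S.place j φ e) y - p) * S.mon j A φ y)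
          + p * S.count j r A t y := by
      rw [count, ← S.rooted_const_mul, ← S.rooted_add]
      exact S.rooted_congr fun φ _ => by ring
    have h4 : |p * (S.count j r A t y - S.κ j * p ^ A.card)|
        ≤ A.card * (countConst E β K c * S.θ) := by
      rw [abs_mul, abs_of_pos hs.mem.1]
      exact (mul_le_of_le_one_left (abs_nonneg _) hs.mem.2.le).trans (ih hr.2)
    rw [S.count_insert (β := β) j r he, Finset.card_insert_of_notMem he, h3]
    have h5 : S.fluct β j r A e t y
        + ((S.rooted j r t fun φ => (S.prob β (S.place j φ e) y - p) * S.mon j A φ y)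
          + p * S.count j r A t y) - S.κ j * p ^ (A.card + 1)
        = S.fluct β j r A e t y
        + (S.rooted j r t fun φ => (S.prob β (S.place j φ e) y - p) * S.mon j A φ y)
          + p * (S.count j r A t y - S.κ j * p ^ A.card) := by ring
    rw [h5]
    refine (abs_add_three _ _ _).trans ?_
    push_cast
    have h6 : countConst E β K c * S.θ = S.θ + (K + 2) * (fieldConst E β K / c * S.θ) := by
      unfold countConst; ring
    linarith

end PlacementSystem

open PlacementSystem in
lemma exists_abs_sub_le_of_isTypical {p c K : ℝ} (hs : IsSubcritical E β p c) (hK : 0 ≤ K) :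
    ∃ C : ℝ, 0 ≤ C ∧ ∀ (I : Type) [Fintype I] [DecidableEq I] (S : PlacementSystem E I K)
      (y : I → Bool), S.IsTypical β y →
      (∀ s, |S.prob β s y - p| ≤ C * S.θ) ∧
      (∀ j r A t, r ∉ A → |S.count j r A t y - S.κ j * p ^ A.card| ≤ C * S.θ) ∧
      (∀ s, |S.field β s y - 2 * meanField E β p| ≤ C * S.θ) := by
  set B := fieldConst E β K / c with hB
  have hB0 : 0 ≤ B := div_nonneg (fieldConst_nonneg hK) hs.pos.le
  set M := (∑ j, (Fintype.card (E j) : ℝ)) * countConst E β K c with hMdef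
  have hcc : 0 ≤ countConst E β K c := by unfold countConst; positivity
  have hM : 0 ≤ M := by positivity
  set D := ∑ j, |β j| * Fintype.card (E j) * (M + K) with hD
  have hD0 : 0 ≤ D := Finset.sum_nonneg fun j _ => by positivity
  refine ⟨B + M + D, by positivity, ?_⟩
  intro I _ _ S y hy
  have hθ := S.theta_pos
  have hcount : ∀ j r A t, r ∉ A → |S.count j r A t y - S.κ j * p ^ A.card| ≤ M * S.θ := by
    intro j r A t hr
    refine (hy.abs_count_sub_le S hs hK j r A hr t).trans ?_
    rw [← mul_assoc]
    refine mul_le_mul_of_nonneg_right (mul_le_mul_of_nonneg_right ?_ hcc) hθ.le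
    have h1 : (A.card : ℝ) ≤ Fintype.card (E j) := by exact_mod_cast Finset.card_le_univ A
    exact h1.trans (Finset.single_le_sum (f := fun j => (Fintype.card (E j) : ℝ))
      (fun _ _ => by positivity) (Finset.mem_univ j))
  have hle : ∀ x, x = B ∨ x = M ∨ x = D → x * S.θ ≤ (B + M + D) * S.θ := by
    rintro x (rfl | rfl | rfl) <;> gcongr <;> linarith
  refine ⟨fun s => (hy.abs_prob_sub_le S hs hK s).trans (hle _ (by simp [hB])),
    fun j r A t hr => (hcount j r A t hr).trans (hle _ (by simp)), fun s => ?_⟩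
  have hkey : ∀ ε : ℝ, |ε| = 1 → ε * (S.field β s y - 2 * meanField E β p) ≤ D * S.θ := by
    intro ε hε
    refine S.field_sub_le hs.ferromagnetic hK hM ⟨hs.mem.1.le, hs.mem.2.le⟩ ε hε fun j r => ?_
    refine (le_abs_self _).trans ?_
    rw [abs_mul, hε, one_mul]
    have := hcount j r (univ.erase r) s (Finset.notMem_erase r _)
    rwa [Finset.card_erase_of_mem (Finset.mem_univ r), Finset.card_univ] at this
  refine le_trans ?_ (hle D (by simp))
  rw [abs_le]
  constructor
  · linarith [hkey (-1) (by simp)]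
  · linarith [hkey 1 (by simp)]

end ErgmCLT

namespace ErgmCLT

variable {J : Type} {E : J → Type} [∀ j, DecidableEq (E j)] [∀ j, Fintype (E j)] [Fintype J]
  {β : J → ℝ} {K : ℝ}

section Split

variable {I : Type} [Fintype I] [DecidableEq I] (S : PlacementSystem E I K)

/-- `V` splits into a part of small second moment and a part that is of moderate size and has
small discrete derivatives. -/
def SplitBound (β : J → ℝ) (C : ℝ) (V : (I → Bool) → ℝ) : Prop :=
  ∃ V₁ V₂ : (I → Bool) → ℝ, (∀ y, V y = V₁ y + V₂ y) ∧
    gibbsExp (S.ham β) (fun y => V₁ y ^ 2) ≤ C * S.u ^ 18 ∧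
    (∀ y, |V₂ y| ≤ C * S.u ^ 14) ∧ ∀ s y, |cubeDiff s V₂ y| ≤ C * S.θ

variable {S}

lemma SplitBound.add {C C' : ℝ} {V V' : (I → Bool) → ℝ} (hC : 0 ≤ C) (hC' : 0 ≤ C')
    (hV : SplitBound S β C V) (hV' : SplitBound S β C' V') :
    SplitBound S β (2 * C + 2 * C') fun y => V y + V' y := by
  obtain ⟨V₁, V₂, h0, h1, h2, h3⟩ := hV
  obtain ⟨V₁', V₂', h0', h1', h2', h3'⟩ := hV'
  have hu := S.u_pos
  have hθ := S.theta_pos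
  refine ⟨fun y => V₁ y + V₁' y, fun y => V₂ y + V₂' y, fun y => ?_, ?_, fun y => ?_,
    fun s y => ?_⟩
  · simp only [h0, h0']; ring
  · have : gibbsExp (S.ham β) (fun y => (V₁ y + V₁' y) ^ 2)
        ≤ gibbsExp (S.ham β) (fun y => 2 * V₁ y ^ 2 + 2 * V₁' y ^ 2) :=
      gibbsExp_mono fun y => by nlinarith [sq_nonneg (V₁ y - V₁' y)]
    rw [gibbsExp_add, gibbsExp_const_mul, gibbsExp_const_mul] at this
    linarith
  · have h4 := abs_add_le (V₂ y) (V₂' y)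
    have h5 : 0 ≤ C * S.u ^ 14 := by positivity
    have h6 : 0 ≤ C' * S.u ^ 14 := by positivity
    linarith [h2 y, h2' y]
  · have h4 : cubeDiff s (fun y => V₂ y + V₂' y) y = cubeDiff s V₂ y + cubeDiff s V₂' y := by
      simp only [cubeDiff]; ring
    have h5 : 0 ≤ C * S.θ := by positivity
    have h6 : 0 ≤ C' * S.θ := by positivity
    rw [h4]
    linarith [h3 s y, h3' s y, abs_add_le (cubeDiff s V₂ y) (cubeDiff s V₂' y)]

lemma SplitBound.const_mul {C M a : ℝ} {V : (I → Bool) → ℝ} (ha : |a| ≤ M)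
    (hV : SplitBound S β C V) : SplitBound S β ((M + M ^ 2) * C) fun y => a * V y := by
  obtain ⟨V₁, V₂, h0, h1, h2, h3⟩ := hV
  have hu := S.u_pos
  have hθ := S.theta_pos
  have hM : 0 ≤ M := (abs_nonneg a).trans ha
  have hle : M ≤ M + M ^ 2 := by nlinarith
  refine ⟨fun y => a * V₁ y, fun y => a * V₂ y, fun y => ?_, ?_, fun y => ?_, fun s y => ?_⟩
  · simp only [h0]; ring
  · simp only [mul_pow]
    rw [gibbsExp_const_mul]
    calc _ ≤ (M + M ^ 2) * (C * S.u ^ 18) := by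
          refine mul_le_mul ?_ h1 (gibbsExp_nonneg fun y => sq_nonneg _) (by positivity)
          have := sq_le_sq' (abs_le.mp ha).1 (abs_le.mp ha).2
          linarith
      _ = _ := by ring
  · rw [abs_mul]
    calc _ ≤ (M + M ^ 2) * (C * S.u ^ 14) := by
          exact mul_le_mul (ha.trans hle) (h2 y) (abs_nonneg _) (by positivity)
      _ = _ := by ring
  · have h4 : cubeDiff s (fun y => a * V₂ y) y = a * cubeDiff s V₂ y := by
      simp only [cubeDiff]; ring
    rw [h4, abs_mul]
    calc _ ≤ (M + M ^ 2) * (C * S.θ) := by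
          exact mul_le_mul (ha.trans hle) (h3 s y) (abs_nonneg _) (by positivity)
      _ = _ := by ring

lemma splitBound_of_smooth {C : ℝ} (hC : 0 ≤ C) {V : (I → Bool) → ℝ}
    (h1 : ∀ y, |V y| ≤ C * S.u ^ 14) (h2 : ∀ s y, |cubeDiff s V y| ≤ C * S.θ) :
    SplitBound S β C V := by
  have := S.u_pos
  refine ⟨fun _ => 0, V, fun y => by simp, ?_, h1, h2⟩
  simp only [ne_eq, OfNat.ofNat_ne_zero, not_false_eq_true, zero_pow, gibbsExp_const]
  positivity

lemma splitBound_of_sq {C : ℝ} (hC : 0 ≤ C) {V : (I → Bool) → ℝ}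
    (h : gibbsExp (S.ham β) (fun y => V y ^ 2) ≤ C * S.u ^ 18) : SplitBound S β C V := by
  have := S.u_pos
  have := S.theta_pos
  refine ⟨V, fun _ => 0, fun y => by simp, h, fun y => ?_, fun s y => ?_⟩
  · rw [abs_zero]; positivity
  · simp only [cubeDiff, sub_self, abs_zero]; positivity

lemma card_mul_theta_sq_le : (Fintype.card I : ℝ) * S.θ ^ 2 ≤ S.u ^ 14 := by
  have hu := S.u_pos
  calc _ ≤ S.u ^ 24 * S.θ ^ 2 := by gcongr; exact S.card_le
    _ = _ := by unfold PlacementSystem.θ; field_simp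

lemma splitBound_of_truncation {C c : ℝ} (hC : 0 ≤ C) (hc0 : 0 ≤ c)
    (hc : gibbsExp (S.ham β) (S.atypical β) ≤ c / S.u ^ 48) {f g : I → (I → Bool) → ℝ}
    (hfg : ∀ y, S.IsTypical β y → ∀ t, f t y = g t y) (hf : ∀ t y, |f t y| ≤ C)
    (hg : ∀ t y, |g t y| ≤ C * S.θ ^ 2) (hgd : ∀ s y, ∑ t, |cubeDiff s (g t) y| ≤ C * S.θ) :
    SplitBound S β (C + 4 * C ^ 2 * c) fun y => ∑ t, f t y := by
  have hu := S.u_pos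
  have hu1 := S.one_le_u
  have hθ := S.theta_pos
  have hle : C ≤ C + 4 * C ^ 2 * c := by
    have : 0 ≤ 4 * C ^ 2 * c := by positivity
    linarith
  refine ⟨fun y => ∑ t, (f t y - g t y), fun y => ∑ t, g t y, fun y => ?_, ?_, fun y => ?_,
    fun s y => ?_⟩
  · simp only [Finset.sum_sub_distrib]; ring
  · refine (S.gibbsExp_le_of_typical hc le_rfl (b := 4 * C ^ 2 * S.u ^ 48) (by positivity)
      (fun y hy => ?_) fun y => ?_).trans ?_
    · simp [hfg y hy]
    · have h1 : |∑ t, (f t y - g t y)| ≤ 2 * C * S.u ^ 24 := by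
        calc _ ≤ ∑ t, |f t y - g t y| := Finset.abs_sum_le_sum_abs _ _
          _ ≤ ∑ _t : I, 2 * C := by
            refine Finset.sum_le_sum fun t _ => (abs_sub _ _).trans ?_
            have : C * S.θ ^ 2 ≤ C :=
              mul_le_of_le_one_right hC (pow_le_one₀ hθ.le S.theta_le_one)
            linarith [hf t y, hg t y]
          _ = Fintype.card I * (2 * C) := by
            rw [Finset.sum_const, Finset.card_univ, nsmul_eq_mul]
          _ ≤ S.u ^ 24 * (2 * C) := by gcongr; exact S.card_le
          _ = _ := by ring
      calc _ = |∑ t, (f t y - g t y)| ^ 2 := (sq_abs _).symm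
        _ ≤ (2 * C * S.u ^ 24) ^ 2 := by gcongr
        _ = _ := by ring
    · have h1 : 4 * C ^ 2 * S.u ^ 48 * (c / S.u ^ 48) = 4 * C ^ 2 * c := by field_simp
      rw [h1, zero_add]
      calc 4 * C ^ 2 * c ≤ (C + 4 * C ^ 2 * c) * 1 := by linarith
        _ ≤ _ := by
          gcongr
          exact one_le_pow₀ hu1
  · calc _ ≤ ∑ t, |g t y| := Finset.abs_sum_le_sum_abs _ _
      _ ≤ ∑ _t : I, C * S.θ ^ 2 := Finset.sum_le_sum fun t _ => hg t y
      _ = C * (Fintype.card I * S.θ ^ 2) := by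
          rw [Finset.sum_const, Finset.card_univ, nsmul_eq_mul]; ring
      _ ≤ (C + 4 * C ^ 2 * c) * S.u ^ 14 := by
          gcongr
          exact card_mul_theta_sq_le
  · rw [cubeDiff_sum]
    refine (Finset.abs_sum_le_sum_abs _ _).trans ((hgd s y).trans ?_)
    gcongr

end Split

/-- Truncation of a real number to `[-r, r]`. -/
def clamp (r x : ℝ) : ℝ := max (-r) (min r x)

lemma abs_clamp_le {r : ℝ} (hr : 0 ≤ r) (x : ℝ) : |clamp r x| ≤ r := by
  unfold clamp
  rw [abs_le]
  exact ⟨le_max_left _ _, max_le (by linarith) (min_le_left _ _)⟩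

lemma clamp_eq_self {r x : ℝ} (h : |x| ≤ r) : clamp r x = x := by
  unfold clamp
  rw [min_eq_right (abs_le.mp h).2, max_eq_right (abs_le.mp h).1]

lemma abs_clamp_sub_clamp_le (r x y : ℝ) : |clamp r x - clamp r y| ≤ |x - y| := by
  unfold clamp
  refine (abs_max_sub_max_le_max _ _ _ _).trans ?_
  rw [sub_self, abs_zero, max_eq_right (abs_nonneg _)]
  refine (abs_min_sub_min_le_max _ _ _ _).trans ?_
  rw [sub_self, abs_zero, max_eq_right (abs_nonneg _)]

/-- The error in the linear approximation of the sigmoid function at `d`. -/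
def sigmoidRem (d x : ℝ) : ℝ :=
  Real.sigmoid (d + x) - Real.sigmoid d - Real.sigmoid d * (1 - Real.sigmoid d) * x

lemma abs_sigmoidRem_sub_le {d r x y : ℝ} (hx : |x| ≤ r) (hy : |y| ≤ r) :
    |sigmoidRem d x - sigmoidRem d y| ≤ r * |x - y| := by
  have hder : ∀ z, HasDerivAt (sigmoidRem d) (Real.sigmoid (d + z) * (1 - Real.sigmoid (d + z))
      - Real.sigmoid d * (1 - Real.sigmoid d)) z := by
    intro z
    have h1 : HasDerivAt (fun x => Real.sigmoid (d + x))
        (Real.sigmoid (d + z) * (1 - Real.sigmoid (d + z))) z := by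
      simpa using (Real.hasDerivAt_sigmoid (d + z)).comp_const_add d z
    have h2 := (h1.sub_const (Real.sigmoid d)).sub
      ((hasDerivAt_id z).const_mul (Real.sigmoid d * (1 - Real.sigmoid d)))
    rw [mul_one] at h2
    exact h2
  have := Convex.norm_image_sub_le_of_norm_hasDerivWithin_le (f := sigmoidRem d) (C := r)
    (s := Set.Icc (-r) r) (x := y) (y := x) (fun z _ => (hder z).hasDerivWithinAt)
    (fun z hz => ?_) (convex_Icc _ _) (abs_le.mp hy) (abs_le.mp hx)
  · simpa using this
  · have h1 := abs_sigmoid_sub_le (d + z) d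
    rw [add_sub_cancel_left] at h1
    have hz' : |z| ≤ r := abs_le.mpr hz
    have h2 : Real.sigmoid (d + z) * (1 - Real.sigmoid (d + z))
        - Real.sigmoid d * (1 - Real.sigmoid d)
        = (Real.sigmoid (d + z) - Real.sigmoid d)
          * (1 - Real.sigmoid (d + z) - Real.sigmoid d) := by ring
    rw [h2, Real.norm_eq_abs, abs_mul]
    refine (mul_le_of_le_one_right (abs_nonneg _) ?_).trans (h1.trans hz')
    rw [abs_le]
    constructor <;> linarith [Real.sigmoid_nonneg d, Real.sigmoid_le_one d,
      Real.sigmoid_nonneg (d + z), Real.sigmoid_le_one (d + z)]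

lemma sigmoidRem_zero (d : ℝ) : sigmoidRem d 0 = 0 := by simp [sigmoidRem]

lemma abs_sigmoidRem_le (d x : ℝ) : |sigmoidRem d x| ≤ |x| ^ 2 := by
  have := abs_sigmoidRem_sub_le (d := d) (le_refl |x|) (y := 0) (by simp)
  rw [sigmoidRem_zero, sub_zero, sub_zero] at this
  rwa [sq]

/-- Uniform `SplitBound` for a function defined for all systems of placements. -/
def Negligible (E : J → Type) [∀ j, DecidableEq (E j)] [∀ j, Fintype (E j)] (β : J → ℝ) (K : ℝ)
    (V : ∀ (I : Type) [Fintype I] [DecidableEq I], PlacementSystem E I K → (I → Bool) → ℝ) :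
    Prop :=
  ∃ C : ℝ, 0 ≤ C ∧ ∀ (I : Type) [Fintype I] [DecidableEq I] (S : PlacementSystem E I K),
    SplitBound S β C (V I S)

lemma Negligible.congr
    {V V' : ∀ (I : Type) [Fintype I] [DecidableEq I], PlacementSystem E I K → (I → Bool) → ℝ}
    (hV : Negligible E β K V)
    (h : ∀ (I : Type) [Fintype I] [DecidableEq I] (S : PlacementSystem E I K) (y : I → Bool),
      V' I S y = V I S y) : Negligible E β K V' := by
  obtain ⟨C, hC, hV⟩ := hV
  exact ⟨C, hC, fun I _ _ S => by
    rw [show V' I S = V I S from funext fun y => h I S y]; exact hV I S⟩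

lemma Negligible.add
    {V V' : ∀ (I : Type) [Fintype I] [DecidableEq I], PlacementSystem E I K → (I → Bool) → ℝ}
    (hV : Negligible E β K V) (hV' : Negligible E β K V') :
    Negligible E β K fun I _ _ S y => V I S y + V' I S y := by
  obtain ⟨C, hC, hV⟩ := hV
  obtain ⟨C', hC', hV'⟩ := hV'
  exact ⟨2 * C + 2 * C', by positivity, fun I _ _ S => (hV I S).add hC hC' (hV' I S)⟩

lemma Negligible.const_mul
    {V : ∀ (I : Type) [Fintype I] [DecidableEq I], PlacementSystem E I K → (I → Bool) → ℝ}
    (hV : Negligible E β K V) (a : ℝ) :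
    Negligible E β K fun I _ _ S y => a * V I S y := by
  obtain ⟨C, hC, hV⟩ := hV
  exact ⟨(|a| + |a| ^ 2) * C, by positivity, fun I _ _ S => (hV I S).const_mul le_rfl⟩

lemma Negligible.sum {ι : Type*} (A : Finset ι)
    {V : ι → ∀ (I : Type) [Fintype I] [DecidableEq I], PlacementSystem E I K → (I → Bool) → ℝ}
    (hV : ∀ i ∈ A, Negligible E β K (V i)) :
    Negligible E β K fun I _ _ S y => ∑ i ∈ A, V i I S y := by
  classical
  induction A using Finset.induction_on with
  | empty =>
    refine ⟨0, le_rfl, fun I _ _ S => splitBound_of_smooth le_rfl (fun y => ?_) fun s y => ?_⟩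
    · simp
    · simp [cubeDiff]
  | insert i A hi ih =>
    refine ((hV i (Finset.mem_insert_self i A)).add
      (ih fun i' hi' => hV i' (Finset.mem_insert_of_mem hi'))).congr fun I _ _ S y => ?_
    rw [Finset.sum_insert hi]

end ErgmCLT

namespace ErgmCLT

variable {J : Type} {E : J → Type} [∀ j, DecidableEq (E j)] [∀ j, Fintype (E j)] [Fintype J]
  {β : J → ℝ} {K : ℝ}

lemma cubeDiff_mul {I : Type} [DecidableEq I] (s : I) (f g : (I → Bool) → ℝ) (y : I → Bool) :
    cubeDiff s (fun y => f y * g y) y = cubeDiff s f y * g (Function.update y s true)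
      + f (Function.update y s false) * cubeDiff s g y := by
  simp only [cubeDiff]; ring

lemma negligible_of_truncation {C₁ C₂ C₃ : ℝ} (hK : 0 ≤ K) (hC₁ : 0 ≤ C₁) (hC₂ : 0 ≤ C₂)
    (hC₃ : 0 ≤ C₃)
    {f g : ∀ (I : Type) [Fintype I] [DecidableEq I], PlacementSystem E I K →
      I → (I → Bool) → ℝ}
    (hfg : ∀ (I : Type) [Fintype I] [DecidableEq I] (S : PlacementSystem E I K) (y : I → Bool),
      S.IsTypical β y → ∀ t, f I S t y = g I S t y)
    (hf : ∀ (I : Type) [Fintype I] [DecidableEq I] (S : PlacementSystem E I K) t (y : I → Bool),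
      |f I S t y| ≤ C₁)
    (hg : ∀ (I : Type) [Fintype I] [DecidableEq I] (S : PlacementSystem E I K) t (y : I → Bool),
      |g I S t y| ≤ C₂ * S.θ ^ 2)
    (hgd : ∀ (I : Type) [Fintype I] [DecidableEq I] (S : PlacementSystem E I K) s
      (y : I → Bool), ∑ t, |cubeDiff s (g I S t) y| ≤ C₃ * S.θ) :
    Negligible E β K fun I _ _ S y => ∑ t, f I S t y := by
  obtain ⟨c, hc0, hc⟩ := exists_gibbsExp_atypical_le E β K hK
  refine ⟨(C₁ + C₂ + C₃) + 4 * (C₁ + C₂ + C₃) ^ 2 * c, by positivity, fun I _ _ S => ?_⟩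
  have hθ := S.theta_pos
  refine splitBound_of_truncation (by positivity) hc0 (hc I S) (hfg I S)
    (fun t y => (hf I S t y).trans (by linarith)) (fun t y => (hg I S t y).trans ?_)
    fun s y => (hgd I S s y).trans ?_
  · gcongr; linarith
  · gcongr; linarith

namespace PlacementSystem

variable {I : Type} [Fintype I] [DecidableEq I] (S : PlacementSystem E I K)

/-- The deviation of a rooted count from its mean-field value. -/
def dev (p : ℝ) (j : J) (r : E j) (A : Finset (E j)) (t : I) (y : I → Bool) : ℝ :=
  S.count j r A t y - S.κ j * p ^ A.card

lemma cubeDiff_dev (p : ℝ) (j : J) (r : E j) (A : Finset (E j)) (t s : I) (y : I → Bool) :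
    cubeDiff s (S.dev p j r A t) y = cubeDiff s (S.count j r A t) y := by
  simp [cubeDiff, dev]

lemma indepOf_dev (p : ℝ) {j : J} {r : E j} {A : Finset (E j)} (hr : r ∉ A) (t : I) :
    IndepOf t (S.dev p j r A t) := fun y b => by
  unfold dev; rw [S.indepOf_count hr t y b]

lemma abs_dev_le {p : ℝ} (hp : p ∈ Set.Ioo (0 : ℝ) 1) (hK : 0 ≤ K) (j : J) (r : E j)
    (A : Finset (E j)) (t : I) (y : I → Bool) : |S.dev p j r A t y| ≤ K + 2 := by
  have hκ := S.kappa_nonneg j r t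
  have h1 : S.count j r A t y ≤ S.κ j := by
    have := (le_abs_self _).trans (S.abs_rooted_le (r := r) (t := t)
      fun φ => S.abs_mon_le_one j A φ y)
    rwa [mul_one] at this
  have h0 : 0 ≤ S.count j r A t y := by
    have := S.rooted_mono (j := j) (r := r) (t := t) (f := fun _ => 0)
      (g := fun φ => S.mon j A φ y) fun φ _ => S.mon_nonneg j A φ y
    rwa [S.rooted_const, mul_zero] at this
  have h2 : S.κ j * p ^ A.card ≤ S.κ j :=
    mul_le_of_le_one_right hκ (pow_le_one₀ hp.1.le hp.2.le)
  have h3 : 0 ≤ S.κ j * p ^ A.card := mul_nonneg hκ (pow_nonneg hp.1.le _)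
  have h4 := S.kappa_le hK j
  unfold dev
  rw [abs_le]
  constructor <;> linarith

/-- A bound for the local fields. -/
def fieldBound (E : J → Type) [∀ j, Fintype (E j)] (β : J → ℝ) (K : ℝ) : ℝ :=
  ∑ j, |β j| * (Fintype.card (E j) * (K + 2))

lemma abs_field_le (hK : 0 ≤ K) (s : I) (y : I → Bool) :
    |S.field β s y| ≤ fieldBound E β K := by
  rw [field_eq]
  refine (Finset.abs_sum_le_sum_abs _ _).trans (Finset.sum_le_sum fun j _ => ?_)
  rw [abs_mul]
  refine mul_le_mul_of_nonneg_left ?_ (abs_nonneg _)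
  calc _ ≤ ∑ r, |S.count j r (univ.erase r) s y| := Finset.abs_sum_le_sum_abs _ _
    _ ≤ ∑ _r : E j, (K + 2) := Finset.sum_le_sum fun r _ => by
        refine (S.abs_rooted_le (a := 1) fun φ => S.abs_mon_le_one j _ φ y).trans ?_
        rw [mul_one]
        exact S.kappa_le hK j
    _ = _ := by rw [Finset.sum_const, Finset.card_univ, nsmul_eq_mul]

lemma sum_coord_sub_prob_mul_cubeDiff_count (j : J) (e : E j) (A : Finset (E j)) (s : I)
    (y : I → Bool) :
    ∑ t, (coord t y - S.prob β t y) * cubeDiff s (S.count j e A t) y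
      = ∑ a ∈ A, S.fluct β j a (A.erase a) e s y := by
  simp only [cubeDiff_count, Finset.mul_sum]
  rw [Finset.sum_comm]
  refine Finset.sum_congr rfl fun a _ => ?_
  rw [S.sum_mul_rooted j e (fun t => coord t y - S.prob β t y)]
  unfold fluct rooted
  congr 1
  refine Finset.sum_congr rfl fun φ _ => ?_
  split_ifs <;> ring

lemma cubeDiff_sum_dev_mul {p : ℝ} {j : J} {e : E j} {A : Finset (E j)} (he : e ∉ A)
    (s : I) {y : I → Bool} (hs : coord s y = 1) :
    cubeDiff s (fun y => ∑ t, S.dev p j e A t y * (coord t y - S.prob β t y)) y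
      = ∑ a ∈ A, S.fluct β j a (A.erase a) e s y + S.dev p j e A s y
        - ∑ t, S.dev p j e A t (Function.update y s false) * cubeDiff s (S.prob β t) y := by
  rw [cubeDiff_sum]
  have h1 : ∀ t, cubeDiff s (fun y => S.dev p j e A t y * (coord t y - S.prob β t y)) y
      = (coord t y - S.prob β t y) * cubeDiff s (S.count j e A t) y
        + S.dev p j e A t (Function.update y s false) * cubeDiff s (coord t) y
        - S.dev p j e A t (Function.update y s false) * cubeDiff s (S.prob β t) y := by
    intro t
    rw [cubeDiff_mul, cubeDiff_dev, update_true_of_coord_eq_one hs]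
    simp only [cubeDiff]; ring
  simp only [h1]
  rw [Finset.sum_sub_distrib, Finset.sum_add_distrib, sum_coord_sub_prob_mul_cubeDiff_count]
  congr 2
  rw [Finset.sum_eq_single s, cubeDiff_coord_self, mul_one, S.indepOf_dev p he s y false]
  · intro t _ ht
    rw [cubeDiff_coord_of_ne ht, mul_zero]
  · simp

lemma abs_fluct_le (hK : 0 ≤ K) (j : J) (r : E j) (A : Finset (E j)) (e : E j) (t : I)
    (y : I → Bool) : |S.fluct β j r A e t y| ≤ K + 2 := by
  refine (S.abs_rooted_le (a := 1) fun φ => ?_).trans ?_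
  · rw [abs_mul]
    exact mul_le_one₀ (S.abs_mon_le_one j A φ y) (abs_nonneg _)
      (abs_coord_sub_condProb_le _ _ _ _ _)
  · rw [mul_one]; exact S.kappa_le hK j

end PlacementSystem

open PlacementSystem

variable {p c : ℝ}

lemma negligible_sum_dev_mul_prob_sub (hs : IsSubcritical E β p c) (hK : 0 ≤ K) (j : J)
    {e : E j} {A : Finset (E j)} (he : e ∉ A) :
    Negligible E β K fun _ _ _ S y => ∑ t, S.dev p j e A t y * (S.prob β t y - p) := by
  obtain ⟨C, hC, htyp⟩ := exists_abs_sub_le_of_isTypical E β hs hK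
  have hinf := influenceBound_nonneg (E := E) β hK
  refine negligible_of_truncation (C₁ := K + 2) (C₂ := C ^ 2)
    (C₃ := C * (Fintype.card (E j) * (K + 2) + influenceBound E β K)) hK (by positivity)
    (by positivity) (by positivity)
    (g := fun _ _ _ S t y =>
      clamp (C * S.θ) (S.dev p j e A t y) * clamp (C * S.θ) (S.prob β t y - p)) ?_ ?_ ?_ ?_
  · intro I _ _ S y hy t
    rw [clamp_eq_self ((htyp I S y hy).1 t),
      clamp_eq_self (x := S.dev p j e A t y) ((htyp I S y hy).2.1 j e A t he)]
  · intro I _ _ S t y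
    rw [abs_mul]
    refine (mul_le_of_le_one_right (abs_nonneg _) ?_).trans (S.abs_dev_le hs.mem hK j e A t y)
    rw [abs_le]
    constructor <;> linarith [S.prob_nonneg β t y, S.prob_le_one β t y, hs.mem.1, hs.mem.2]
  · intro I _ _ S t y
    have hθ := S.theta_pos
    rw [abs_mul]
    calc _ ≤ (C * S.θ) * (C * S.θ) := by
          gcongr <;> exact abs_clamp_le (by positivity) _
      _ = _ := by ring
  · intro I _ _ S s y
    have hθ := S.theta_pos
    calc _ ≤ ∑ t, (C * S.θ) * (|cubeDiff s (S.count j e A t) y|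
            + |cubeDiff s (S.prob β t) y|) := by
          refine Finset.sum_le_sum fun t _ => ?_
          rw [cubeDiff_mul]
          refine (abs_add_le _ _).trans ?_
          rw [abs_mul, abs_mul, mul_add, mul_comm (C * S.θ)]
          refine add_le_add (mul_le_mul ?_ (abs_clamp_le (by positivity) _) (abs_nonneg _)
            (abs_nonneg _)) (mul_le_mul (abs_clamp_le (by positivity) _) ?_ (abs_nonneg _)
            (by positivity))
          · rw [← S.cubeDiff_dev p]
            exact abs_clamp_sub_clamp_le _ _ _
          · refine (abs_clamp_sub_clamp_le _ _ _).trans_eq ?_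
            rw [sub_sub_sub_cancel_right, cubeDiff]
      _ = (C * S.θ) * (∑ t, |cubeDiff s (S.count j e A t) y|
            + ∑ t, |cubeDiff s (S.prob β t) y|) := by
          rw [← Finset.mul_sum, Finset.sum_add_distrib]
      _ ≤ (C * S.θ) * (Fintype.card (E j) * (K + 2) + influenceBound E β K) := by
          gcongr
          · exact S.sum_abs_cubeDiff_count_le j e A hK s y
          · exact S.sum_abs_cubeDiff_prob_le β hK s y
      _ = _ := by ring

lemma negligible_sum_sigmoidRem (hs : IsSubcritical E β p c) (hK : 0 ≤ K) :
    Negligible E β K fun _ _ _ S y =>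
      ∑ t, sigmoidRem (2 * meanField E β p) (S.field β t y - 2 * meanField E β p) := by
  obtain ⟨C, hC, htyp⟩ := exists_abs_sub_le_of_isTypical E β hs hK
  have hinf := influenceBound_nonneg (E := E) β hK
  set d := 2 * meanField E β p with hd
  refine negligible_of_truncation (C₁ := (fieldBound E β K + |d|) ^ 2) (C₂ := C ^ 2)
    (C₃ := C * influenceBound E β K) hK (by positivity)
    (by positivity) (by positivity)
    (g := fun _ _ _ S t y => sigmoidRem d (clamp (C * S.θ) (S.field β t y - d))) ?_ ?_ ?_ ?_
  · intro I _ _ S y hy t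
    rw [clamp_eq_self ((htyp I S y hy).2.2 t)]
  · intro I _ _ S t y
    refine (abs_sigmoidRem_le _ _).trans ?_
    gcongr
    exact (abs_sub _ _).trans (by gcongr; exact S.abs_field_le hK t y)
  · intro I _ _ S t y
    have hθ := S.theta_pos
    refine (abs_sigmoidRem_le _ _).trans ?_
    rw [← mul_pow]
    gcongr
    exact abs_clamp_le (by positivity) _
  · intro I _ _ S s y
    have hθ := S.theta_pos
    calc _ ≤ ∑ t, (C * S.θ) * |cubeDiff s (S.field β t) y| := by
          refine Finset.sum_le_sum fun t _ => ?_
          refine (abs_sigmoidRem_sub_le (abs_clamp_le (by positivity) _)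
            (abs_clamp_le (by positivity) _)).trans ?_
          refine mul_le_mul_of_nonneg_left ?_ (by positivity)
          refine (abs_clamp_sub_clamp_le _ _ _).trans_eq ?_
          rw [sub_sub_sub_cancel_right, cubeDiff]
      _ ≤ (C * S.θ) * influenceBound E β K := by
          rw [← Finset.mul_sum]
          gcongr
          exact S.sum_abs_cubeDiff_field_le β hK s y
      _ = _ := by ring

lemma negligible_sum_dev_mul_coord_sub (hs : IsSubcritical E β p c) (hK : 0 ≤ K) (j : J)
    {e : E j} {A : Finset (E j)} (he : e ∉ A) :
    Negligible E β K fun _ _ _ S y => ∑ t, S.dev p j e A t y * (coord t y - S.prob β t y) := by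
  obtain ⟨C, hC, htyp⟩ := exists_abs_sub_le_of_isTypical E β hs hK
  obtain ⟨c', hc0, hc⟩ := exists_gibbsExp_atypical_le E β K hK
  have hinf := influenceBound_nonneg (E := E) β hK
  set B := influenceBound E β K with hB
  set m : ℝ := (Fintype.card (E j) : ℝ) with hm
  have hm0 : 0 ≤ m := by positivity
  set G := m + C + (C + m * K) * B with hG
  set G' := m * (K + 2) + (K + 2) + (K + 2) * B with hG'
  have hG0 : 0 ≤ G := by positivity
  have hG0' : 0 ≤ G' := by positivity
  refine ⟨C * G + (K + 2) * G' * c', by positivity, fun I _ _ S => splitBound_of_sq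
    (by positivity) ?_⟩
  have hu := S.u_pos
  have hu1 := S.one_le_u
  have hθ := S.theta_pos
  set F : (I → Bool) → ℝ := fun y => ∑ t, S.dev p j e A t y * (coord t y - S.prob β t y) with hF
  have hcard : (A.card : ℝ) ≤ m := by rw [hm]; exact_mod_cast Finset.card_le_univ A
  have hexp : gibbsExp (S.ham β) (fun y => F y ^ 2) = gibbsExp (S.ham β) (fun y =>
      ∑ s, S.dev p j e A s y * (1 - S.prob β s y) * (coord s y * cubeDiff s F y)) := by
    have h1 : (fun y => F y ^ 2)
        = fun y => ∑ s, S.dev p j e A s y * (coord s y - condProb (S.ham β) s y) * F y := by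
      funext y
      rw [← Finset.sum_mul, sq]
      rfl
    rw [h1, gibbsExp_sum, gibbsExp_sum]
    exact Finset.sum_congr rfl fun s _ =>
      gibbsExp_integration_by_parts _ s (S.indepOf_dev p he s) F
  have hdiff_all : ∀ s y, |coord s y * cubeDiff s F y| ≤ G' := by
    intro s y
    rcases coord_eq_zero_or_one s y with h | h
    · rw [h, zero_mul, abs_zero]; exact hG0'
    rw [h, one_mul, hF, S.cubeDiff_sum_dev_mul he s h]
    refine (abs_sub _ _).trans (add_le_add ((abs_add_le _ _).trans (add_le_add ?_
      (S.abs_dev_le hs.mem hK j e A s y))) ?_)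
    · calc _ ≤ ∑ a ∈ A, |S.fluct β j a (A.erase a) e s y| := Finset.abs_sum_le_sum_abs _ _
        _ ≤ ∑ a ∈ A, (K + 2) := Finset.sum_le_sum fun a _ => S.abs_fluct_le hK _ _ _ _ _ _
        _ = A.card * (K + 2) := by rw [Finset.sum_const, nsmul_eq_mul]
        _ ≤ _ := by gcongr
    · calc _ ≤ ∑ t, |S.dev p j e A t (Function.update y s false) * cubeDiff s (S.prob β t) y| :=
            Finset.abs_sum_le_sum_abs _ _
        _ ≤ ∑ t, (K + 2) * |cubeDiff s (S.prob β t) y| := by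
            refine Finset.sum_le_sum fun t _ => ?_
            rw [abs_mul]
            gcongr
            exact S.abs_dev_le hs.mem hK j e A t _
        _ ≤ _ := by
            rw [← Finset.mul_sum]
            gcongr
            exact S.sum_abs_cubeDiff_prob_le β hK s y
  have hdiff_typ : ∀ s y, S.IsTypical β y → |coord s y * cubeDiff s F y| ≤ G * S.θ := by
    intro s y hy
    have hdev : ∀ t, |S.dev p j e A t y| ≤ C * S.θ := fun t => (htyp I S y hy).2.1 j e A t he
    rcases coord_eq_zero_or_one s y with h | h
    · rw [h, zero_mul, abs_zero]; positivity
    have hGθ : G * S.θ = m * S.θ + C * S.θ + (C * S.θ + m * K * S.θ) * B := by rw [hG]; ring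
    rw [h, one_mul, hF, S.cubeDiff_sum_dev_mul he s h, hGθ]
    refine (abs_sub _ _).trans (add_le_add ((abs_add_le _ _).trans (add_le_add ?_ (hdev s))) ?_)
    · calc _ ≤ ∑ a ∈ A, |S.fluct β j a (A.erase a) e s y| := Finset.abs_sum_le_sum_abs _ _
        _ ≤ ∑ a ∈ A, S.θ := Finset.sum_le_sum fun a ha => hy _ _ _ _ _
            (fun h => he (by rw [h]; exact ha)) (Finset.notMem_erase a A)
            fun h => he (Finset.mem_of_mem_erase h)
        _ = A.card * S.θ := by rw [Finset.sum_const, nsmul_eq_mul]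
        _ ≤ _ := by gcongr
    · calc _ ≤ ∑ t, |S.dev p j e A t (Function.update y s false) * cubeDiff s (S.prob β t) y| :=
            Finset.abs_sum_le_sum_abs _ _
        _ ≤ ∑ t, (C * S.θ + m * K * S.θ) * |cubeDiff s (S.prob β t) y| := by
            refine Finset.sum_le_sum fun t _ => ?_
            rw [abs_mul]
            gcongr
            have h1 := abs_sub_update_le_cubeDiff s (S.dev p j e A t) y false
            rw [cubeDiff_dev] at h1
            have h2 := S.abs_cubeDiff_count_le he hK t s y
            have h3 : Fintype.card (E j) * K / S.u ^ 12 ≤ m * K * S.θ := by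
              rw [← mul_one_div]
              exact mul_le_mul_of_nonneg_left S.inv_le_theta (by positivity)
            have h4 := abs_sub_abs_le_abs_sub (S.dev p j e A t (Function.update y s false))
              (S.dev p j e A t y)
            rw [abs_sub_comm] at h4
            linarith [hdev t]
        _ ≤ _ := by
            rw [← Finset.mul_sum]
            gcongr
            exact S.sum_abs_cubeDiff_prob_le β hK s y
  have hsum : ∀ (y : I → Bool) (x z : ℝ), 0 ≤ x → (∀ s, |S.dev p j e A s y| ≤ x) →
      (∀ s, |coord s y * cubeDiff s F y| ≤ z) →
      ∑ s, S.dev p j e A s y * (1 - S.prob β s y) * (coord s y * cubeDiff s F y)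
        ≤ Fintype.card I * (x * z) := by
    intro y x z hx hxs hzs
    calc _ ≤ ∑ _s : I, x * z := by
          refine Finset.sum_le_sum fun s _ => (le_abs_self _).trans ?_
          rw [abs_mul, abs_mul]
          refine mul_le_mul ?_ (hzs s) (abs_nonneg _) hx
          refine (mul_le_of_le_one_right (abs_nonneg _) ?_).trans (hxs s)
          rw [abs_le]
          constructor <;> linarith [S.prob_nonneg β s y, S.prob_le_one β s y]
      _ = _ := by rw [Finset.sum_const, Finset.card_univ, nsmul_eq_mul]
  rw [hexp]
  refine (S.gibbsExp_le_of_typical (hc I S) (a := C * G * S.u ^ 14)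
    (b := (K + 2) * G' * S.u ^ 24) (by positivity) (by positivity) (fun y hy => ?_)
    fun y => ?_).trans ?_
  · refine (hsum y (C * S.θ) (G * S.θ) (by positivity)
      (fun s => (htyp I S y hy).2.1 j e A s he) fun s => hdiff_typ s y hy).trans ?_
    calc _ = C * G * (Fintype.card I * S.θ ^ 2) := by ring
      _ ≤ _ := by gcongr; exact card_mul_theta_sq_le
  · refine (hsum y (K + 2) G' (by positivity)
      (fun s => S.abs_dev_le hs.mem hK j e A s y) fun s => hdiff_all s y).trans ?_
    calc _ = (K + 2) * G' * Fintype.card I := by ring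
      _ ≤ _ := by gcongr; exact S.card_le
  · have h1 : S.u ^ 14 ≤ S.u ^ 18 := pow_le_pow_right₀ hu1 (by norm_num)
    have h2 : S.u ^ 24 * (c' / S.u ^ 48) ≤ c' * S.u ^ 18 := by
      have h3 : S.u ^ 24 * (c' / S.u ^ 48) = c' * (1 / S.u ^ 24) := by field_simp
      rw [h3]
      gcongr
      exact (div_le_one (by positivity)).mpr (one_le_pow₀ hu1) |>.trans (one_le_pow₀ hu1)
    calc _ = C * G * S.u ^ 14 + (K + 2) * G' * (S.u ^ 24 * (c' / S.u ^ 48)) := by ring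
      _ ≤ C * G * S.u ^ 18 + (K + 2) * G' * (c' * S.u ^ 18) := by gcongr
      _ = _ := by ring

end ErgmCLT

namespace ErgmCLT

variable {J : Type} {E : J → Type} [∀ j, DecidableEq (E j)] [∀ j, Fintype (E j)] [Fintype J]
  {β : J → ℝ} {K p c : ℝ}

open PlacementSystem

/-- The number of ones, centred at its mean-field value. -/
def centredSum {I : Type} [Fintype I] (p : ℝ) (y : I → Bool) : ℝ :=
  coordSum y - Fintype.card I * p

lemma centredSum_eq_sum {I : Type} [Fintype I] (p : ℝ) (y : I → Bool) :
    centredSum p y = ∑ t, (coord t y - p) := by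
  rw [Finset.sum_sub_distrib, Finset.sum_const, Finset.card_univ, nsmul_eq_mul]; rfl

lemma abs_centredSum_le {I : Type} [Fintype I] [DecidableEq I] (hp : p ∈ Set.Ioo (0 : ℝ) 1)
    (y : I → Bool) :
    |centredSum p y| ≤ Fintype.card I := by
  rw [centredSum_eq_sum]
  refine (Finset.abs_sum_le_sum_abs _ _).trans ?_
  calc _ ≤ ∑ _t : I, (1 : ℝ) := Finset.sum_le_sum fun t _ => by
        rw [abs_le]
        constructor <;> linarith [hp.1, hp.2, coord_nonneg t y, coord_le_one t y]
    _ = _ := by simp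

lemma cubeDiff_centredSum {I : Type} [Fintype I] [DecidableEq I] (s : I) (y : I → Bool) :
    cubeDiff s (centredSum p) y = 1 := by
  rw [← cubeDiff_coordSum s y]
  simp [cubeDiff, centredSum]

lemma negligible_sum_mon (hs : IsSubcritical E β p c) (hK : 0 ≤ K) (j : J) (A : Finset (E j)) :
    Negligible E β K fun _ _ _ S y => S.c j * ∑ φ, (S.mon j A φ y - p ^ A.card)
      - S.κ j * (A.card * p ^ (A.card - 1)) * centredSum p y := by
  induction A using Finset.induction_on with
  | empty =>
    refine ⟨0, le_rfl, fun I _ _ S => splitBound_of_smooth le_rfl (fun y => ?_) fun s y => ?_⟩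
    · simp [mon]
    · simp [cubeDiff, mon]
  | insert e A he ih =>
    refine (((negligible_sum_dev_mul_coord_sub hs hK j he).add
      (negligible_sum_dev_mul_prob_sub hs hK j he)).add (ih.const_mul p)).congr
      fun I _ _ S y => ?_
    have h1 : S.c j * ∑ φ, S.mon j (insert e A) φ y = ∑ t, coord t y * S.count j e A t y := by
      unfold count
      rw [S.sum_mul_rooted j e (fun t => coord t y)]
      simp only [S.mon_insert he]
    have h2 : ∑ t, S.count j e A t y = S.c j * ∑ φ, S.mon j A φ y := S.sum_rooted j e _
    have h3 : S.c j * ∑ _φ : S.P j, (1 : ℝ) = Fintype.card I * S.κ j := by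
      rw [← S.sum_rooted j e]
      simp [S.rooted_const]
    have h4 : ∑ t, coord t y * S.count j e A t y
        = ∑ t, S.dev p j e A t y * (coord t y - S.prob β t y)
          + ∑ t, S.dev p j e A t y * (S.prob β t y - p)
          + S.κ j * p ^ A.card * centredSum p y + p * ∑ t, S.count j e A t y := by
      rw [centredSum_eq_sum, Finset.mul_sum, Finset.mul_sum, ← Finset.sum_add_distrib,
        ← Finset.sum_add_distrib, ← Finset.sum_add_distrib]
      refine Finset.sum_congr rfl fun t _ => ?_
      unfold dev; ring
    have h5 : (A.card : ℝ) * p ^ A.card = p * (A.card * p ^ (A.card - 1)) := by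
      rcases Nat.eq_zero_or_pos A.card with h | h
      · simp [h]
      · obtain ⟨m, hm⟩ := Nat.exists_eq_succ_of_ne_zero h.ne'
        rw [hm, Nat.succ_sub_one, pow_succ]; ring
    have h6 : ∀ x : ℝ, S.c j * ∑ _φ : S.P j, x = Fintype.card I * S.κ j * x := by
      intro x
      rw [← h3, mul_assoc, Finset.sum_mul]
      simp
    have h7 : ∀ (B : Finset (E j)) (x : ℝ), S.c j * ∑ φ, (S.mon j B φ y - x)
        = S.c j * ∑ φ, S.mon j B φ y - Fintype.card I * S.κ j * x := by
      intro B x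
      rw [Finset.sum_sub_distrib, mul_sub, h6]
    rw [h7, h7, h1, h4, h2, Finset.card_insert_of_notMem he, Nat.add_sub_cancel, pow_succ]
    push_cast
    linear_combination (-S.κ j * centredSum p y) * h5

lemma negligible_sum_count_sub (hs : IsSubcritical E β p c) (hK : 0 ≤ K) (j : J) (r : E j) :
    Negligible E β K fun _ _ _ S y =>
      ∑ t, (S.count j r (univ.erase r) t y - 2 * p ^ (Fintype.card (E j) - 1))
      - 2 * ((Fintype.card (E j) - 1 : ℕ) * p ^ (Fintype.card (E j) - 2)) * centredSum p y := by
  set m := Fintype.card (E j) - 1 with hm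
  have hcard : (univ.erase r : Finset (E j)).card = m := by
    rw [Finset.card_erase_of_mem (Finset.mem_univ r), Finset.card_univ]
  have hm2 : Fintype.card (E j) - 2 = m - 1 := by omega
  rw [hm2]
  have hp0 := hs.mem.1.le
  have hp1 := hs.mem.2.le
  have hsm : Negligible E β K fun I _ _ S y =>
      (S.κ j - 2) * (m * p ^ (m - 1)) * centredSum p y
        + (S.κ j - 2) * (Fintype.card I * p ^ m) := by
    refine ⟨K * (m + 1), by positivity, fun I _ _ S =>
      splitBound_of_smooth (by positivity) (fun y => ?_) fun s y => ?_⟩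
    · have hu := S.u_pos
      have h1 := abs_centredSum_le hs.mem y
      have h2 : p ^ m ≤ 1 := pow_le_one₀ hp0 hp1
      have h3 : p ^ (m - 1) ≤ 1 := pow_le_one₀ hp0 hp1
      have h4 : 0 ≤ p ^ m := pow_nonneg hp0 _
      have h5 : 0 ≤ p ^ (m - 1) := pow_nonneg hp0 _
      have h6 := S.card_le
      have h7 : |m * p ^ (m - 1) * centredSum p y + Fintype.card I * p ^ m|
          ≤ (m + 1) * S.u ^ 24 := by
        refine (abs_add_le _ _).trans ?_
        rw [abs_mul, abs_of_nonneg (by positivity : 0 ≤ (m : ℝ) * p ^ (m - 1)),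
          abs_of_nonneg (by positivity : 0 ≤ (Fintype.card I : ℝ) * p ^ m)]
        calc _ ≤ (m : ℝ) * 1 * S.u ^ 24 + S.u ^ 24 * 1 := by gcongr; exact h1.trans h6
          _ = _ := by ring
      calc _ = |S.κ j - 2| * |m * p ^ (m - 1) * centredSum p y + Fintype.card I * p ^ m| := by
            rw [← abs_mul]; congr 1; ring
        _ ≤ (K / S.u ^ 12) * ((m + 1) * S.u ^ 24) := by
            gcongr
            exact S.abs_kappa_sub_two_le j
        _ = K * (m + 1) * S.u ^ 12 := by field_simp
        _ ≤ _ := by gcongr; exacts [S.one_le_u, by norm_num]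
    · have h3 : p ^ (m - 1) ≤ 1 := pow_le_one₀ hp0 hp1
      have h5 : 0 ≤ p ^ (m - 1) := pow_nonneg hp0 _
      have hθ := S.theta_pos
      have h1 : cubeDiff s (fun y => (S.κ j - 2) * (m * p ^ (m - 1)) * centredSum p y
          + (S.κ j - 2) * (Fintype.card I * p ^ m)) y = (S.κ j - 2) * (m * p ^ (m - 1)) := by
        have := cubeDiff_centredSum (p := p) s y
        simp only [cubeDiff] at this ⊢
        linear_combination (S.κ j - 2) * (m * p ^ (m - 1)) * this
      rw [h1, abs_mul, abs_of_nonneg (by positivity : 0 ≤ (m : ℝ) * p ^ (m - 1))]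
      calc _ ≤ (K * S.θ) * (m * 1) := by
            gcongr
            exact S.abs_kappa_sub_two_le_theta hK j
        _ ≤ _ := by nlinarith [mul_nonneg hK hθ.le]
  refine ((negligible_sum_mon hs hK j (univ.erase r)).add hsm).congr fun I _ _ S y => ?_
  have h2 : ∑ t, S.count j r (univ.erase r) t y = S.c j * ∑ φ, S.mon j (univ.erase r) φ y :=
    S.sum_rooted j r _
  have h3 : S.c j * ∑ _φ : S.P j, (1 : ℝ) = Fintype.card I * S.κ j := by
    rw [← S.sum_rooted j r]
    simp [S.rooted_const]
  have h6 : ∀ x : ℝ, S.c j * ∑ _φ : S.P j, x = Fintype.card I * S.κ j * x := by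
    intro x
    rw [← h3, mul_assoc, Finset.sum_mul]
    simp
  simp only [Finset.sum_sub_distrib, mul_sub, h6, hcard]
  rw [h2, Finset.sum_const, Finset.card_univ, nsmul_eq_mul]
  ring

/-- The deviation from linearity of the sum of the conditional fluctuations. -/
def remainder (β : J → ℝ) (p : ℝ) {I : Type} [Fintype I] [DecidableEq I]
    (S : PlacementSystem E I K) (y : I → Bool) : ℝ :=
  (1 - 2 * p * (1 - p) * meanFieldDeriv E β p) * centredSum p y
    - ∑ t, (coord t y - S.prob β t y)

theorem negligible_remainder (hs : IsSubcritical E β p c) (hK : 0 ≤ K) :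
    Negligible E β K fun _ _ _ S y => remainder β p S y := by
  refine ((negligible_sum_sigmoidRem hs hK).add ((Negligible.sum univ fun j _ =>
    (Negligible.sum univ fun r _ => negligible_sum_count_sub hs hK j r).const_mul
      (β j)).const_mul (p * (1 - p)))).congr fun I _ _ S y => ?_
  have h1 : ∑ t, (S.field β t y - 2 * meanField E β p)
      - 2 * meanFieldDeriv E β p * centredSum p y
      = ∑ j, β j * ∑ r : E j, (∑ t, (S.count j r (univ.erase r) t y
          - 2 * p ^ (Fintype.card (E j) - 1))
        - 2 * ((Fintype.card (E j) - 1 : ℕ) * p ^ (Fintype.card (E j) - 2))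
          * centredSum p y) := by
    have h2 : ∑ t, (S.field β t y - 2 * meanField E β p) = ∑ j, β j * ∑ r : E j,
        ∑ t, (S.count j r (univ.erase r) t y - 2 * p ^ (Fintype.card (E j) - 1)) := by
      simp only [Finset.mul_sum]
      have h3 : ∀ t, S.field β t y - 2 * meanField E β p = ∑ j, ∑ r : E j, β j *
          (S.count j r (univ.erase r) t y - 2 * p ^ (Fintype.card (E j) - 1)) := by
        intro t
        rw [S.field_eq, meanField, Finset.mul_sum, ← Finset.sum_sub_distrib]
        refine Finset.sum_congr rfl fun j _ => ?_
        rw [← Finset.mul_sum, Finset.sum_sub_distrib, Finset.sum_const, Finset.card_univ,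
          nsmul_eq_mul]
        ring
      simp only [h3]
      rw [Finset.sum_comm]
      exact Finset.sum_congr rfl fun j _ => Finset.sum_comm
    rw [h2, meanFieldDeriv, Finset.mul_sum, Finset.sum_mul, ← Finset.sum_sub_distrib]
    refine Finset.sum_congr rfl fun j _ => ?_
    rw [Finset.sum_sub_distrib, Finset.sum_const, Finset.card_univ, nsmul_eq_mul]
    ring
  rw [← h1]
  have h4 : ∑ t, (S.prob β t y - p)
      = ∑ t, sigmoidRem (2 * meanField E β p) (S.field β t y - 2 * meanField E β p)
        + p * (1 - p) * ∑ t, (S.field β t y - 2 * meanField E β p) := by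
    rw [Finset.mul_sum, ← Finset.sum_add_distrib]
    refine Finset.sum_congr rfl fun t _ => ?_
    rw [sigmoidRem, hs.fixed, add_sub_cancel, ← S.prob_eq]
    ring
  have h5 : centredSum p y = ∑ t, (coord t y - S.prob β t y) + ∑ t, (S.prob β t y - p) := by
    rw [centredSum_eq_sum, ← Finset.sum_add_distrib]
    exact Finset.sum_congr rfl fun t _ => by ring
  unfold remainder
  linear_combination h5 + h4

end ErgmCLT

namespace ErgmCLT

section

variable {I : Type} [Fintype I] [DecidableEq I] {h : (I → Bool) → ℝ}

lemma gibbsExp_abs_le_of_sq_le {f : (I → Bool) → ℝ} {a : ℝ} (ha : 0 ≤ a)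
    (hf : gibbsExp h (fun y => f y ^ 2) ≤ a ^ 2) : gibbsExp h (fun y => |f y|) ≤ a := by
  have h1 := sq_gibbsExp_le h fun y => |f y|
  simp only [sq_abs] at h1
  exact (le_abs_self _).trans (abs_le_of_sq_le_sq (h1.trans hf) ha)

lemma gibbsExp_add_sq_le (f g : (I → Bool) → ℝ) :
    gibbsExp h (fun y => (f y + g y) ^ 2)
      ≤ 2 * gibbsExp h (fun y => f y ^ 2) + 2 * gibbsExp h (fun y => g y ^ 2) := by
  rw [← gibbsExp_const_mul, ← gibbsExp_const_mul, ← gibbsExp_add]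
  exact gibbsExp_mono fun y => by nlinarith [sq_nonneg (f y - g y)]

lemma gibbsExp_variance_add_le (f g : (I → Bool) → ℝ) :
    gibbsExp h (fun y => (f y + g y - gibbsExp h fun y => f y + g y) ^ 2)
      ≤ 2 * gibbsExp h (fun y => (f y - gibbsExp h f) ^ 2)
        + 2 * gibbsExp h (fun y => (g y - gibbsExp h g) ^ 2) := by
  refine le_trans (le_of_eq ?_) (gibbsExp_add_sq_le _ _)
  rw [gibbsExp_add]
  congr 1; funext y; ring

lemma gibbsExp_variance_le_sq (f : (I → Bool) → ℝ) :
    gibbsExp h (fun y => (f y - gibbsExp h f) ^ 2) ≤ gibbsExp h (fun y => f y ^ 2) := by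
  simpa using gibbsExp_centered_sq_le h f 0

end

variable {J : Type} {E : J → Type} [∀ j, DecidableEq (E j)] [∀ j, Fintype (E j)] [Fintype J]
  {β : J → ℝ} {K p c : ℝ}

open PlacementSystem

namespace PlacementSystem

variable {I : Type} [Fintype I] [DecidableEq I] (S : PlacementSystem E I K)

/-- The sum of the conditionally centred coordinates. -/
def fluctSum (β : J → ℝ) (y : I → Bool) : ℝ := ∑ t, (coord t y - S.prob β t y)

/-- The sum of the conditional variances, with one factor replaced by the coordinate. -/
def condVariance (β : J → ℝ) (y : I → Bool) : ℝ := ∑ t, coord t y * (1 - S.prob β t y)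

lemma abs_cubeDiff_fluctSum_le (hK : 0 ≤ K) (s : I) (y : I → Bool) :
    |cubeDiff s (S.fluctSum β) y| ≤ 1 + influenceBound E β K := by
  have h1 : cubeDiff s (S.fluctSum β) y = 1 - ∑ t, cubeDiff s (S.prob β t) y := by
    rw [← cubeDiff_sum, ← cubeDiff_coordSum s y]
    simp only [cubeDiff, fluctSum, coordSum, Finset.sum_sub_distrib]; ring
  rw [h1]
  refine (abs_sub _ _).trans ?_
  rw [abs_one]
  gcongr
  exact (Finset.abs_sum_le_sum_abs _ _).trans (S.sum_abs_cubeDiff_prob_le β hK s y)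

lemma gibbsExp_fluctSum_mul (f : (I → Bool) → ℝ) :
    gibbsExp (S.ham β) (fun y => S.fluctSum β y * f y)
      = gibbsExp (S.ham β) fun y =>
          ∑ s, (1 - S.prob β s y) * (coord s y * cubeDiff s f y) := by
  have h1 : (fun y => S.fluctSum β y * f y)
      = fun y => ∑ s, 1 * (coord s y - condProb (S.ham β) s y) * f y := by
    funext y
    rw [fluctSum, Finset.sum_mul]
    simp only [one_mul]; rfl
  rw [h1, gibbsExp_sum, gibbsExp_sum]
  refine Finset.sum_congr rfl fun s _ => ?_
  have hw : IndepOf s fun _ : I → Bool => (1 : ℝ) := fun _ _ => rfl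
  rw [gibbsExp_integration_by_parts _ s hw]
  simp only [one_mul]; rfl

lemma gibbsExp_fluctSum : gibbsExp (S.ham β) (S.fluctSum β) = 0 := by
  have := S.gibbsExp_fluctSum_mul (β := β) fun _ => 1
  simp only [mul_one, cubeDiff, sub_self, mul_zero, Finset.sum_const_zero, gibbsExp_const] at this
  exact this

lemma gibbsExp_fluctSum_sq_le (hK : 0 ≤ K) :
    gibbsExp (S.ham β) (fun y => S.fluctSum β y ^ 2)
      ≤ (1 + influenceBound E β K) * S.u ^ 24 := by
  simp only [sq]
  rw [S.gibbsExp_fluctSum_mul]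
  have hinf := influenceBound_nonneg (E := E) β hK
  refine gibbsExp_le_of_le fun y => ?_
  calc _ ≤ ∑ _s : I, (1 + influenceBound E β K) := by
        refine Finset.sum_le_sum fun s _ => (le_abs_self _).trans ?_
        have h1 : |1 - S.prob β s y| ≤ 1 := by
          rw [abs_le]; constructor <;> linarith [S.prob_nonneg β s y, S.prob_le_one β s y]
        have h2 : |coord s y| ≤ 1 := by
          rw [abs_le]; constructor <;> linarith [coord_nonneg s y, coord_le_one s y]
        rw [abs_mul, abs_mul]
        calc _ ≤ 1 * (1 * (1 + influenceBound E β K)) := by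
              gcongr; exact S.abs_cubeDiff_fluctSum_le hK s y
          _ = _ := by ring
    _ = (1 + influenceBound E β K) * Fintype.card I := by
        rw [Finset.sum_const, Finset.card_univ, nsmul_eq_mul, mul_comm]
    _ ≤ _ := by gcongr; exact S.card_le

end PlacementSystem

lemma exists_gibbsExp_centredSum_sq_le (hs : IsSubcritical E β p c) (hK : 0 ≤ K) :
    ∃ C, 0 ≤ C ∧ ∀ (I : Type) [Fintype I] [DecidableEq I] (S : PlacementSystem E I K),
      gibbsExp (S.ham β) (fun y => centredSum p y ^ 2) ≤ C * S.u ^ 28 := by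
  obtain ⟨C, hC, hrem⟩ := negligible_remainder hs hK
  set ρ := 2 * p * (1 - p) * meanFieldDeriv E β p with hρ
  have hρ1 : 0 < 1 - ρ := by linarith [hs.slope]
  have hinf := influenceBound_nonneg (E := E) β hK
  refine ⟨(4 * C + 4 * C ^ 2 + 2 * (1 + influenceBound E β K)) / (1 - ρ) ^ 2, by positivity,
    fun I _ _ S => ?_⟩
  obtain ⟨V₁, V₂, hV, hV₁, hV₂, -⟩ := hrem I S
  have hu := S.u_pos
  have hu1 := S.one_le_u
  have h1 : gibbsExp (S.ham β) (fun y => (remainder β p S y) ^ 2)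
      ≤ 2 * (C * S.u ^ 28) + 2 * (C ^ 2 * S.u ^ 28) := by
    simp only [hV]
    refine (gibbsExp_add_sq_le V₁ V₂).trans ?_
    gcongr
    · refine hV₁.trans ?_
      gcongr
      norm_num
    · refine gibbsExp_le_of_le fun y => ?_
      calc V₂ y ^ 2 ≤ (C * S.u ^ 14) ^ 2 := sq_le_sq' (abs_le.mp (hV₂ y)).1 (abs_le.mp (hV₂ y)).2
        _ = _ := by ring
  have h2 : gibbsExp (S.ham β) (fun y => S.fluctSum β y ^ 2)
      ≤ (1 + influenceBound E β K) * S.u ^ 28 :=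
    (S.gibbsExp_fluctSum_sq_le hK).trans (by gcongr; norm_num)
  have h3 : (1 - ρ) ^ 2 * gibbsExp (S.ham β) (fun y => centredSum p y ^ 2)
      = gibbsExp (S.ham β) (fun y => (remainder β p S y + S.fluctSum β y) ^ 2) := by
    rw [← gibbsExp_const_mul]
    congr 1; funext y
    rw [remainder, fluctSum, ← hρ]; ring
  rw [div_mul_eq_mul_div, le_div_iff₀ (by positivity), mul_comm, h3]
  refine (gibbsExp_add_sq_le _ _).trans ?_
  linarith

lemma exists_gibbsExp_remainder_le (hs : IsSubcritical E β p c) (hK : 0 ≤ K) :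
    ∃ C, 0 ≤ C ∧ ∀ (I : Type) [Fintype I] [DecidableEq I] (S : PlacementSystem E I K),
      gibbsExp (S.ham β) (fun y => |remainder β p S y
        - gibbsExp (S.ham β) (remainder β p S)|) ≤ C * S.u ^ 9 := by
  obtain ⟨C, hC, hrem⟩ := negligible_remainder hs hK
  obtain ⟨C', hC', hvar⟩ := exists_gibbsExp_centredSum_sq_le hs hK
  refine ⟨2 * C + 2 * (C ^ 2 * C') + 1, by positivity, fun I _ _ S => ?_⟩
  obtain ⟨V₁, V₂, hV, hV₁, -, hV₂⟩ := hrem I S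
  have hu := S.u_pos
  refine gibbsExp_abs_le_of_sq_le (by positivity) ?_
  have hV' : remainder β p S = fun y => V₁ y + V₂ y := funext hV
  have h1 := gibbsExp_variance_le_sq (h := S.ham β) V₁
  have h2 := gibbsExp_variance_le (S.ham β) (S.ham_supermodular β hs.ferromagnetic) hV₂
  have h3 := (gibbsExp_centered_sq_le (S.ham β) coordSum (Fintype.card I * p)).trans (hvar I S)
  have h4 : (C * S.θ) ^ 2 * gibbsExp (S.ham β) (fun y =>
      (coordSum y - gibbsExp (S.ham β) coordSum) ^ 2) ≤ C ^ 2 * C' * S.u ^ 18 := by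
    calc _ ≤ (C * S.θ) ^ 2 * (C' * S.u ^ 28) := by gcongr
      _ = _ := by unfold PlacementSystem.θ; field_simp
  rw [hV']
  refine (gibbsExp_variance_add_le V₁ V₂).trans ?_
  have h5 : 2 * C + 2 * (C ^ 2 * C') ≤ (2 * C + 2 * (C ^ 2 * C') + 1) ^ 2 := by
    have : 0 ≤ 2 * C + 2 * (C ^ 2 * C') := by positivity
    nlinarith
  calc _ ≤ (2 * C + 2 * (C ^ 2 * C')) * S.u ^ 18 := by linarith
    _ ≤ (2 * C + 2 * (C ^ 2 * C') + 1) ^ 2 * S.u ^ 18 := by gcongr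
    _ = _ := by ring

lemma exists_gibbsExp_condVariance_le (hs : IsSubcritical E β p c) (hK : 0 ≤ K) :
    ∃ C, 0 ≤ C ∧ ∀ (I : Type) [Fintype I] [DecidableEq I] (S : PlacementSystem E I K),
      gibbsExp (S.ham β) (fun y => |S.condVariance β y - Fintype.card I * (p * (1 - p))|)
        ≤ C * S.u ^ 19 := by
  obtain ⟨C, hC, htyp⟩ := exists_abs_sub_le_of_isTypical E β hs hK
  obtain ⟨c', hc0, hc⟩ := exists_gibbsExp_atypical_le E β K hK
  obtain ⟨C', hC', hvar⟩ := exists_gibbsExp_centredSum_sq_le hs hK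
  refine ⟨(C' + 1) + (C + c'), by positivity, fun I _ _ S => ?_⟩
  have hu := S.u_pos
  have hu1 := S.one_le_u
  have hθ := S.theta_pos
  have hp := hs.mem
  have h1 : gibbsExp (S.ham β) (fun y => |centredSum p y|) ≤ (C' + 1) * S.u ^ 19 := by
    have : gibbsExp (S.ham β) (fun y => |centredSum p y|) ≤ (C' + 1) * S.u ^ 14 := by
      refine gibbsExp_abs_le_of_sq_le (by positivity) ((hvar I S).trans ?_)
      calc _ ≤ (C' + 1) ^ 2 * S.u ^ 28 := by gcongr; nlinarith
        _ = _ := by ring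
    refine this.trans ?_
    gcongr
    norm_num
  have h2 : gibbsExp (S.ham β) (fun y => ∑ t, |S.prob β t y - p|) ≤ (C + c') * S.u ^ 19 := by
    refine (S.gibbsExp_le_of_typical (hc I S) (a := C * S.u ^ 19) (b := S.u ^ 24)
      (by positivity) (by positivity) (fun y hy => ?_) fun y => ?_).trans ?_
    · calc _ ≤ ∑ _t : I, C * S.θ := Finset.sum_le_sum fun t _ => (htyp I S y hy).1 t
        _ = Fintype.card I * (C * S.θ) := by rw [Finset.sum_const, Finset.card_univ, nsmul_eq_mul]
        _ ≤ S.u ^ 24 * (C * S.θ) := by gcongr; exact S.card_le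
        _ = _ := by unfold PlacementSystem.θ; field_simp
    · calc _ ≤ ∑ _t : I, (1 : ℝ) := Finset.sum_le_sum fun t _ => by
            rw [abs_le]
            constructor <;> linarith [S.prob_nonneg β t y, S.prob_le_one β t y, hp.1, hp.2]
        _ = Fintype.card I := by simp
        _ ≤ _ := S.card_le
    · have h3 : S.u ^ 24 * (c' / S.u ^ 48) = c' * (1 / S.u ^ 24) := by field_simp
      rw [h3]
      have h4 : 1 / S.u ^ 24 ≤ S.u ^ 19 :=
        ((div_le_one (by positivity)).mpr (one_le_pow₀ hu1)).trans (one_le_pow₀ hu1)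
      nlinarith
  calc _ ≤ gibbsExp (S.ham β) (fun y => |centredSum p y| + ∑ t, |S.prob β t y - p|) := by
        refine gibbsExp_mono fun y => ?_
        have h3 : S.condVariance β y - Fintype.card I * (p * (1 - p))
            = (1 - p) * centredSum p y - ∑ t, coord t y * (S.prob β t y - p) := by
          rw [centredSum_eq_sum, condVariance, Finset.mul_sum, ← Finset.sum_sub_distrib]
          have : (Fintype.card I : ℝ) * (p * (1 - p)) = ∑ _t : I, p * (1 - p) := by simp
          rw [this, ← Finset.sum_sub_distrib]
          exact Finset.sum_congr rfl fun t _ => by ring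
        rw [h3]
        refine (abs_sub _ _).trans (add_le_add ?_ ?_)
        · rw [abs_mul]
          refine mul_le_of_le_one_left (abs_nonneg _) ?_
          rw [abs_le]; constructor <;> linarith [hp.1, hp.2]
        · refine (Finset.abs_sum_le_sum_abs _ _).trans (Finset.sum_le_sum fun t _ => ?_)
          rw [abs_mul]
          refine mul_le_of_le_one_left (abs_nonneg _) ?_
          rw [abs_le]; constructor <;> linarith [coord_nonneg t y, coord_le_one t y]
    _ ≤ _ := by rw [gibbsExp_add]; linarith

end ErgmCLT

namespace ErgmCLT

/-- The unnormalized standard Gaussian density. -/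
def gaussWeight (x : ℝ) : ℝ := Real.exp (-(1 / 2) * x ^ 2)

lemma gaussWeight_pos (x : ℝ) : 0 < gaussWeight x := Real.exp_pos _

lemma gaussWeight_neg (x : ℝ) : gaussWeight (-x) = gaussWeight x := by simp [gaussWeight]

lemma hasDerivAt_gaussWeight (x : ℝ) : HasDerivAt gaussWeight (-x * gaussWeight x) x := by
  have h := (((hasDerivAt_pow 2 x).const_mul (-(1 / 2) : ℝ))).exp
  convert! h using 1
  simp only [gaussWeight]; push_cast; ring

lemma continuous_gaussWeight : Continuous gaussWeight := by unfold gaussWeight; fun_prop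

lemma integrable_gaussWeight : Integrable gaussWeight :=
  integrable_exp_neg_mul_sq (by norm_num : (0 : ℝ) < 1 / 2)

lemma integrable_mul_gaussWeight : Integrable fun x => x * gaussWeight x :=
  integrable_mul_exp_neg_mul_sq (by norm_num : (0 : ℝ) < 1 / 2)

lemma integrable_sq_mul_gaussWeight : Integrable fun x => x ^ 2 * gaussWeight x := by
  simpa [gaussWeight] using integrable_rpow_mul_exp_neg_mul_sq (by norm_num : (0 : ℝ) < 1 / 2)
    (by norm_num : (-1 : ℝ) < 2)

lemma integral_Ioi_mul_gaussWeight (x : ℝ) :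
    ∫ t in Set.Ioi x, t * gaussWeight t = gaussWeight x := by
  have hd : ∀ t ∈ Set.Ici x, HasDerivAt (fun t => -gaussWeight t) (t * gaussWeight t) t :=
    fun t _ => by convert! (hasDerivAt_gaussWeight t).neg using 1; ring
  have hlim := tendsto_zero_of_hasDerivAt_of_integrableOn_Ioi
    (fun t ht => hd t (Set.mem_Ici.mpr (le_of_lt ht)))
    integrable_mul_gaussWeight.integrableOn integrable_gaussWeight.neg.integrableOn
  rw [integral_Ioi_of_hasDerivAt_of_tendsto' hd integrable_mul_gaussWeight.integrableOn hlim]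
  ring

lemma integral_Ioi_sq_mul_gaussWeight (x : ℝ) :
    ∫ t in Set.Ioi x, t ^ 2 * gaussWeight t
      = x * gaussWeight x + ∫ t in Set.Ioi x, gaussWeight t := by
  have hd : ∀ t ∈ Set.Ici x, HasDerivAt (fun t => -(t * gaussWeight t))
      (t ^ 2 * gaussWeight t - gaussWeight t) t := fun t _ => by
    convert! ((hasDerivAt_id t).mul (hasDerivAt_gaussWeight t)).neg using 1
    simp only [id]; ring
  have hint : Integrable fun t => t ^ 2 * gaussWeight t - gaussWeight t :=
    integrable_sq_mul_gaussWeight.sub integrable_gaussWeight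
  have hlim := tendsto_zero_of_hasDerivAt_of_integrableOn_Ioi
    (fun t ht => hd t (Set.mem_Ici.mpr (le_of_lt ht)))
    hint.integrableOn integrable_mul_gaussWeight.neg.integrableOn
  have h := integral_Ioi_of_hasDerivAt_of_tendsto' hd hint.integrableOn hlim
  rw [integral_sub integrable_sq_mul_gaussWeight.integrableOn
    integrable_gaussWeight.integrableOn] at h
  linarith

lemma integral_Ioi_sub_mul_gaussWeight (x : ℝ) :
    ∫ t in Set.Ioi x, (t - x) * gaussWeight t
      = gaussWeight x - x * ∫ t in Set.Ioi x, gaussWeight t := by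
  simp only [sub_mul]
  rw [integral_sub integrable_mul_gaussWeight.integrableOn
    (integrable_gaussWeight.const_mul x).integrableOn, integral_Ioi_mul_gaussWeight,
    integral_const_mul]

lemma integral_Ioi_gaussWeight_le {x : ℝ} (hx : 1 ≤ x) :
    ∫ t in Set.Ioi x, gaussWeight t ≤ gaussWeight x := by
  rw [← integral_Ioi_mul_gaussWeight]
  refine setIntegral_mono_on integrable_gaussWeight.integrableOn
    integrable_mul_gaussWeight.integrableOn measurableSet_Ioi fun t ht => ?_
  have : 1 ≤ t := hx.trans (le_of_lt ht)
  nlinarith [gaussWeight_pos t]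

lemma le_integral_Ioi_gaussWeight (x : ℝ) :
    x * gaussWeight x ≤ (1 + x ^ 2) * ∫ t in Set.Ioi x, gaussWeight t := by
  have h0 : 0 ≤ ∫ t in Set.Ioi x, (t - x) ^ 2 * gaussWeight t :=
    integral_nonneg fun t => mul_nonneg (sq_nonneg _) (gaussWeight_pos t).le
  have h1 : (fun t => (t - x) ^ 2 * gaussWeight t) = fun t =>
      t ^ 2 * gaussWeight t - (2 * x) * (t * gaussWeight t) + x ^ 2 * gaussWeight t := by
    funext t; ring
  have h2 : Integrable fun t => t ^ 2 * gaussWeight t - (2 * x) * (t * gaussWeight t) :=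
    integrable_sq_mul_gaussWeight.sub (integrable_mul_gaussWeight.const_mul _)
  rw [h1, integral_add h2.integrableOn
      (integrable_gaussWeight.const_mul _).integrableOn,
    integral_sub integrable_sq_mul_gaussWeight.integrableOn
      (integrable_mul_gaussWeight.const_mul _).integrableOn,
    integral_const_mul, integral_const_mul, integral_Ioi_mul_gaussWeight,
    integral_Ioi_sq_mul_gaussWeight] at h0
  linarith

variable {h : ℝ → ℝ} {M : ℝ}

lemma integrable_mul_gaussWeight_of_le (hc : Continuous h) (hM : ∀ x, |h x| ≤ |x| + M) :
    Integrable fun t => h t * gaussWeight t := by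
  refine ((integrable_mul_gaussWeight.abs).add (integrable_gaussWeight.const_mul M)).mono'
    (hc.mul continuous_gaussWeight).aestronglyMeasurable (ae_of_all _ fun t => ?_)
  have hw := gaussWeight_pos t
  simp only [Pi.add_apply, Real.norm_eq_abs, abs_mul, abs_of_pos hw]
  nlinarith [hM t]

/-- The right tail of `h`, relative to the Gaussian density. -/
def steinTail (h : ℝ → ℝ) (x : ℝ) : ℝ :=
  (∫ t in Set.Ioi x, h t * gaussWeight t) / gaussWeight x

lemma abs_steinTail_le (hM0 : 0 ≤ M) (hc : Continuous h) (hM : ∀ x, |h x| ≤ |x| + M) {x : ℝ}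
    (hx : 1 ≤ x) : |steinTail h x| ≤ 1 + M := by
  have hint := integrable_mul_gaussWeight_of_le hc hM
  rw [steinTail, abs_div, abs_of_pos (gaussWeight_pos x), div_le_iff₀ (gaussWeight_pos x)]
  calc _ ≤ ∫ t in Set.Ioi x, |h t * gaussWeight t| := abs_integral_le_integral_abs
    _ ≤ ∫ t in Set.Ioi x, (t * gaussWeight t + M * gaussWeight t) := by
        refine setIntegral_mono_on hint.abs.integrableOn (integrable_mul_gaussWeight.add
          (integrable_gaussWeight.const_mul M)).integrableOn measurableSet_Ioi fun t ht => ?_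
        have ht0 : 0 ≤ t := by linarith [Set.mem_Ioi.mp ht]
        rw [abs_mul, abs_of_pos (gaussWeight_pos t), ← add_mul]
        refine mul_le_mul_of_nonneg_right ?_ (gaussWeight_pos t).le
        simpa [abs_of_nonneg ht0] using hM t
    _ = gaussWeight x + M * ∫ t in Set.Ioi x, gaussWeight t := by
        rw [integral_add integrable_mul_gaussWeight.integrableOn
          (integrable_gaussWeight.const_mul M).integrableOn, integral_Ioi_mul_gaussWeight,
          integral_const_mul]
    _ ≤ gaussWeight x + M * gaussWeight x := by
        gcongr; exact integral_Ioi_gaussWeight_le hx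
    _ = _ := by ring

lemma abs_mul_sub_steinTail_le (hM0 : 0 ≤ M) (hL : ∀ x y, |h x - h y| ≤ |x - y|)
    (hc : Continuous h) (hM : ∀ x, |h x| ≤ |x| + M) {x : ℝ} (hx : 1 ≤ x) :
    |x * (h x - x * steinTail h x)| ≤ 2 + M := by
  have hint := integrable_mul_gaussWeight_of_le hc hM
  have hw := gaussWeight_pos x
  have hx0 : 0 ≤ x := by linarith
  set I₀ := ∫ t in Set.Ioi x, gaussWeight t with hI₀
  set D := gaussWeight x - x * I₀ with hD
  have hDle : D ≤ gaussWeight x / (1 + x ^ 2) := by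
    rw [le_div_iff₀ (by positivity), hD]
    have := le_integral_Ioi_gaussWeight x
    nlinarith
  have hsubint : Integrable fun t => (h t - h x) * gaussWeight t := by
    simp only [sub_mul]
    exact hint.sub (integrable_gaussWeight.const_mul (h x))
  have h1 : |∫ t in Set.Ioi x, (h t - h x) * gaussWeight t| ≤ D := by
    rw [hD, hI₀, ← integral_Ioi_sub_mul_gaussWeight]
    refine abs_integral_le_integral_abs.trans (setIntegral_mono_on hsubint.abs.integrableOn ?_
      measurableSet_Ioi fun t ht => ?_)
    · simp only [sub_mul]
      exact (integrable_mul_gaussWeight.sub (integrable_gaussWeight.const_mul x)).integrableOn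
    · rw [abs_mul, abs_of_pos (gaussWeight_pos t)]
      refine mul_le_mul_of_nonneg_right ((hL t x).trans_eq ?_) (gaussWeight_pos t).le
      exact abs_of_pos (sub_pos.mpr ht)
  have h2 : ∫ t in Set.Ioi x, (h t - h x) * gaussWeight t
      = (∫ t in Set.Ioi x, h t * gaussWeight t) - h x * I₀ := by
    simp only [sub_mul]
    rw [integral_sub hint.integrableOn (integrable_gaussWeight.const_mul _).integrableOn,
      integral_const_mul]
  have hD0 : 0 ≤ D := (abs_nonneg _).trans h1
  have h3 : x * (h x - x * steinTail h x) = x / gaussWeight x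
      * (h x * D - x * ∫ t in Set.Ioi x, (h t - h x) * gaussWeight t) := by
    rw [h2, steinTail, hD]
    field_simp
    ring
  have h4 : |h x * D - x * ∫ t in Set.Ioi x, (h t - h x) * gaussWeight t| ≤ (2 * x + M) * D := by
    refine (abs_sub _ _).trans ?_
    rw [abs_mul, abs_mul, abs_of_nonneg hD0, abs_of_nonneg hx0]
    have := hM x
    rw [abs_of_nonneg hx0] at this
    nlinarith
  rw [h3, abs_mul, abs_of_nonneg (by positivity : 0 ≤ x / gaussWeight x)]
  calc _ ≤ x / gaussWeight x * ((2 * x + M) * (gaussWeight x / (1 + x ^ 2))) := by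
        gcongr
        exact h4.trans (by gcongr)
    _ = x * (2 * x + M) / (1 + x ^ 2) := by field_simp
    _ ≤ 2 + M := by
        rw [div_le_iff₀ (by positivity)]
        nlinarith [mul_nonneg hM0 (by nlinarith : 0 ≤ x ^ 2 - x)]

lemma hasDerivAt_steinTail (hc : Continuous h) (hM : ∀ x, |h x| ≤ |x| + M) (x : ℝ) :
    HasDerivAt (steinTail h) (x * steinTail h x - h x) x := by
  have hint := integrable_mul_gaussWeight_of_le hc hM
  have hcont : Continuous fun t => h t * gaussWeight t := hc.mul continuous_gaussWeight
  have h1 : (fun y => ∫ t in Set.Ioi y, h t * gaussWeight t)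
      = fun y => (∫ t in Set.Ioi 0, h t * gaussWeight t)
        - ∫ t in (0 : ℝ)..y, h t * gaussWeight t := by
    funext y
    have := intervalIntegral.integral_interval_add_Ioi (a := 0) (b := y)
      hint.integrableOn hint.integrableOn
    linarith
  have h2 : HasDerivAt (fun y => ∫ t in Set.Ioi y, h t * gaussWeight t)
      (-(h x * gaussWeight x)) x := by
    rw [h1]
    exact (hcont.integral_hasStrictDerivAt 0 x).hasDerivAt.const_sub _
  have h3 := h2.div (hasDerivAt_gaussWeight x) (gaussWeight_pos x).ne'
  convert! h3 using 1
  have := (gaussWeight_pos x).ne'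
  rw [steinTail]
  field_simp
  ring

lemma steinTail_neg (hint : Integrable fun t => h t * gaussWeight t)
    (h0 : ∫ t, h t * gaussWeight t = 0) (x : ℝ) :
    steinTail (fun t => h (-t)) (-x) = -steinTail h x := by
  have h1 := integral_comp_neg_Ioi (-x) fun t => h t * gaussWeight t
  simp only [gaussWeight_neg, neg_neg] at h1
  have h2 := intervalIntegral.integral_Iic_add_Ioi (b := x) hint.integrableOn hint.integrableOn
  rw [h0] at h2
  rw [steinTail, steinTail, h1, gaussWeight_neg, ← neg_div]
  congr 1
  linarith

/-- Bounds for the solution of the Stein equation with Lipschitz right-hand side. -/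
theorem exists_stein_solution : ∃ C : ℝ, 0 ≤ C ∧ ∀ ψ : ℝ → ℝ, LipschitzWith 1 ψ →
    ∃ f f' : ℝ → ℝ, (∀ x, HasDerivAt f (f' x) x) ∧
      (∀ x, f' x = x * f x + (ψ x - ∫ z, ψ z ∂(gaussianReal 0 1))) ∧
      (∀ x, |f x| ≤ C) ∧ (∀ x, |f' x| ≤ C) ∧ ∀ x y, |f' x - f' y| ≤ C * |x - y| := by
  set M := ∫ z, |z| ∂(gaussianReal 0 1) with hMdef
  have hM0 : 0 ≤ M := integral_nonneg fun z => abs_nonneg z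
  set B := (∫ t, (|t * gaussWeight t| + M * gaussWeight t)) / Real.exp (-(1 / 2)) with hB
  have hB0 : 0 ≤ B := div_nonneg (integral_nonneg fun t =>
    add_nonneg (abs_nonneg _) (mul_nonneg hM0 (gaussWeight_pos t).le)) (Real.exp_pos _).le
  refine ⟨2 * (B + 2 + M) + 3 + M, by positivity, fun ψ hψ => ?_⟩
  set m := ∫ z, ψ z ∂(gaussianReal 0 1) with hm
  set h : ℝ → ℝ := fun x => ψ x - m with hh
  have hψL : ∀ x y, |ψ x - ψ y| ≤ |x - y| := fun x y => by
    simpa [Real.dist_eq] using hψ.dist_le_mul x y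
  have hL : ∀ x y, |h x - h y| ≤ |x - y| := fun x y => by
    simpa [hh] using hψL x y
  have hc : Continuous h := hψ.continuous.sub continuous_const
  have hid : Integrable (fun z : ℝ => z) (gaussianReal 0 1) :=
    memLp_one_iff_integrable.mp (memLp_id_gaussianReal 1)
  have hψi : Integrable ψ (gaussianReal 0 1) := by
    refine (hid.abs.add (integrable_const |ψ 0|)).mono' hψ.continuous.aestronglyMeasurable
      (ae_of_all _ fun z => ?_)
    have h1 := hψL z 0
    have h2 := abs_sub_abs_le_abs_sub (ψ z) (ψ 0)
    simp only [sub_zero, Pi.add_apply, Real.norm_eq_abs] at *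
    linarith
  have hM : ∀ x, |h x| ≤ |x| + M := by
    intro x
    have h1 : h x = ∫ z, (ψ x - ψ z) ∂(gaussianReal 0 1) := by
      rw [integral_sub (integrable_const _) hψi]; simp [hh, hm]
    rw [h1]
    calc _ ≤ ∫ z, |ψ x - ψ z| ∂(gaussianReal 0 1) := abs_integral_le_integral_abs
      _ ≤ ∫ z, (|x| + |z|) ∂(gaussianReal 0 1) := by
          refine integral_mono (((integrable_const _).sub hψi).abs)
            ((integrable_const _).add hid.abs) fun z => ?_
          exact (hψL x z).trans (abs_sub x z)
      _ = |x| + M := by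
          rw [integral_add (integrable_const _) hid.abs]; simp [hMdef]
  have hint := integrable_mul_gaussWeight_of_le hc hM
  have h0 : ∫ t, h t * gaussWeight t = 0 := by
    have h1 : ∫ z, h z ∂(gaussianReal 0 1) = 0 := by
      rw [hh, integral_sub hψi (integrable_const _)]; simp [hm]
    rw [integral_gaussianReal_eq_integral_smul one_ne_zero] at h1
    have h2 : ∀ z, gaussianPDFReal 0 1 z • h z
        = (√(2 * π))⁻¹ * (h z * gaussWeight z) := by
      intro z
      simp only [gaussianPDFReal, gaussWeight, smul_eq_mul, NNReal.coe_one, mul_one, sub_zero]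
      rw [show -z ^ 2 / 2 = -(1 / 2) * z ^ 2 by ring]
      ring
    simp only [h2] at h1
    rw [integral_const_mul] at h1
    exact (mul_eq_zero.mp h1).resolve_left (by positivity)
  set h' : ℝ → ℝ := fun t => h (-t) with hh'
  have hc' : Continuous h' := hc.comp continuous_neg
  have hL' : ∀ x y, |h' x - h' y| ≤ |x - y| := fun x y => by
    refine (hL _ _).trans_eq ?_
    rw [neg_sub_neg, abs_sub_comm]
  have hM' : ∀ x, |h' x| ≤ |x| + M := fun x => by simpa using hM (-x)
  have hcent : ∀ x, |x| ≤ 1 → |steinTail h x| ≤ B := by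
    intro x hx
    rw [steinTail, abs_div, abs_of_pos (gaussWeight_pos x)]
    have hx2 : x ^ 2 ≤ 1 := by rw [← sq_abs]; nlinarith [abs_nonneg x]
    refine div_le_div₀ (integral_nonneg fun t => add_nonneg (abs_nonneg _)
      (mul_nonneg hM0 (gaussWeight_pos t).le)) ?_ (Real.exp_pos _)
      (Real.exp_le_exp.mpr (by linarith))
    have hdom : Integrable fun t => |t * gaussWeight t| + M * gaussWeight t :=
      integrable_mul_gaussWeight.abs.add (integrable_gaussWeight.const_mul M)
    calc _ ≤ ∫ t in Set.Ioi x, |h t * gaussWeight t| := abs_integral_le_integral_abs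
      _ ≤ ∫ t, |h t * gaussWeight t| :=
          setIntegral_le_integral hint.abs (ae_of_all _ fun t => abs_nonneg _)
      _ ≤ _ := by
          refine integral_mono hint.abs hdom fun t => ?_
          dsimp only
          rw [abs_mul, abs_mul, abs_of_pos (gaussWeight_pos t), ← add_mul]
          exact mul_le_mul_of_nonneg_right (hM t) (gaussWeight_pos t).le
  have hf : ∀ x, |steinTail h x| ≤ B + 1 + M := by
    intro x
    rcases le_total |x| 1 with hx | hx
    · linarith [hcent x hx]
    rcases le_abs'.mp hx with hx | hx
    · have h1 := abs_steinTail_le hM0 hc' hM' (x := -x) (by linarith)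
      rw [steinTail_neg hint h0, abs_neg] at h1
      linarith
    · linarith [abs_steinTail_le hM0 hc hM hx]
  have hxf : ∀ x, |x * (h x - x * steinTail h x)| ≤ B + 2 + M := by
    intro x
    rcases le_total |x| 1 with hx | hx
    · rw [abs_mul]
      refine (mul_le_of_le_one_left (abs_nonneg _) hx).trans ((abs_sub _ _).trans ?_)
      have h1 := hM x
      have h2 : |x * steinTail h x| ≤ B := by
        rw [abs_mul]
        exact (mul_le_of_le_one_left (abs_nonneg _) hx).trans (hcent x hx)
      linarith
    rcases le_abs'.mp hx with hx | hx
    · have h1 := abs_mul_sub_steinTail_le hM0 hL' hc' hM' (x := -x) (by linarith)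
      rw [steinTail_neg hint h0] at h1
      simp only [hh', neg_neg, neg_mul, mul_neg, abs_neg] at h1
      linarith
    · linarith [abs_mul_sub_steinTail_le hM0 hL hc hM hx]
  have hf' : ∀ x, |h x - x * steinTail h x| ≤ B + 2 + M := by
    intro x
    rcases le_total |x| 1 with hx | hx
    · refine (abs_sub _ _).trans ?_
      have h1 := hM x
      have h2 : |x * steinTail h x| ≤ B := by
        rw [abs_mul]
        exact (mul_le_of_le_one_left (abs_nonneg _) hx).trans (hcent x hx)
      linarith
    · have h1 := hxf x
      rw [abs_mul] at h1
      nlinarith [abs_nonneg (h x - x * steinTail h x)]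
  have hder := hasDerivAt_steinTail hc hM
  refine ⟨fun x => -steinTail h x, fun x => h x - x * steinTail h x, fun x => ?_, fun x => ?_,
    fun x => ?_, fun x => ?_, fun x y => ?_⟩
  · convert! (hder x).neg using 1; ring
  · simp only [hh]; ring
  · rw [abs_neg]; linarith [hf x]
  · linarith [hf' x]
  · have hd : ∀ z, HasDerivAt (fun z => z * steinTail h z)
        (steinTail h z - z * (h z - z * steinTail h z)) z := by
      intro z
      convert! (hasDerivAt_id z).mul (hder z) using 1
      simp only [id]; ring
    have hlip := Convex.norm_image_sub_le_of_norm_hasDerivWithin_le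
      (C := 2 * (B + 2 + M)) (s := Set.univ) (x := y) (y := x)
      (fun z _ => (hd z).hasDerivWithinAt) (fun z _ => ?_) convex_univ (Set.mem_univ _)
      (Set.mem_univ _)
    · rw [Real.norm_eq_abs, Real.norm_eq_abs] at hlip
      calc _ = |(h x - h y) - (x * steinTail h x - y * steinTail h y)| := by congr 1; ring
        _ ≤ |x - y| + 2 * (B + 2 + M) * |x - y| :=
            (abs_sub _ _).trans (add_le_add (hL x y) hlip)
        _ ≤ _ := by nlinarith [abs_nonneg (x - y)]
    · rw [Real.norm_eq_abs]
      refine (abs_sub _ _).trans ?_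
      linarith [hf z, hxf z]

end ErgmCLT

namespace ErgmCLT

lemma abs_sub_sub_mul_le {f f' : ℝ → ℝ} {C : ℝ} (hC : 0 ≤ C) (hd : ∀ x, HasDerivAt f (f' x) x)
    (hL : ∀ x y, |f' x - f' y| ≤ C * |x - y|) (w : ℝ) {δ : ℝ} (hδ : 0 < δ) :
    |f w - f (w - δ) - δ * f' w| ≤ C * δ ^ 2 := by
  obtain ⟨ξ, hξ, hs⟩ := exists_hasDerivAt_eq_slope f f' (by linarith : w - δ < w)
    (fun x _ => (hd x).continuousAt.continuousWithinAt) fun x _ => hd x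
  rw [sub_sub_cancel, eq_div_iff hδ.ne'] at hs
  rw [← hs, mul_comm, ← mul_sub, abs_mul, abs_of_pos hδ]
  have h1 : |ξ - w| ≤ δ := by rw [abs_le]; constructor <;> linarith [hξ.1, hξ.2]
  calc _ ≤ δ * (C * δ) := by gcongr; exact (hL ξ w).trans (by gcongr)
    _ = _ := by ring

variable {J : Type} {E : J → Type} [∀ j, DecidableEq (E j)] [∀ j, Fintype (E j)] [Fintype J]
  {β : J → ℝ} {K p c : ℝ}

open PlacementSystem

/-- The sum of the coordinates, centred at its mean and scaled by `σ`. -/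
def standardSum {I : Type} [Fintype I] [DecidableEq I] (h : (I → Bool) → ℝ) (σ : ℝ)
    (y : I → Bool) : ℝ :=
  (coordSum y - gibbsExp h coordSum) / σ

lemma cubeDiff_comp_standardSum {I : Type} [Fintype I] [DecidableEq I] {h : (I → Bool) → ℝ}
    {σ : ℝ} (f : ℝ → ℝ) {s : I} {y : I → Bool} (hy : coord s y = 1) :
    cubeDiff s (fun y => f (standardSum h σ y)) y
      = f (standardSum h σ y) - f (standardSum h σ y - 1 / σ) := by
  have h1 := cubeDiff_coordSum s y
  have h2 := update_true_of_coord_eq_one hy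
  simp only [cubeDiff, h2] at h1 ⊢
  congr 2
  rw [standardSum, standardSum, ← sub_div]
  congr 1
  linarith

lemma PlacementSystem.abs_gibbsExp_fluctSum_mul_sub_le {I : Type} [Fintype I] [DecidableEq I]
    (S : PlacementSystem E I K) {f f' : ℝ → ℝ} {C σ : ℝ} (hC : 0 ≤ C) (hσ : 0 < σ)
    (hd : ∀ x, HasDerivAt f (f' x) x) (hL : ∀ x y, |f' x - f' y| ≤ C * |x - y|) :
    |gibbsExp (S.ham β) (fun y => S.fluctSum β y * f (standardSum (S.ham β) σ y))
      - 1 / σ * gibbsExp (S.ham β) (fun y => f' (standardSum (S.ham β) σ y) * S.condVariance β y)|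
      ≤ Fintype.card I * (C / σ ^ 2) := by
  rw [S.gibbsExp_fluctSum_mul, ← gibbsExp_const_mul, ← gibbsExp_sub]
  refine (abs_gibbsExp_le _).trans (gibbsExp_le_of_le fun y => ?_)
  rw [condVariance, Finset.mul_sum, Finset.mul_sum, ← Finset.sum_sub_distrib]
  refine (Finset.abs_sum_le_sum_abs _ _).trans ?_
  rw [← nsmul_eq_mul, ← Finset.card_univ]
  refine Finset.sum_le_card_nsmul _ _ _ fun s _ => ?_
  rcases coord_eq_zero_or_one s y with h0 | h1
  · rw [h0]; simp; positivity
  · rw [h1, cubeDiff_comp_standardSum f h1]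
    have h2 := abs_sub_sub_mul_le hC hd hL (standardSum (S.ham β) σ y) (one_div_pos.mpr hσ)
    have h3 : |1 - S.prob β s y| ≤ 1 := by
      rw [abs_le]; constructor <;> linarith [S.prob_nonneg β s y, S.prob_le_one β s y]
    set w := standardSum (S.ham β) σ y
    calc _ = |1 - S.prob β s y| * |f w - f (w - 1 / σ) - 1 / σ * f' w| := by
          rw [← abs_mul]; congr 1; ring
      _ ≤ 1 * (C * (1 / σ) ^ 2) := by gcongr
      _ = _ := by field_simp

/-- Quantitative central limit theorem for the sum of the coordinates of a subcritical placement
system. -/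
theorem exists_abs_gibbsExp_sub_gaussian_le (hs : IsSubcritical E β p c) (hK : 0 ≤ K) :
    ∃ C, 0 ≤ C ∧ ∀ (I : Type) [Fintype I] [DecidableEq I] (S : PlacementSystem E I K),
      S.u ^ 24 ≤ 4 * Fintype.card I → ∀ ψ : ℝ → ℝ, LipschitzWith 1 ψ →
      |gibbsExp (S.ham β) (fun y => ψ (standardSum (S.ham β)
          (√(Fintype.card I * (p * (1 - p)) / (1 - 2 * p * (1 - p) * meanFieldDeriv E β p))) y))
        - ∫ z, ψ z ∂(gaussianReal 0 1)| ≤ C / S.u ^ 3 := by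
  obtain ⟨Cr, hCr, hrem⟩ := exists_gibbsExp_remainder_le hs hK
  obtain ⟨Cv, hCv, hvar⟩ := exists_gibbsExp_condVariance_le hs hK
  obtain ⟨C₁, hC₁, hstein⟩ := exists_stein_solution
  set ρ := 2 * p * (1 - p) * meanFieldDeriv E β p with hρ
  have hρ1 : 0 < 1 - ρ := by linarith [hs.slope]
  set a := p * (1 - p) with ha_def
  have ha : 0 < a := mul_pos hs.mem.1 (by linarith [hs.mem.2])
  set b := √(a / (4 * (1 - ρ))) with hb_def
  have hb : 0 < b := Real.sqrt_pos.mpr (by positivity)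
  refine ⟨(C₁ * Cv / b + (1 - ρ) * C₁ / a + C₁ * Cr) / ((1 - ρ) * b), by positivity,
    fun I _ _ S hcard ψ hψ => ?_⟩
  have hu := S.u_pos
  have hu1 := S.one_le_u
  have hN : (0 : ℝ) < Fintype.card I := by
    have : 0 < S.u ^ 24 := by positivity
    linarith
  set N := (Fintype.card I : ℝ) with hN_def
  set σ := √(N * a / (1 - ρ)) with hσ_def
  have hσ : 0 < σ := Real.sqrt_pos.mpr (by positivity)
  have hσ2 : (1 - ρ) * σ ^ 2 = N * a := by
    rw [hσ_def, Real.sq_sqrt (by positivity)]; field_simp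
  have hbσ : b * S.u ^ 12 ≤ σ := by
    refine Real.le_sqrt_of_sq_le ?_
    rw [mul_pow, hb_def, Real.sq_sqrt (by positivity), div_mul_eq_mul_div,
      div_le_div_iff₀ (by positivity) hρ1]
    nlinarith [mul_pos ha hρ1]
  obtain ⟨f, f', hd, heq, hf, hf', hL⟩ := hstein ψ hψ
  set h := S.ham β with hh
  set W := standardSum h σ with hW
  set R := remainder β p S with hR
  have hWR : ∀ y, (1 - ρ) * σ * W y = S.fluctSum β y + (R y - gibbsExp h R) := by
    intro y
    have h1 : ∀ y, R y = ((1 - ρ) * coordSum y - (1 - ρ) * (N * p)) - S.fluctSum β y := fun y => by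
      rw [hR, remainder, centredSum, fluctSum, ← hρ]; ring
    have h2 : gibbsExp h R = (1 - ρ) * gibbsExp h coordSum - (1 - ρ) * (N * p) := by
      rw [show R = fun y => ((1 - ρ) * coordSum y - (1 - ρ) * (N * p)) - S.fluctSum β y
        from funext h1, gibbsExp_sub, gibbsExp_sub, gibbsExp_const_mul, gibbsExp_const,
        S.gibbsExp_fluctSum]
      ring
    rw [h2, h1, hW, standardSum]
    field_simp
    ring
  have e1 := S.abs_gibbsExp_fluctSum_mul_sub_le (β := β) hC₁ hσ hd hL
  have e2 : |gibbsExp h fun y => (R y - gibbsExp h R) * f (W y)| ≤ C₁ * (Cr * S.u ^ 9) := by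
    refine (abs_gibbsExp_le _).trans (le_trans ?_
      (mul_le_mul_of_nonneg_left (hrem I S) hC₁))
    rw [← gibbsExp_const_mul]
    refine gibbsExp_mono fun y => ?_
    rw [abs_mul, mul_comm]
    exact mul_le_mul_of_nonneg_right (hf _) (abs_nonneg _)
  have e3 : |gibbsExp h fun y => f' (W y) * (S.condVariance β y - N * a)|
      ≤ C₁ * (Cv * S.u ^ 19) := by
    refine (abs_gibbsExp_le _).trans (le_trans ?_
      (mul_le_mul_of_nonneg_left (hvar I S) hC₁))
    rw [← gibbsExp_const_mul]
    refine gibbsExp_mono fun y => ?_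
    rw [abs_mul]
    exact mul_le_mul_of_nonneg_right (hf' _) (abs_nonneg _)
  have key : (1 - ρ) * σ * (gibbsExp h (fun y => ψ (W y)) - ∫ z, ψ z ∂(gaussianReal 0 1))
      = -(1 / σ * gibbsExp h fun y => f' (W y) * (S.condVariance β y - N * a))
        - (gibbsExp h (fun y => S.fluctSum β y * f (W y))
          - 1 / σ * gibbsExp h (fun y => f' (W y) * S.condVariance β y))
        - gibbsExp h fun y => (R y - gibbsExp h R) * f (W y) := by
    have h1 : gibbsExp h (fun y => ψ (W y)) - ∫ z, ψ z ∂(gaussianReal 0 1)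
        = gibbsExp h (fun y => f' (W y)) - gibbsExp h (fun y => W y * f (W y)) := by
      rw [← gibbsExp_const h (∫ z, ψ z ∂(gaussianReal 0 1)), ← gibbsExp_sub, ← gibbsExp_sub]
      congr 1; funext y; rw [heq]; ring
    have h2 : (1 - ρ) * σ * gibbsExp h (fun y => W y * f (W y))
        = gibbsExp h (fun y => S.fluctSum β y * f (W y))
          + gibbsExp h fun y => (R y - gibbsExp h R) * f (W y) := by
      rw [← gibbsExp_const_mul, ← gibbsExp_add]
      congr 1; funext y; rw [← mul_assoc, hWR]; ring
    have h3 : gibbsExp h (fun y => f' (W y) * (S.condVariance β y - N * a))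
        = gibbsExp h (fun y => f' (W y) * S.condVariance β y)
          - N * a * gibbsExp h (fun y => f' (W y)) := by
      rw [← gibbsExp_const_mul, ← gibbsExp_sub]
      congr 1; funext y; ring
    rw [h1, mul_sub, h2, h3, ← hσ2]
    field_simp
    ring
  have hbound : (1 - ρ) * σ
      * |gibbsExp h (fun y => ψ (W y)) - ∫ z, ψ z ∂(gaussianReal 0 1)|
      ≤ (C₁ * Cv / b + (1 - ρ) * C₁ / a + C₁ * Cr) * S.u ^ 9 := by
    rw [← abs_of_pos (mul_pos hρ1 hσ), ← abs_mul, key]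
    have i1 : |-(1 / σ * gibbsExp h fun y => f' (W y) * (S.condVariance β y - N * a))|
        ≤ C₁ * Cv / b * S.u ^ 9 := by
      rw [abs_neg, abs_mul, abs_of_pos (one_div_pos.mpr hσ)]
      calc _ ≤ 1 / (b * S.u ^ 12) * (C₁ * (Cv * S.u ^ 19)) := by gcongr
        _ = C₁ * Cv / b * S.u ^ 7 := by field_simp
        _ ≤ _ := by gcongr; norm_num
    have i2 : N * (C₁ / σ ^ 2) ≤ (1 - ρ) * C₁ / a * S.u ^ 9 := by
      have : N * (C₁ / σ ^ 2) = (1 - ρ) * C₁ / a := by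
        field_simp
        linear_combination -C₁ * hσ2
      rw [this]
      exact le_mul_of_one_le_right (by positivity) (one_le_pow₀ hu1)
    refine (abs_sub _ _).trans ((add_le_add_left (abs_sub _ _) _).trans ?_)
    linarith
  rw [div_div, le_div_iff₀ (by positivity)]
  have hX := abs_nonneg (gibbsExp h (fun y => ψ (W y)) - ∫ z, ψ z ∂(gaussianReal 0 1))
  set X := |gibbsExp h (fun y => ψ (W y)) - ∫ z, ψ z ∂(gaussianReal 0 1)|
  have h1 : (1 - ρ) * (b * S.u ^ 12) * X
      ≤ (C₁ * Cv / b + (1 - ρ) * C₁ / a + C₁ * Cr) * S.u ^ 9 :=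
    le_trans (by gcongr) hbound
  refine le_of_mul_le_mul_right (le_trans (le_of_eq ?_) h1) (by positivity : 0 < S.u ^ 9)
  ring

end ErgmCLT

namespace ErgmCLT

section EdgeIdx

variable {n : ℕ}

lemma edgeIdx_not_isDiag (s : EdgeIdx n) : ¬ (s(s.1.1, s.1.2) : Sym2 (Fin n)).IsDiag := by
  rw [Sym2.mk_isDiag_iff]; exact s.2.ne

/-- Edge indices as the off-diagonal unordered pairs. -/
def edgeEquiv (n : ℕ) : EdgeIdx n ≃ {e : Sym2 (Fin n) // ¬ e.IsDiag} :=
  Equiv.ofBijective (fun s => ⟨s(s.1.1, s.1.2), edgeIdx_not_isDiag s⟩) <| by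
    constructor
    · rintro ⟨⟨a, b⟩, hab⟩ ⟨⟨c, d⟩, hcd⟩ h
      simp only [Subtype.mk.injEq, Sym2.eq_iff] at h
      rcases h with ⟨rfl, rfl⟩ | ⟨rfl, rfl⟩
      · rfl
      · exact absurd hab hcd.not_gt
    · rintro ⟨e, he⟩
      induction e with | _ a b
      rcases lt_or_gt_of_ne (fun h => he (Sym2.mk_isDiag_iff.mpr h)) with h | h
      · exact ⟨⟨(a, b), h⟩, rfl⟩
      · exact ⟨⟨(b, a), h⟩, Subtype.ext Sym2.eq_swap⟩

lemma coe_edgeEquiv (s : EdgeIdx n) : (edgeEquiv n s : Sym2 (Fin n)) = s(s.1.1, s.1.2) := rfl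

lemma card_edgeIdx (n : ℕ) : (Fintype.card (EdgeIdx n) : ℝ) = n * (n - 1) / 2 := by
  rw [Fintype.card_congr (edgeEquiv n), Sym2.card_subtype_not_diag, Fintype.card_fin,
    Nat.cast_choose_two]

lemma yAdj_eq {a b : Fin n} {s : EdgeIdx n} (h : (edgeEquiv n s : Sym2 (Fin n)) = s(a, b))
    (y : EdgeIdx n → Bool) : yAdj y a b = y s := by
  rw [coe_edgeEquiv, Sym2.eq_iff] at h
  rcases h with ⟨rfl, rfl⟩ | ⟨rfl, rfl⟩
  · rw [yAdj, dif_pos s.2]; rfl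
  · rw [yAdj, dif_neg s.2.not_gt, dif_pos s.2]; rfl

lemma exists_perm_map_edge (s t : EdgeIdx n) :
    ∃ τ : Equiv.Perm (Fin n), Sym2.map τ (edgeEquiv n s) = (edgeEquiv n t : Sym2 (Fin n)) := by
  rw [coe_edgeEquiv, coe_edgeEquiv]
  have hab := s.2.ne
  have hcd := t.2.ne
  generalize s.1.1 = a, s.1.2 = b at hab ⊢
  generalize t.1.1 = c, t.1.2 = d at hcd ⊢
  refine ⟨(Equiv.swap a c).trans (Equiv.swap (Equiv.swap a c b) d), ?_⟩
  have h1 : c ≠ Equiv.swap a c b := by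
    intro h
    refine hab ((Equiv.swap a c).injective ?_)
    rw [Equiv.swap_apply_left]; exact h
  simp [Equiv.swap_apply_of_ne_of_ne h1 hcd]

end EdgeIdx

section Placement

variable {V : Type} [Fintype V] [DecidableEq V] (G : SimpleGraph V) {n : ℕ}

/-- The edge of the complete graph onto which `φ` maps the edge `e`. -/
def placeEdge (φ : V ↪ Fin n) (e : G.edgeSet) : EdgeIdx n :=
  (edgeEquiv n).symm ⟨Sym2.map φ e, by
    rw [Sym2.isDiag_map φ.injective]; exact G.not_isDiag_of_mem_edgeSet e.2⟩

variable {G}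

lemma coe_edgeEquiv_placeEdge (φ : V ↪ Fin n) (e : G.edgeSet) :
    (edgeEquiv n (placeEdge G φ e) : Sym2 (Fin n)) = Sym2.map φ e := by
  rw [placeEdge, Equiv.apply_symm_apply]

lemma placeEdge_eq_iff (φ : V ↪ Fin n) (e : G.edgeSet) (s : EdgeIdx n) :
    placeEdge G φ e = s ↔ Sym2.map φ e = (edgeEquiv n s : Sym2 (Fin n)) := by
  rw [placeEdge, Equiv.symm_apply_eq, Subtype.ext_iff]

lemma placeEdge_injective (φ : V ↪ Fin n) : Function.Injective (placeEdge G φ) := by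
  intro e f h
  rw [placeEdge_eq_iff, coe_edgeEquiv_placeEdge] at h
  exact Subtype.ext (Sym2.map.injective φ.injective h)

lemma homCount_eq_sum [Fintype G.edgeSet] (y : EdgeIdx n → Bool) :
    (homCount G y : ℝ) = ∑ φ : V ↪ Fin n, ∏ e : G.edgeSet, coord (placeEdge G φ e) y := by
  classical
  have h1 : ∀ φ : V ↪ Fin n, (∏ e : G.edgeSet, coord (placeEdge G φ e) y)
      = if ∀ a b, G.Adj a b → yAdj y (φ a) (φ b) = true then 1 else 0 := by
    intro φ
    simp only [coord, Finset.prod_boole]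
    congr 1
    simp only [Finset.mem_univ, true_implies, eq_iff_iff]
    have h2 : ∀ a b (h : G.Adj a b), yAdj y (φ a) (φ b) = y (placeEdge G φ ⟨s(a, b), h⟩) :=
      fun a b h => yAdj_eq (by rw [coe_edgeEquiv_placeEdge, Sym2.map_mk]) y
    constructor
    · intro h a b hab
      rw [h2 a b hab]; exact h _
    · rintro h ⟨e, he⟩
      induction e with | _ a b
      rw [← h2 a b he]; exact h a b he
  simp only [h1]
  rw [Finset.sum_boole, homCount, ← Fintype.card_subtype, ← Nat.card_eq_fintype_card]
  congr 1
  exact Nat.card_congr ((Equiv.subtypeSubtypeEquivSubtypeInter _ _).symm.trans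
    ((Equiv.subtypeInjectiveEquivEmbedding V (Fin n)).subtypeEquiv fun φ => Iff.rfl))

lemma sum_placeEdge_eq_mul_card (r : G.edgeSet) (t : EdgeIdx n) :
    (∑ φ : V ↪ Fin n, if placeEdge G φ r = t then (1 : ℝ) else 0) * Fintype.card (EdgeIdx n)
      = n.descFactorial (Fintype.card V) := by
  have h1 : ∀ s, (∑ φ : V ↪ Fin n, if placeEdge G φ r = s then (1 : ℝ) else 0)
      = ∑ φ : V ↪ Fin n, if placeEdge G φ r = t then (1 : ℝ) else 0 := by
    intro s
    obtain ⟨τ, hτ⟩ := exists_perm_map_edge s t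
    refine Fintype.sum_equiv (Equiv.embeddingCongr (Equiv.refl V) τ) _ _ fun φ => ?_
    congr 1
    rw [eq_iff_iff, placeEdge_eq_iff, placeEdge_eq_iff, ← hτ]
    have h2 : Sym2.map (Equiv.embeddingCongr (Equiv.refl V) τ φ) (r : Sym2 V)
        = Sym2.map τ (Sym2.map φ r) := by
      rw [Sym2.map_map]; rfl
    rw [h2]
    exact ((Sym2.map.injective τ.injective).eq_iff).symm
  have h2 : ∑ s : EdgeIdx n, (∑ φ : V ↪ Fin n, if placeEdge G φ r = s then (1 : ℝ) else 0)
      = n.descFactorial (Fintype.card V) := by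
    rw [Finset.sum_comm]
    simp [Fintype.card_embedding_eq]
  rw [← h2]
  simp only [h1, Finset.sum_const, Finset.card_univ, nsmul_eq_mul]
  ring

lemma exists_three_vertices {r e : G.edgeSet} (hre : r ≠ e) :
    ∃ T : Finset V, T.card = 3 ∧ ∀ w ∈ T, w ∈ (r : Sym2 V) ∨ w ∈ (e : Sym2 V) := by
  obtain ⟨r, hr⟩ := r
  obtain ⟨e, he⟩ := e
  induction r with | _ a b
  induction e with | _ c d
  have hab : a ≠ b := G.ne_of_adj hr
  have hcd : c ≠ d := G.ne_of_adj he
  have hne : ¬ (s(a, b) = s(c, d)) := fun h => hre (Subtype.ext h)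
  rw [Sym2.eq_iff] at hne
  by_cases hc : c = a ∨ c = b
  · refine ⟨{a, b, d}, Finset.card_eq_three.mpr ⟨a, b, d, hab, ?_, ?_, rfl⟩, by simp⟩ <;> grind
  · refine ⟨{a, b, c}, Finset.card_eq_three.mpr ⟨a, b, c, hab, ?_, ?_, rfl⟩, by simp⟩ <;> grind

lemma sum_placeEdge_pair_mul_le (r e : G.edgeSet) (t s : EdgeIdx n) (hre : r ≠ e) :
    (∑ φ : V ↪ Fin n, if placeEdge G φ r = t then (if placeEdge G φ e = s then (1 : ℝ) else 0)
      else 0) * n ^ 3 ≤ 8 * n ^ Fintype.card V := by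
  obtain ⟨T, hT, hTre⟩ := exists_three_vertices hre
  let A : V → Finset (Fin n) := fun w =>
    if w ∈ T then (if w ∈ (r : Sym2 V) then {t.1.1, t.1.2} else {s.1.1, s.1.2}) else univ
  have h1 : (∑ φ : V ↪ Fin n, if placeEdge G φ r = t then
      (if placeEdge G φ e = s then (1 : ℝ) else 0) else 0)
      ≤ (Fintype.piFinset A).card := by
    simp only [← ite_and]
    rw [Finset.sum_boole]
    norm_cast
    refine Finset.card_le_card_of_injOn (fun φ => ⇑φ) (fun φ hφ => ?_)
      fun φ _ ψ _ h => DFunLike.coe_injective h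
    simp only [Finset.coe_filter, Finset.mem_univ, true_and, Set.mem_ofPred_eq,
      placeEdge_eq_iff, coe_edgeEquiv] at hφ
    rw [Finset.mem_coe, Fintype.mem_piFinset]
    intro w
    have hr : w ∈ (r : Sym2 V) → φ w = t.1.1 ∨ φ w = t.1.2 := fun hw => by
      rw [← Sym2.mem_iff, ← hφ.1, Sym2.mem_map]; exact ⟨w, hw, rfl⟩
    have he : w ∈ (e : Sym2 V) → φ w = s.1.1 ∨ φ w = s.1.2 := fun hw => by
      rw [← Sym2.mem_iff, ← hφ.2, Sym2.mem_map]; exact ⟨w, hw, rfl⟩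
    by_cases hwT : w ∈ T
    · by_cases hwr : w ∈ (r : Sym2 V)
      · simpa [A, hwT, hwr] using hr hwr
      · simpa [A, hwT, hwr] using he ((hTre w hwT).resolve_left hwr)
    · simp [A, hwT]
  have h2 : (Fintype.piFinset A).card * n ^ 3 ≤ 8 * n ^ Fintype.card V := by
    have h3 : ∏ w ∈ T, (A w).card ≤ 8 := by
      calc _ ≤ 2 ^ T.card := Finset.prod_le_pow_card _ _ _ fun w hw => by
            simp only [A, hw, if_true]
            split_ifs <;> exact Finset.card_le_two
        _ = 8 := by rw [hT]; norm_num
    have h4 : ∏ w ∈ Tᶜ, (A w).card = n ^ Tᶜ.card := by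
      rw [← Finset.prod_const]
      refine Finset.prod_congr rfl fun w hw => ?_
      simp [A, Finset.mem_compl.mp hw]
    have h5 : Tᶜ.card + 3 = Fintype.card V := by
      rw [← hT]; exact Finset.card_compl_add_card T
    rw [Fintype.card_piFinset, ← Finset.prod_mul_prod_compl T, h4, mul_assoc, ← pow_add, h5]
    gcongr
  calc _ ≤ ((Fintype.piFinset A).card : ℝ) * n ^ 3 := by gcongr
    _ ≤ _ := by exact_mod_cast h2

end Placement

lemma pow_mul_sub_le_descFactorial_mul (n v : ℕ) :
    (n : ℝ) ^ v * (n - v ^ 2) ≤ n.descFactorial v * n := by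
  induction v with
  | zero => simp
  | succ v ih =>
    rcases le_or_gt ((n : ℝ)) ((v + 1 : ℕ) ^ 2) with h | h
    · exact (mul_nonpos_of_nonneg_of_nonpos (by positivity) (by linarith)).trans (by positivity)
    · push_cast at h
      have hvn : v ≤ n := by
        have : (v : ℝ) ≤ n := by nlinarith [(Nat.cast_nonneg v : (0 : ℝ) ≤ v)]
        exact_mod_cast this
      have hv0 : (0 : ℝ) ≤ v := Nat.cast_nonneg v
      have hsub : (0 : ℝ) ≤ n - v := sub_nonneg.mpr (by exact_mod_cast hvn)
      rw [Nat.descFactorial_succ]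
      push_cast [hvn]
      calc _ = (n : ℝ) ^ v * (n * (n - (v + 1) ^ 2)) := by ring
        _ ≤ (n : ℝ) ^ v * ((n - v) * (n - v ^ 2)) := by gcongr ?_ * ?_; nlinarith [pow_nonneg hv0 3]
        _ = (n - v) * ((n : ℝ) ^ v * (n - v ^ 2)) := by ring
        _ ≤ (n - v) * (n.descFactorial v * n) := by gcongr
        _ = _ := by ring

lemma abs_two_mul_descFactorial_sub_two_le {n : ℕ} (hn : 2 ≤ n) (v : ℕ) :
    |(n : ℝ) ^ ((2 : ℤ) - v) * (n.descFactorial v / (n * (n - 1) / 2)) - 2|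
      ≤ 4 * (1 + v ^ 2) / n := by
  have hn' : (2 : ℝ) ≤ n := by exact_mod_cast hn
  have hn0 : (0 : ℝ) < n := by linarith
  have hn1 : (0 : ℝ) < n - 1 := by linarith
  set x : ℝ := n.descFactorial v / (n : ℝ) ^ v with hx
  have hx1 : x ≤ 1 := by
    rw [hx, div_le_one (by positivity)]
    exact_mod_cast Nat.descFactorial_le_pow n v
  have hx2 : n - (v : ℝ) ^ 2 ≤ x * n := by
    have := pow_mul_sub_le_descFactorial_mul n v
    rw [hx, div_mul_eq_mul_div, le_div_iff₀ (by positivity)]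
    linarith
  have h1 : (n : ℝ) ^ ((2 : ℤ) - v) * (n.descFactorial v / (n * (n - 1) / 2)) - 2
      = 2 * (1 - n * (1 - x)) / (n - 1) := by
    rw [zpow_sub₀ hn0.ne', hx, zpow_natCast, show (n : ℝ) ^ (2 : ℤ) = n ^ 2 from zpow_ofNat _ 2]
    field_simp
    ring
  have h2 : |1 - n * (1 - x)| ≤ 1 + (v : ℝ) ^ 2 := by
    have : 0 ≤ n * (1 - x) := mul_nonneg hn0.le (by linarith)
    rw [abs_le]; constructor <;> nlinarith [sq_nonneg (v : ℝ)]
  rw [h1, abs_div, abs_mul, abs_of_pos hn1, abs_two, div_le_div_iff₀ hn1 hn0]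
  have h3 : (n : ℝ) ≤ 2 * (n - 1) := by linarith
  calc _ ≤ 2 * (1 + (v : ℝ) ^ 2) * (2 * (n - 1)) := by gcongr
    _ = _ := by ring

end ErgmCLT

namespace ErgmCLT

section MeanField

variable {J : Type} (E : J → Type) [∀ j, DecidableEq (E j)] [∀ j, Fintype (E j)] [Fintype J]
  (β : J → ℝ)

lemma hasDerivAt_meanField (a : ℝ) :
    HasDerivAt (meanField E β) (meanFieldDeriv E β a) a := by
  unfold meanField meanFieldDeriv
  refine HasDerivAt.fun_sum fun j _ => ?_
  exact (hasDerivAt_pow _ a).const_mul _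

lemma hasDerivAt_sigmoid_meanField (a : ℝ) :
    HasDerivAt (fun a => (2 * meanField E β a).sigmoid)
      ((2 * meanField E β a).sigmoid * (1 - (2 * meanField E β a).sigmoid)
        * (2 * meanFieldDeriv E β a)) a :=
  (Real.hasDerivAt_sigmoid _).comp a ((hasDerivAt_meanField E β a).const_mul 2)

variable {E β}

/-- The qualitative conditions defining the subcritical region imply the quantitative ones. -/
lemma exists_isSubcritical {p : ℝ} (hferro : ∀ j, 0 ≤ β j ∨ Fintype.card (E j) = 1)
    (hp : p ∈ Set.Ioo (0 : ℝ) 1) (hfix : (2 * meanField E β p).sigmoid = p)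
    (huniq : ∀ q ∈ Set.Ioo (0 : ℝ) 1, (2 * meanField E β q).sigmoid = q → q = p)
    (hsub : deriv (fun a => (2 * meanField E β a).sigmoid) p < 1) :
    ∃ c, IsSubcritical E β p c := by
  obtain ⟨c, hc, hrepel⟩ := exists_mul_sq_le_of_unique_fixedPoint
    (fun a => (hasDerivAt_sigmoid_meanField E β a).differentiableAt) hp hfix huniq
    (Real.sigmoid_pos _) (Real.sigmoid_lt_one _) hsub
  refine ⟨c, hferro, hp, hfix, hc, hrepel, ?_⟩
  rw [(hasDerivAt_sigmoid_meanField E β p).deriv, hfix] at hsub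
  linarith

end MeanField

section Ergm

variable {k : ℕ} (β : Fin (k + 1) → ℝ) (v : Fin (k + 1) → ℕ)
  (H : ∀ j : Fin (k + 1), SimpleGraph (Fin (v j))) [∀ j, Fintype (H j).edgeSet]

/-- A bound for the spread of the placements of the graphs `H j`. -/
def spreadBound : ℝ := 8 + ∑ j, 4 * (1 + (v j : ℝ) ^ 2)

lemma spreadBound_nonneg : 0 ≤ spreadBound v := by unfold spreadBound; positivity

/-- The placements of the graphs `H j` into the complete graph on `n` vertices. -/
def ergmSystem {n : ℕ} (hn : 2 ≤ n) :
    PlacementSystem (fun j => (H j).edgeSet) (EdgeIdx n) (spreadBound v) where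
  P j := Fin (v j) ↪ Fin n
  fintypeP j := inferInstance
  place j φ e := placeEdge (H j) φ e
  c j := (n : ℝ) ^ ((2 : ℤ) - v j)
  κ j := (n : ℝ) ^ ((2 : ℤ) - v j) * (n.descFactorial (v j) / (n * (n - 1) / 2))
  u := (n : ℝ) ^ (((12 : ℕ) : ℝ)⁻¹)
  one_le_u := Real.one_le_rpow (by exact_mod_cast (by lia : 1 ≤ n)) (by positivity)
  inj j φ := placeEdge_injective φ
  c_nonneg j := by positivity
  deg j r t := by
    have hn' : (2 : ℝ) ≤ n := by exact_mod_cast hn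
    have hN : (0 : ℝ) < n * (n - 1) / 2 :=
      div_pos (mul_pos (by linarith) (by linarith)) two_pos
    have h := sum_placeEdge_eq_mul_card r t
    rw [card_edgeIdx, Fintype.card_fin] at h
    congr 1
    exact (eq_div_iff hN.ne').mpr h
  abs_kappa_sub_two_le j := by
    rw [Real.rpow_inv_natCast_pow (by positivity) (by norm_num)]
    refine (abs_two_mul_descFactorial_sub_two_le hn (v j)).trans ?_
    gcongr
    have := Finset.single_le_sum (f := fun j => 4 * (1 + (v j : ℝ) ^ 2))
      (fun i _ => by positivity) (Finset.mem_univ j)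
    unfold spreadBound
    linarith
  codeg j r e t s hre := by
    have hn0 : (0 : ℝ) < n := by exact_mod_cast (by lia : 0 < n)
    rw [Real.rpow_inv_natCast_pow hn0.le (by norm_num)]
    have h := sum_placeEdge_pair_mul_le r e t s hre
    rw [Fintype.card_fin] at h
    rw [le_div_iff₀ hn0]
    have h2 : (n : ℝ) ^ ((2 : ℤ) - v j) * (n : ℝ) ^ v j = n ^ 2 := by
      rw [zpow_sub₀ hn0.ne', zpow_natCast, div_mul_cancel₀ _ (by positivity)]
      exact zpow_ofNat _ 2
    refine le_trans ?_ (show (8 : ℝ) ≤ spreadBound v by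
      unfold spreadBound
      linarith [Finset.sum_nonneg fun j (_ : j ∈ Finset.univ) =>
        (by positivity : (0 : ℝ) ≤ 4 * (1 + (v j : ℝ) ^ 2))])
    refine le_of_mul_le_mul_right ?_ (by positivity : (0 : ℝ) < n ^ 2)
    have h3 := mul_le_mul_of_nonneg_left h (by positivity : 0 ≤ (n : ℝ) ^ ((2 : ℤ) - v j))
    exact le_trans (le_of_eq (by ring)) (h3.trans (le_of_eq (by rw [← h2]; ring)))
  card_le := by
    have hn0 : (0 : ℝ) ≤ n := Nat.cast_nonneg n
    rw [card_edgeIdx, show 24 = 12 * 2 from rfl, pow_mul,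
      Real.rpow_inv_natCast_pow hn0 (by norm_num)]
    nlinarith

variable {n : ℕ} (hn : 2 ≤ n)

lemma ergmSystem_u_pow : (ergmSystem v H hn).u ^ 12 = n :=
  Real.rpow_inv_natCast_pow (Nat.cast_nonneg n) (by norm_num)

lemma ergmWeight_eq_exp_ham :
    ergmWeight β v H n = fun y => Real.exp ((ergmSystem v H hn).ham β y) := by
  funext y
  rw [ergmWeight, PlacementSystem.ham]
  congr 1
  refine Finset.sum_congr rfl fun j _ => ?_
  rw [homCount_eq_sum, mul_assoc]
  rfl

lemma ergmExp_eq_gibbsExp : ergmExp β v H n = gibbsExp ((ergmSystem v H hn).ham β) := by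
  funext f
  simp only [ergmExp, ergmProb, ergmZ, gibbsExp, ergmWeight_eq_exp_ham β v H hn]
  rw [Finset.sum_div]
  exact Finset.sum_congr rfl fun y _ => by ring

lemma PhiFn_eq_meanField : PhiFn β v H = meanField (fun j => (H j).edgeSet) β := by
  funext a
  simp only [PhiFn, meanField, eCount, Nat.card_eq_fintype_card]

lemma phiFn_eq_sigmoid :
    phiFn β v H = fun a => (2 * meanField (fun j => (H j).edgeSet) β a).sigmoid := by
  funext a
  rw [phiFn, PhiFn_eq_meanField, Real.sigmoid_def, Real.exp_neg]
  have := Real.exp_pos (2 * meanField (fun j => (H j).edgeSet) β a)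
  field_simp

lemma Wn_eq_standardSum (p : ℝ) :
    Wn β v H p n = standardSum ((ergmSystem v H hn).ham β)
      (√(Fintype.card (EdgeIdx n) * (p * (1 - p))
        / (1 - 2 * p * (1 - p) * meanFieldDeriv (fun j => (H j).edgeSet) β p))) := by
  funext y
  rw [Wn, standardSum, muN, ergmExp_eq_gibbsExp β v H hn, sigmaSq, PhiFn_eq_meanField,
    (hasDerivAt_meanField _ β p).deriv, card_edgeIdx, ← mul_assoc]
  rfl

end Ergm

end ErgmCLT

/-- **Theorem 3.2 (Wasserstein bound)**: CLT with rate `n^{-1/4}`, in the Wasserstein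
distance, for the standardized number of edges of an ERGM in the subcritical region. -/
theorem ergm_wasserstein_clt {k : ℕ} (β : Fin (k + 1) → ℝ) (v : Fin (k + 1) → ℕ)
    (H : ∀ j : Fin (k + 1), SimpleGraph (Fin (v j)))
    -- `β₂, …, β_k > 0`
    (hβ : ∀ j : Fin (k + 1), j ≠ 0 → 0 < β j)
    -- `H₁` is a single edge
    (hv0 : v 0 = 2) (he0 : eCount (H 0) = 1)
    -- the graphs have no isolated vertices
    (hnoiso : ∀ (j : Fin (k + 1)) (a : Fin (v j)), ∃ b, (H j).Adj a b)
    -- `H₂, …, H_k` have at least two edges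
    (hedges : ∀ j : Fin (k + 1), j ≠ 0 → 2 ≤ eCount (H j))
    -- the subcritical region: unique fixed point `p ∈ (0,1)` with `φ_β'(p) < 1`
    (p : ℝ) (hp : p ∈ Set.Ioo (0 : ℝ) 1)
    (hfix : phiFn β v H p = p)
    (huniq : ∀ q ∈ Set.Ioo (0 : ℝ) 1, phiFn β v H q = q → q = p)
    (hsub : deriv (phiFn β v H) p < 1) :
    ∃ C : ℝ, 0 < C ∧ ∀ n : ℕ, 2 ≤ n → ∀ ψ : ℝ → ℝ, LipschitzWith 1 ψ →
      |(∑ y : EdgeIdx n → Bool, ergmProb β v H n y * ψ (Wn β v H p n y)) -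
          ∫ z, ψ z ∂(gaussianReal 0 1)| ≤ C * (n : ℝ) ^ (-(1 / 4 : ℝ)) := by
  classical
  let _ (j : Fin (k + 1)) : Fintype (H j).edgeSet := Fintype.ofFinite _
  rw [ErgmCLT.phiFn_eq_sigmoid] at hfix huniq hsub
  have hferro : ∀ j, 0 ≤ β j ∨ Fintype.card (H j).edgeSet = 1 := by
    intro j
    by_cases hj : j = 0
    · subst hj
      exact Or.inr (by rw [← Nat.card_eq_fintype_card]; exact he0)
    · exact Or.inl (hβ j hj).le
  obtain ⟨c, hs⟩ := ErgmCLT.exists_isSubcritical hferro hp hfix huniq hsub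
  obtain ⟨C, hC, hclt⟩ := ErgmCLT.exists_abs_gibbsExp_sub_gaussian_le hs
    (ErgmCLT.spreadBound_nonneg v)
  refine ⟨C + 1, by positivity, fun n hn ψ hψ => ?_⟩
  have hn' : (2 : ℝ) ≤ n := by exact_mod_cast hn
  have h := hclt _ (ErgmCLT.ergmSystem v H hn) (by
    rw [show 24 = 12 * 2 from rfl, pow_mul, ErgmCLT.ergmSystem_u_pow, ErgmCLT.card_edgeIdx]
    nlinarith) ψ hψ
  rw [← ErgmCLT.Wn_eq_standardSum, ← ErgmCLT.ergmExp_eq_gibbsExp] at h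
  have hu : (ErgmCLT.ergmSystem v H hn).u ^ 3 = (n : ℝ) ^ (1 / 4 : ℝ) := by
    change ((n : ℝ) ^ (((12 : ℕ) : ℝ)⁻¹)) ^ 3 = _
    rw [← Real.rpow_mul_natCast (by positivity)]
    norm_num
  rw [hu, div_eq_mul_inv, ← Real.rpow_neg (by positivity)] at h
  refine h.trans ?_
  gcongr
  linarith
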